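/- arXiv:1110.5597 — 2 statements merged into one kernel-verified Lean document; each statement's English description precedes it below -/
import Mathlib

section
/- Let M be a von Neumann algebra acting on a separable complex Hilbert space, equipped with a faithful normal tracial state, and suppose M is hyperfinite, i.e., there exists an increasing sequence of finite-dimensional unital *-subalgebras of M whose union is dense in M in the strong operator topology. Let D be a finite-dimensional abelian unital *-subalgebra of M. Then there exists an increasing sequence A_0 ⊆ A_1 ⊆ A_2 ⊆ … of finite-dimensional unital *-subalgebras of M, each containing D (and one may take A_0 = D), whose union is dense in M in the strong operator topology. -/
open Filter Topology
open scoped InnerProductSpace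

set_option linter.unusedSectionVars false

/-- A finite family of mutually orthogonal self-adjoint projections. -/
structure IsOrthoProj {A ι : Type*} [Mul A] [Star A] [Zero A] (f : ι → A) : Prop where
  proj : ∀ i, IsStarProjection (f i)
  ortho : ∀ i j, i ≠ j → f i * f j = 0

/-- A finite family of mutually orthogonal self-adjoint projections with sum `1`. -/
structure IsPartition {A ι : Type*} [Ring A] [Star A] [Fintype ι] (f : ι → A) : Prop
    extends IsOrthoProj f where
  sum_eq : ∑ i, f i = 1

/-- A partition of unity by projections of the subalgebra `B`, each of which is minimal in `B`. -/
structure IsMinPartition {A ι : Type*} [Ring A] [StarRing A] [Algebra ℂ A] [StarModule ℂ A]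
    [Fintype ι] (B : StarSubalgebra ℂ A) (f : ι → A) : Prop extends IsPartition f where
  mem : ∀ i, f i ∈ B
  corner : ∀ i, ∀ b ∈ B, ∃ c : ℂ, f i * b * f i = c • f i

section Algebraic

variable {A ι : Type*} [Ring A] [StarRing A] [Algebra ℂ A] [StarModule ℂ A]

theorem IsStarProjection.mul_self {p : A} (hp : IsStarProjection p) : p * p = p :=
  hp.isIdempotentElem

theorem IsStarProjection.star_eq {p : A} (hp : IsStarProjection p) : star p = p :=
  hp.isSelfAdjoint

theorem IsOrthoProj.mul_eq [DecidableEq ι] {f : ι → A} (hf : IsOrthoProj f) (i j : ι) :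
    f i * f j = if i = j then f i else 0 := by
  split_ifs with h
  · subst h; exact (hf.proj i).mul_self
  · exact hf.ortho i j h

variable [Fintype ι]

theorem IsOrthoProj.sum_smul_mul {f : ι → A} (hf : IsOrthoProj f) (c : ι → ℂ) (j : ι) :
    (∑ i, c i • f i) * f j = c j • f j := by
  classical
  simp [Finset.sum_mul, hf.mul_eq]

theorem IsOrthoProj.mul_sum_smul {f : ι → A} (hf : IsOrthoProj f) (c : ι → ℂ) (j : ι) :
    f j * (∑ i, c i • f i) = c j • f j := by
  classical
  simp [Finset.mul_sum, hf.mul_eq]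

theorem IsOrthoProj.sum_smul_mul_sum_smul {f : ι → A} (hf : IsOrthoProj f) (c d : ι → ℂ) :
    (∑ i, c i • f i) * (∑ i, d i • f i) = ∑ i, (c i * d i) • f i := by
  rw [Finset.mul_sum]
  refine Finset.sum_congr rfl fun i _ => ?_
  rw [mul_smul_comm, hf.sum_smul_mul, smul_smul, mul_comm]

theorem IsOrthoProj.star_sum_smul {f : ι → A} (hf : IsOrthoProj f) (c : ι → ℂ) :
    star (∑ i, c i • f i) = ∑ i, (star (c i)) • f i := by
  simp [star_sum, (hf.proj _).star_eq]

theorem IsOrthoProj.isStarProjection_sum {f : ι → A} (hf : IsOrthoProj f) (s : Finset ι) :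
    IsStarProjection (∑ i ∈ s, f i) := by
  classical
  constructor
  · simp [IsIdempotentElem, Finset.sum_mul, Finset.mul_sum, hf.mul_eq]
  · simp [isSelfAdjoint_iff, star_sum, (hf.proj _).star_eq]

/-- The elements of the span of the family `f`. -/
def IsDiagonal (f : ι → A) (x : A) : Prop := ∃ c : ι → ℂ, x = ∑ i, c i • f i

theorem IsPartition.isDiagonal {f : ι → A} (hf : IsPartition f) {x : A}
    (h : ∀ i, ∃ c : ℂ, x * f i = c • f i) : IsDiagonal f x := by
  choose c hc using h
  refine ⟨c, ?_⟩
  rw [← mul_one x, ← hf.sum_eq, Finset.mul_sum]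
  exact Finset.sum_congr rfl fun i _ => hc i

theorem IsDiagonal.mul_eq {f : ι → A} (hf : IsOrthoProj f) {x : A} (hx : IsDiagonal f x) (i : ι) :
    ∃ c : ℂ, x * f i = c • f i := by
  obtain ⟨c, rfl⟩ := hx
  exact ⟨c i, hf.sum_smul_mul c i⟩

theorem IsDiagonal.mul {f : ι → A} (hf : IsOrthoProj f) {x y : A} (hx : IsDiagonal f x)
    (hy : IsDiagonal f y) : IsDiagonal f (x * y) := by
  obtain ⟨c, rfl⟩ := hx
  obtain ⟨d, rfl⟩ := hy
  exact ⟨_, hf.sum_smul_mul_sum_smul c d⟩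

theorem IsDiagonal.add {f : ι → A} {x y : A} (hx : IsDiagonal f x)
    (hy : IsDiagonal f y) : IsDiagonal f (x + y) := by
  obtain ⟨c, rfl⟩ := hx
  obtain ⟨d, rfl⟩ := hy
  exact ⟨c + d, by simp [add_smul, Finset.sum_add_distrib]⟩

theorem IsDiagonal.zero (f : ι → A) : IsDiagonal f 0 := ⟨0, by simp⟩

theorem IsDiagonal.sum {f : ι → A} {κ : Type*} {s : Finset κ} {x : κ → A}
    (hx : ∀ k ∈ s, IsDiagonal f (x k)) : IsDiagonal f (∑ k ∈ s, x k) :=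
  Finset.sum_induction _ _ (fun _ _ => IsDiagonal.add) (IsDiagonal.zero f) hx

theorem IsDiagonal.smul {f : ι → A} {x : A} (a : ℂ) (hx : IsDiagonal f x) :
    IsDiagonal f (a • x) := by
  obtain ⟨c, rfl⟩ := hx
  exact ⟨fun i => a * c i, by simp [Finset.smul_sum, mul_smul]⟩

theorem IsDiagonal.apply (f : ι → A) (i : ι) : IsDiagonal f (f i) := by
  classical
  exact ⟨Pi.single i 1, by simp [Pi.single_apply]⟩

theorem IsPartition.isDiagonal_one {f : ι → A} (hf : IsPartition f) : IsDiagonal f 1 :=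
  ⟨1, by simp [hf.sum_eq]⟩

theorem IsDiagonal.commute {f : ι → A} (hf : IsOrthoProj f) {x y : A} (hx : IsDiagonal f x)
    (hy : IsDiagonal f y) : Commute x y := by
  obtain ⟨c, rfl⟩ := hx
  obtain ⟨d, rfl⟩ := hy
  simp [commute_iff_eq, hf.sum_smul_mul_sum_smul, mul_comm]

theorem IsDiagonal.mem {f : ι → A} {B : StarSubalgebra ℂ A} (hf : ∀ i, f i ∈ B) {x : A}
    (hx : IsDiagonal f x) : x ∈ B := by
  obtain ⟨c, rfl⟩ := hx
  exact sum_mem fun i _ => SMulMemClass.smul_mem _ (hf i)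

/-- A projection in the span of `f` either dominates or annihilates each member of `f`. -/
theorem IsDiagonal.mul_eq_self_or_zero {f : ι → A} (hf : IsOrthoProj f) {x : A}
    (hx : IsDiagonal f x) (hp : IsStarProjection x) (i : ι) : x * f i = f i ∨ x * f i = 0 := by
  obtain ⟨c, hc⟩ := hx.mul_eq hf i
  have h : (c * c - c) • f i = 0 := by
    rw [sub_smul, mul_smul, ← hc, ← mul_smul_comm, ← hc, ← mul_assoc, hp.mul_self, sub_self]
  rcases smul_eq_zero.mp h with h | h
  · rcases mul_eq_zero.mp (show c * (c - 1) = 0 by linear_combination h) with h | h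
    · right; rw [hc, h, zero_smul]
    · left; rw [hc, sub_eq_zero.mp h, one_smul]
  · simp [h]

theorem IsMinPartition.isDiagonal_of_commute {B : StarSubalgebra ℂ A} {f : ι → A}
    (hf : IsMinPartition B f) {x : A} (hx : x ∈ B) (h : ∀ i, Commute x (f i)) :
    IsDiagonal f x := by
  refine hf.toIsPartition.isDiagonal fun i => ?_
  obtain ⟨c, hc⟩ := hf.corner i x hx
  exact ⟨c, by rw [← hc, ← (h i).eq, mul_assoc, (hf.proj i).mul_self]⟩

end Algebraic

section Spectral

variable {A : Type*} [CStarAlgebra A]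

theorem finite_spectrum_real_of_mem {B : StarSubalgebra ℂ A} [FiniteDimensional ℂ B] {y : A}
    (hy : y ∈ B) : (spectrum ℝ y).Finite := by
  have halg : IsIntegral ℂ (⟨y, hy⟩ : B) := IsIntegral.of_finite ℂ _
  have h_integral : IsIntegral ℂ y := halg.map B.subtype
  have hfin : (spectrum ℂ y).Finite := by
    rcases subsingleton_or_nontrivial A with h | h
    · simp [spectrum.of_subsingleton]
    refine ((minpoly ℂ y).rootSet_finite ℂ).subset fun z hz => ?_
    rw [Polynomial.mem_rootSet]
    refine ⟨minpoly.ne_zero h_integral, ?_⟩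
    have := spectrum.subset_polynomial_aeval y (minpoly ℂ y) ⟨z, hz, rfl⟩
    simpa [minpoly.aeval] using this
  have : spectrum ℝ y = (algebraMap ℝ ℂ) ⁻¹' (spectrum ℂ y) :=
    (spectrum.preimage_algebraMap ℂ).symm
  rw [this]
  exact hfin.preimage (FaithfulSMul.algebraMap_injective ℝ ℂ).injOn

/-- Spectral decomposition of a self-adjoint element of a finite-dimensional subalgebra. -/
theorem exists_spectral_decomposition {B : StarSubalgebra ℂ A} [FiniteDimensional ℂ B] {y : A}
    (hy : y ∈ B) (hsa : IsSelfAdjoint y) :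
    ∃ (ι : Type) (_ : Fintype ι) (e : ι → A) (l : ι → ℝ), IsPartition e ∧ (∀ i, e i ∈ B) ∧
      y = ∑ i, (l i : ℂ) • e i ∧ ∀ z, Commute y z → ∀ i, Commute (e i) z := by
  classical
  have hfin := finite_spectrum_real_of_mem hy
  have : Finite (spectrum ℝ y) := hfin
  let _ : Fintype (spectrum ℝ y) := Fintype.ofFinite _
  have hcont : ∀ g : ℝ → ℝ, ContinuousOn g (spectrum ℝ y) := fun g => hfin.continuousOn g
  have hclosed : IsClosed (B : Set A) := by
    have : FiniteDimensional ℂ B.toSubalgebra.toSubmodule := ‹FiniteDimensional ℂ B›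
    exact B.toSubalgebra.toSubmodule.closed_of_finiteDimensional
  let χ : spectrum ℝ y → ℝ → ℝ := fun i t => if t = i then 1 else 0
  refine ⟨spectrum ℝ y, inferInstance, fun i => cfc (χ i) y, fun i => i, ⟨⟨?_, ?_⟩, ?_⟩, ?_, ?_, ?_⟩
  · intro i
    refine ⟨?_, cfc_predicate _ _⟩
    rw [IsIdempotentElem, ← cfc_mul _ _ _ (hcont _) (hcont _)]
    congr 1; ext t; simp [χ]
  · intro i j hij
    rw [← cfc_mul _ _ _ (hcont _) (hcont _), ← cfc_const_zero ℝ y]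
    congr 1; ext t
    simp only [χ, mul_ite, mul_one, mul_zero, ite_eq_right_iff]
    intro h h'
    exact absurd (Subtype.ext (h'.symm.trans h)) hij
  · rw [← cfc_sum_univ _ _ (fun i => hcont _), ← cfc_const_one ℝ y]
    refine cfc_congr fun t ht => ?_
    simp only [χ, Finset.sum_apply]
    rw [Finset.sum_eq_single_of_mem ⟨t, ht⟩ (Finset.mem_univ _)]
    · simp
    · rintro ⟨b, hb⟩ - hne
      simp only [ite_eq_right_iff]
      rintro rfl; exact absurd rfl hne
  · intro i
    exact cfc_mem _ hy
  · conv_lhs => rw [← cfc_id ℝ y]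
    have : ∀ i : spectrum ℝ y, (((i : ℝ) : ℂ)) • cfc (χ i) y =
        cfc (fun t => (i : ℝ) * χ i t) y := by
      intro i
      rw [cfc_const_mul _ _ _ (hcont _), Complex.coe_smul]
    simp only [this]
    rw [← cfc_sum_univ _ _ (fun i => hcont _)]
    refine cfc_congr fun t ht => ?_
    simp only [χ, Finset.sum_apply, id]
    rw [Finset.sum_eq_single_of_mem ⟨t, ht⟩ (Finset.mem_univ _)]
    · simp
    · rintro ⟨b, hb⟩ - hne
      simp only [mul_ite, mul_one, mul_zero, ite_eq_right_iff]
      rintro rfl; exact absurd rfl hne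
  · intro z hz i
    exact hsa.commute_cfc hz (χ i)

/-- If a projection of a finite-dimensional subalgebra is not minimal, it dominates a proper
nonzero subprojection. -/
theorem exists_proper_subprojection {B : StarSubalgebra ℂ A} [FiniteDimensional ℂ B] {e : A}
    (he : IsStarProjection e) (heB : e ∈ B) (h : ¬ ∀ b ∈ B, ∃ c : ℂ, e * b * e = c • e) :
    ∃ p ∈ B, IsStarProjection p ∧ p * e = p ∧ e * p = p ∧ p ≠ 0 ∧ p ≠ e := by
  have hsa : ∃ b ∈ B, IsSelfAdjoint b ∧ ¬ ∃ c : ℂ, e * b * e = c • e := by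
    by_contra! hcon
    apply h
    intro b hb
    have hs : star b ∈ B := star_mem hb
    have hadd : b + star b ∈ B := add_mem hb hs
    have hsub : b - star b ∈ B := sub_mem hb hs
    obtain ⟨c, hc⟩ := hcon (realPart b : A) (by
      rw [realPart_apply_coe]
      exact B.toSubalgebra.toSubmodule.smul_of_tower_mem (2⁻¹ : ℝ) hadd) (realPart b).2
    obtain ⟨d, hd⟩ := hcon (imaginaryPart b : A) (by
      rw [imaginaryPart_apply_coe]
      exact B.toSubalgebra.toSubmodule.smul_mem (-Complex.I)
        (B.toSubalgebra.toSubmodule.smul_of_tower_mem (2⁻¹ : ℝ) hsub)) (imaginaryPart b).2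
    refine ⟨c + Complex.I * d, ?_⟩
    conv_lhs => rw [← realPart_add_I_smul_imaginaryPart b]
    rw [mul_add, add_mul, hc, mul_smul_comm, smul_mul_assoc, hd, add_smul, mul_smul]
  obtain ⟨b, hb, hbsa, hbc⟩ := hsa
  have hy : e * b * e ∈ B := mul_mem (mul_mem heB hb) heB
  have hysa : IsSelfAdjoint (e * b * e) := by
    simp [isSelfAdjoint_iff, he.star_eq, hbsa.star_eq, mul_assoc]
  obtain ⟨ι, _, g, l, hg, hgB, hsum, hcomm⟩ := exists_spectral_decomposition hy hysa
  have hge : ∀ i, Commute (g i) e := fun i => hcomm e (by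
    simp only [commute_iff_eq, ← mul_assoc, he.mul_self]
    rw [mul_assoc _ e e, he.mul_self]) i
  by_contra! hcon
  have key : ∀ i, g i * e = 0 ∨ g i * e = e := by
    intro i
    by_contra! hi
    refine hi.2 (hcon (g i * e) (mul_mem (hgB i) heB)
      (IsStarProjection.mul (hg.proj i) he (hge i)) ?_ ?_ hi.1)
    · rw [mul_assoc, he.mul_self]
    · rw [← mul_assoc, ← (hge i).eq, mul_assoc, he.mul_self]
  apply hbc
  have hexp : e * b * e = ∑ i, (l i : ℂ) • (g i * e) := by
    have : e * b * e = e * b * e * e := by rw [mul_assoc _ e e, he.mul_self]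
    rw [this]
    conv_lhs => rw [hsum]
    simp [Finset.sum_mul]
  by_cases hall : ∀ i, g i * e = 0
  · exact ⟨0, by rw [hexp]; simp [hall]⟩
  · push Not at hall
    obtain ⟨i, hi⟩ := hall
    have hi' := (key i).resolve_left hi
    refine ⟨l i, ?_⟩
    rw [hexp, Finset.sum_eq_single_of_mem i (Finset.mem_univ i), hi']
    intro j _ hj
    rw [← hi', ← mul_assoc, hg.ortho j i hj, zero_mul, smul_zero]

theorem exists_minimal_decomposition {B : StarSubalgebra ℂ A} [FiniteDimensional ℂ B] (n : ℕ) :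
    ∀ e ∈ B, IsStarProjection e →
      Module.finrank ℂ (B.toSubalgebra.toSubmodule.map
        (LinearMap.mulLeft ℂ e ∘ₗ LinearMap.mulRight ℂ e)) ≤ n →
    ∃ (ι : Type) (_ : Fintype ι) (f : ι → A), IsOrthoProj f ∧ (∑ i, f i = e) ∧ (∀ i, f i ∈ B) ∧
      ∀ i, ∀ b ∈ B, ∃ c : ℂ, f i * b * f i = c • f i := by
  have hfd : FiniteDimensional ℂ B.toSubalgebra.toSubmodule := ‹FiniteDimensional ℂ B›
  induction n with
  | zero =>
    intro e heB he hrank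
    refine ⟨PEmpty, inferInstance, PEmpty.elim, ⟨by simp, by simp⟩, ?_, by simp, by simp⟩
    have h0 := Submodule.finrank_eq_zero.mp (Nat.le_zero.mp hrank)
    have : e ∈ (⊥ : Submodule ℂ A) := by
      rw [← h0]
      exact ⟨e, heB, by simp [he.mul_self]⟩
    simpa using ((Submodule.mem_bot ℂ).mp this).symm
  | succ n ih =>
    intro e heB he hrank
    by_cases hmin : ∀ b ∈ B, ∃ c : ℂ, e * b * e = c • e
    · exact ⟨Unit, inferInstance, fun _ => e, ⟨fun _ => he, fun i j h => absurd rfl h⟩, by simp,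
        fun _ => heB, fun _ => hmin⟩
    obtain ⟨p, hpB, hp, hpe, hep, hp0, hpne⟩ := exists_proper_subprojection he heB hmin
    have hq : IsStarProjection (e - p) := IsStarProjection.sub_of_mul_eq_left hp he hpe
    have hrk : ∀ q ∈ B, IsStarProjection q → q * e = q → e * q = q → q ≠ e →
        Module.finrank ℂ (B.toSubalgebra.toSubmodule.map
        (LinearMap.mulLeft ℂ q ∘ₗ LinearMap.mulRight ℂ q)) ≤ n := by
      intro q hqB hq hqe heq hne
      refine Nat.le_of_lt_succ (lt_of_lt_of_le (Submodule.finrank_lt_finrank_of_lt ?_) hrank)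
      refine lt_of_le_of_ne ?_ ?_
      · rintro _ ⟨x, hx, rfl⟩
        refine ⟨q * x * q, mul_mem (S := StarSubalgebra ℂ A) (mul_mem hqB hx) hqB, ?_⟩
        simp only [LinearMap.comp_apply, LinearMap.mulLeft_apply, LinearMap.mulRight_apply]
        rw [mul_assoc (q * x), hqe, ← mul_assoc, ← mul_assoc, heq, mul_assoc]
      · intro heq'
        have : e ∈ (B.toSubalgebra.toSubmodule.map
            (LinearMap.mulLeft ℂ q ∘ₗ LinearMap.mulRight ℂ q)) := by
          rw [heq']
          exact ⟨e, heB, by simp [he.mul_self]⟩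
        obtain ⟨x, hx, hxe⟩ := this
        simp only [LinearMap.comp_apply, LinearMap.mulLeft_apply, LinearMap.mulRight_apply] at hxe
        apply hne
        rw [← hqe, ← hxe, ← mul_assoc, hq.mul_self]
    obtain ⟨ι, _, f, hf, hfs, hfB, hfm⟩ := ih p hpB hp (hrk p hpB hp hpe hep hpne)
    obtain ⟨κ, _, g, hg, hgs, hgB, hgm⟩ := ih (e - p) (sub_mem heB hpB) hq
      (hrk _ (sub_mem heB hpB) hq (by rw [sub_mul, he.mul_self, hpe])
        (by rw [mul_sub, he.mul_self, hep]) (by simpa using hp0))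
    have hpq : p * (e - p) = 0 := by rw [mul_sub, hpe, hp.mul_self, sub_self]
    have hqp : (e - p) * p = 0 := by rw [sub_mul, hep, hp.mul_self, sub_self]
    have hfp : ∀ i, f i * p = f i ∧ p * f i = f i := by
      classical
      intro i
      rw [← hfs]
      simp [Finset.mul_sum, Finset.sum_mul, hf.mul_eq]
    have hgp : ∀ i, g i * (e - p) = g i ∧ (e - p) * g i = g i := by
      classical
      intro i
      rw [← hgs]
      simp [Finset.mul_sum, Finset.sum_mul, hg.mul_eq]
    refine ⟨ι ⊕ κ, inferInstance, Sum.elim f g, ⟨?_, ?_⟩, ?_, ?_, ?_⟩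
    · rintro (i | i)
      exacts [hf.proj i, hg.proj i]
    · rintro (i | i) (j | j) hij
      · exact hf.ortho i j (by simpa using hij)
      · simp only [Sum.elim_inl, Sum.elim_inr]
        rw [← (hfp i).1, ← (hgp j).2, mul_assoc, ← mul_assoc p, hpq, zero_mul, mul_zero]
      · simp only [Sum.elim_inl, Sum.elim_inr]
        rw [← (hgp i).1, ← (hfp j).2, mul_assoc, ← mul_assoc (e - p), hqp, zero_mul, mul_zero]
      · exact hg.ortho i j (by simpa using hij)
    · simp [hfs, hgs]
    · rintro (i | i)
      exacts [hfB i, hgB i]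
    · rintro (i | i)
      exacts [hfm i, hgm i]

theorem exists_isMinPartition (B : StarSubalgebra ℂ A) [FiniteDimensional ℂ B] :
    ∃ (ι : Type) (_ : Fintype ι) (f : ι → A), IsMinPartition B f := by
  obtain ⟨ι, _, f, hf, hs, hB, hm⟩ :=
    exists_minimal_decomposition (B := B) _ 1 (one_mem B) (IsStarProjection.one A) le_rfl
  exact ⟨ι, inferInstance, f, { toIsOrthoProj := hf, sum_eq := hs, mem := hB, corner := hm }⟩

end Spectral

section Trace

variable {A : Type*} [CStarAlgebra A]

/-- A faithful positive tracial functional. -/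
structure IsFaithfulTrace (τ : A →ₗ[ℂ] ℂ) : Prop where
  comm : ∀ x y, τ (x * y) = τ (y * x)
  nonneg : ∀ x, 0 ≤ (τ (star x * x)).re
  im_eq : ∀ x, (τ (star x * x)).im = 0
  faithful : ∀ x, τ (star x * x) = 0 → x = 0

/-- The Hilbert–Schmidt type norm attached to a trace. -/
noncomputable def traceNorm (τ : A →ₗ[ℂ] ℂ) (x : A) : ℝ := √(τ (star x * x)).re

namespace IsFaithfulTrace

variable {τ : A →ₗ[ℂ] ℂ} (hτ : IsFaithfulTrace τ)
include hτ

theorem star_apply (x : A) : τ (star x) = star (τ x) := by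
  have h1 := hτ.im_eq (x + 1)
  have h2 := hτ.im_eq (x + Complex.I • 1)
  have h3 := hτ.im_eq x
  have h4 := hτ.im_eq 1
  simp only [star_add, star_one, star_smul, mul_add, add_mul, mul_one, one_mul, map_add,
    smul_mul_assoc, mul_smul_comm, map_smul, Complex.add_im, smul_eq_mul, Complex.mul_im,
    RCLike.star_def, Complex.conj_I, Complex.neg_im, Complex.neg_re, Complex.I_im,
    Complex.I_re, Complex.mul_re] at h1 h2 h3 h4
  apply Complex.ext
  · simp only [RCLike.star_def, Complex.conj_re]; linarith
  · simp only [RCLike.star_def, Complex.conj_im]; linarith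

theorem traceNorm_sq (x : A) : traceNorm τ x ^ 2 = (τ (star x * x)).re :=
  Real.sq_sqrt (hτ.nonneg x)

theorem apply_star_mul_self (x : A) : τ (star x * x) = ((traceNorm τ x ^ 2 : ℝ) : ℂ) := by
  rw [hτ.traceNorm_sq]
  exact Complex.ext (by simp) (by simp [hτ.im_eq x])

theorem eq_zero_of_traceNorm_eq_zero {x : A} (h : traceNorm τ x = 0) : x = 0 :=
  hτ.faithful x (by rw [hτ.apply_star_mul_self, h]; simp)

theorem traceNorm_add_le (x y : A) : traceNorm τ (x + y) ≤ traceNorm τ x + traceNorm τ y := by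
  let c : PreInnerProductSpace.Core ℂ A :=
    { inner := fun x y => τ (star x * y)
      conj_inner_symm := fun x y => by
        change (starRingEnd ℂ) (τ (star y * x)) = τ (star x * y)
        rw [← RCLike.star_def, ← hτ.star_apply]; simp
      re_inner_nonneg := fun x => hτ.nonneg x
      add_left := fun x y z => by simp [add_mul]
      smul_left := fun x y r => by simp }
  let _ := @InnerProductSpace.Core.toSeminormedAddCommGroup ℂ A _ _ _ c
  exact norm_add_le x y

omit hτ in
theorem _root_.traceNorm_nonneg (x : A) : 0 ≤ traceNorm τ x := Real.sqrt_nonneg _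

omit hτ in
@[simp] theorem _root_.traceNorm_zero : traceNorm τ 0 = 0 := by simp [traceNorm]

omit hτ in
@[simp] theorem _root_.traceNorm_neg (x : A) : traceNorm τ (-x) = traceNorm τ x := by
  simp [traceNorm]

omit hτ in
theorem _root_.traceNorm_sub_comm (x y : A) : traceNorm τ (x - y) = traceNorm τ (y - x) := by
  rw [← neg_sub, traceNorm_neg]

theorem traceNorm_sub_le (x y : A) : traceNorm τ (x - y) ≤ traceNorm τ x + traceNorm τ y := by
  simpa [sub_eq_add_neg] using hτ.traceNorm_add_le x (-y)

theorem traceNorm_sub_le_sub_add_sub (x y z : A) :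
    traceNorm τ (x - z) ≤ traceNorm τ (x - y) + traceNorm τ (y - z) := by
  simpa using hτ.traceNorm_add_le (x - y) (y - z)

theorem traceNorm_sum_le {κ : Type*} (s : Finset κ) (x : κ → A) :
    traceNorm τ (∑ k ∈ s, x k) ≤ ∑ k ∈ s, traceNorm τ (x k) :=
  Finset.le_sum_of_subadditive _ traceNorm_zero.le hτ.traceNorm_add_le s x

theorem traceNorm_star (x : A) : traceNorm τ (star x) = traceNorm τ x := by
  rw [traceNorm, traceNorm, star_star, hτ.comm]

theorem traceNorm_mul_le (a x : A) : traceNorm τ (a * x) ≤ ‖a‖ * traceNorm τ x := by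
  let _ := CStarAlgebra.spectralOrder A
  have := CStarAlgebra.spectralOrderedRing A
  have h : 0 ≤ algebraMap ℝ A (‖a‖ ^ 2) - star a * a :=
    sub_nonneg.mpr CStarAlgebra.star_mul_le_algebraMap_norm_sq
  obtain ⟨c, hc⟩ := CStarAlgebra.nonneg_iff_eq_star_mul_self.mp h
  have h2 := hτ.nonneg (c * x)
  have h3 : star (c * x) * (c * x) =
      ((‖a‖ ^ 2 : ℝ) : ℂ) • (star x * x) - star (a * x) * (a * x) := by
    rw [star_mul, mul_assoc, ← mul_assoc (star c), ← hc, sub_mul, mul_sub, ← Algebra.smul_def,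
      mul_smul_comm, Complex.coe_smul, star_mul]
    simp only [mul_assoc]
  rw [h3, map_sub, map_smul, Complex.sub_re, smul_eq_mul, Complex.re_ofReal_mul,
    ← hτ.traceNorm_sq, ← hτ.traceNorm_sq] at h2
  refine abs_le_of_sq_le_sq' ?_ (mul_nonneg (norm_nonneg _) (traceNorm_nonneg _)) |>.2
  rw [mul_pow]; linarith

theorem traceNorm_mul_le' (x a : A) : traceNorm τ (x * a) ≤ traceNorm τ x * ‖a‖ := by
  rw [← hτ.traceNorm_star, star_mul, ← hτ.traceNorm_star x, ← norm_star a, mul_comm (traceNorm τ _)]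
  exact hτ.traceNorm_mul_le _ _

theorem traceNorm_mul_le_of_norm_le_one {a : A} (ha : ‖a‖ ≤ 1) (x : A) :
    traceNorm τ (a * x) ≤ traceNorm τ x :=
  (hτ.traceNorm_mul_le a x).trans (mul_le_of_le_one_left (traceNorm_nonneg _) ha)

theorem traceNorm_mul_le_of_norm_le_one' {a : A} (ha : ‖a‖ ≤ 1) (x : A) :
    traceNorm τ (x * a) ≤ traceNorm τ x :=
  (hτ.traceNorm_mul_le' x a).trans (mul_le_of_le_one_right (traceNorm_nonneg _) ha)

omit hτ in
theorem _root_.norm_le_one_of_isStarProjection_star_mul_self {v : A}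
    (h : IsStarProjection (star v * v)) : ‖v‖ ≤ 1 := by
  have h1 := IsStarProjection.norm_le (star v * v) h
  rw [CStarRing.norm_star_mul_self] at h1
  nlinarith [norm_nonneg v]

omit hτ in
theorem _root_.norm_le_one_of_star_mul_self_eq_one {v : A}
    (h : star v * v = 1) : ‖v‖ ≤ 1 :=
  norm_le_one_of_isStarProjection_star_mul_self (by rw [h]; exact IsStarProjection.one A)

/-- Left multiplication by an isometry preserves the trace norm. -/
theorem traceNorm_isometry_mul {v : A} (h : star v * v = 1) (x : A) :
    traceNorm τ (v * x) = traceNorm τ x := by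
  rw [traceNorm, traceNorm, star_mul, mul_assoc, ← mul_assoc (star v), h, one_mul]

/-- In a finite algebra isometries are unitary. -/
theorem mul_star_eq_one {v : A} (h : star v * v = 1) : v * star v = 1 := by
  have hsa : star (1 - v * star v) = 1 - v * star v := by simp
  have hid : (1 - v * star v) * (1 - v * star v) = 1 - v * star v := by
    rw [mul_sub, sub_mul, mul_one, sub_mul, one_mul]
    have : v * star v * (v * star v) = v * star v := by
      rw [mul_assoc, ← mul_assoc (star v), h, one_mul]
    rw [this, sub_self, sub_zero, mul_one]
  have : 1 - v * star v = 0 := hτ.faithful _ (by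
    rw [hsa, hid, map_sub, hτ.comm v, h, sub_self])
  exact (sub_eq_zero.mp this).symm

/-- The trace of a projection is the square of its norm. -/
theorem apply_projection {p : A} (hp : IsStarProjection p) :
    τ p = ((traceNorm τ p ^ 2 : ℝ) : ℂ) := by
  rw [← hτ.apply_star_mul_self, hp.star_eq, hp.mul_self]

end IsFaithfulTrace

end Trace

section MatrixUnits

variable {A ι : Type*} [CStarAlgebra A] [Fintype ι] {τ : A →ₗ[ℂ] ℂ} {B : StarSubalgebra ℂ A}
  {f : ι → A}

/-- A nonzero element with minimal right support is a multiple of a partial isometry. -/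
theorem IsMinPartition.exists_normalization (hf : IsMinPartition B f) (hτ : IsFaithfulTrace τ)
    {y : A} (hy : y ∈ B) {i : ι} (hyi : y * f i = y) (hy0 : y ≠ 0) :
    ∃ c : ℂ, c ≠ 0 ∧ star (c • y) * (c • y) = f i := by
  obtain ⟨l, hl⟩ := hf.corner i (star y * y) (mul_mem (star_mem hy) hy)
  have hl' : star y * y = l • f i := by
    rw [← hl]
    conv_lhs => rw [← hyi]
    rw [star_mul, (hf.proj i).star_eq]
    simp only [mul_assoc]
  have htr : ((traceNorm τ y ^ 2 : ℝ) : ℂ) = l * ((traceNorm τ (f i) ^ 2 : ℝ) : ℂ) := by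
    rw [← hτ.apply_star_mul_self, hl', map_smul, hτ.apply_projection (hf.proj i), smul_eq_mul]
  have hy1 : traceNorm τ y ≠ 0 := fun h => hy0 (hτ.eq_zero_of_traceNorm_eq_zero h)
  have hf1 : traceNorm τ (f i) ≠ 0 := fun h => hy1 (by simpa [h] using htr)
  refine ⟨((traceNorm τ (f i) / traceNorm τ y : ℝ) : ℂ), ?_, ?_⟩
  · exact_mod_cast div_ne_zero hf1 hy1
  · rw [star_smul, smul_mul_smul_comm, hl', smul_smul]
    convert one_smul ℂ (f i)
    have h1 : (traceNorm τ y : ℂ) ≠ 0 := by exact_mod_cast hy1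
    push_cast at htr ⊢
    simp only [RCLike.star_def, map_div₀, Complex.conj_ofReal]
    field_simp
    linear_combination -htr

/-- A column of matrix units for `B` relative to the minimal partition `f`. -/
structure IsColumn (B : StarSubalgebra ℂ A) (f : ι → A) (i : ι) (v : ι → A) : Prop where
  mem : ∀ g, v g ∈ B
  left : ∀ g, f g * v g = v g
  right : ∀ g, v g * f i = v g
  isometry : ∀ g, star (v g) * v g = f i ∨ v g = 0
  complete : ∀ g, ∀ y ∈ B, v g * star (v g) * y * f i = f g * y * f i

theorem IsMinPartition.exists_isColumn (hf : IsMinPartition B f) (hτ : IsFaithfulTrace τ) (i : ι) :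
    ∃ v : ι → A, IsColumn B f i v := by
  have key : ∀ g, ∃ v ∈ B, f g * v = v ∧ v * f i = v ∧ (star v * v = f i ∨ v = 0) ∧
      ∀ y ∈ B, v * star v * y * f i = f g * y * f i := by
    intro g
    by_cases h : ∀ y ∈ B, f g * y * f i = 0
    · exact ⟨0, zero_mem B, by simp, by simp, Or.inr rfl, fun y hy => by simp [h y hy]⟩
    push Not at h
    obtain ⟨y, hy, hy0⟩ := h
    have hyB : f g * y * f i ∈ B := mul_mem (mul_mem (hf.mem g) hy) (hf.mem i)
    have hyi : f g * y * f i * f i = f g * y * f i := by rw [mul_assoc, (hf.proj i).mul_self]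
    obtain ⟨c, hc, hv⟩ := hf.exists_normalization hτ hyB hyi hy0
    set v := c • (f g * y * f i) with hvdef
    have hvB : v ∈ B := SMulMemClass.smul_mem c hyB
    have hvl : f g * v = v := by
      simp only [hvdef, mul_smul_comm, ← mul_assoc, (hf.proj g).mul_self]
    have hvr : v * f i = v := by rw [hvdef, smul_mul_assoc, hyi]
    have hv0 : v ≠ 0 := smul_ne_zero hc hy0
    have hvs : star v * f g = star v := by
      conv_rhs => rw [← hvl, star_mul, (hf.proj g).star_eq]
    obtain ⟨m, hm⟩ := hf.corner g (v * star v) (mul_mem hvB (star_mem hvB))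
    rw [← mul_assoc, hvl, mul_assoc, hvs] at hm
    have hm1 : m = 1 := by
      have h1 : v * star v * v = v := by rw [mul_assoc, hv, hvr]
      rw [hm, smul_mul_assoc, hvl] at h1
      have : (m - 1) • v = 0 := by rw [sub_smul, h1, one_smul, sub_self]
      exact sub_eq_zero.mp ((smul_eq_zero.mp this).resolve_right hv0)
    rw [hm1, one_smul] at hm
    exact ⟨v, hvB, hvl, hvr, Or.inl hv, fun y _ => by rw [hm]⟩
  choose v h1 h2 h3 h4 h5 using key
  exact ⟨v, h1, h2, h3, h4, h5⟩

/-- The map `x ↦ ∑ v g * x * (v g)⋆`. -/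
def columnMap (v : ι → A) (x : A) : A := ∑ g, v g * x * star (v g)

theorem star_columnMap (v : ι → A) (x : A) : star (columnMap v x) = columnMap v (star x) := by
  simp [columnMap, star_sum, mul_assoc]

theorem columnMap_sub (v : ι → A) (x y : A) :
    columnMap v (x - y) = columnMap v x - columnMap v y := by
  simp [columnMap, mul_sub, sub_mul]

theorem columnMap_mem {v : ι → A} (hv : ∀ g, v g ∈ B) {x : A} (hx : x ∈ B) :
    columnMap v x ∈ B :=
  sum_mem fun g _ => mul_mem (mul_mem (hv g) hx) (star_mem (hv g))

theorem columnMap_commute {v : ι → A} (hv : ∀ g, v g ∈ B) {x z : A} (hz : ∀ b ∈ B, Commute z b)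
    (hx : Commute z x) : Commute z (columnMap v x) :=
  Commute.sum_right _ _ _ fun g _ =>
    ((hz _ (hv g)).mul_right hx).mul_right (hz _ (star_mem (hv g)))

namespace IsColumn

variable {i : ι} {v : ι → A} (hv : IsColumn B f i v) (hf : IsMinPartition B f)
include hv

theorem norm_le_one (hf : IsMinPartition B f) (g : ι) : ‖v g‖ ≤ 1 := by
  rcases hv.isometry g with h | h
  · exact norm_le_one_of_isStarProjection_star_mul_self (h ▸ hf.proj i)
  · simp [h]

include hf

theorem star_left (g : ι) : star (v g) * f g = star (v g) := by
  conv_rhs => rw [← hv.left g, star_mul, (hf.proj g).star_eq]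

theorem star_right (g : ι) : f i * star (v g) = star (v g) := by
  conv_rhs => rw [← hv.right g, star_mul, (hf.proj i).star_eq]

theorem mul_eq_sum {b : A} (hb : b ∈ B) (k : ι) :
    b * v k = ∑ g, v g * (star (v g) * b * v k) := by
  have : ∀ g, v g * (star (v g) * b * v k) = f g * (b * v k) := by
    intro g
    have := hv.complete g (b * v k) (mul_mem hb (hv.mem k))
    rw [mul_assoc, mul_assoc b, hv.right, mul_assoc (f g), mul_assoc b, hv.right] at this
    rw [← this]; simp only [mul_assoc]
  simp_rw [this]
  rw [← Finset.sum_mul, hf.sum_eq, one_mul]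

theorem mul_eq_sum' {b : A} (hb : b ∈ B) (g : ι) :
    star (v g) * b = ∑ k, star (v g) * b * v k * star (v k) := by
  have := congrArg star (hv.mul_eq_sum hf (star_mem hb) g)
  simpa [star_sum, mul_assoc] using this

theorem corner_commute {x b : A} (hx : Commute x (f i)) (hb : b ∈ B) (g k : ι) :
    Commute (star (v g) * b * v k) x := by
  obtain ⟨c, hc⟩ := hf.corner i (star (v g) * b * v k)
    (mul_mem (mul_mem (star_mem (hv.mem g)) hb) (hv.mem k))
  have : star (v g) * b * v k = c • f i := by
    rw [← hc, ← mul_assoc, ← mul_assoc, hv.star_right hf, mul_assoc _ (v k), hv.right]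
  rw [this]
  exact (hx.symm).smul_left c

theorem columnMap_commute_mem {x b : A} (hx : Commute x (f i)) (hb : b ∈ B) :
    Commute b (columnMap v x) := by
  have h1 : b * columnMap v x = ∑ k, ∑ g, v g * (star (v g) * b * v k) * x * star (v k) := by
    rw [columnMap, Finset.mul_sum]
    refine Finset.sum_congr rfl fun k _ => ?_
    rw [← mul_assoc, ← mul_assoc, hv.mul_eq_sum hf hb k, Finset.sum_mul, Finset.sum_mul]
  have h2 : columnMap v x * b = ∑ g, ∑ k, v g * x * (star (v g) * b * v k) * star (v k) := by
    rw [columnMap, Finset.sum_mul]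
    refine Finset.sum_congr rfl fun g _ => ?_
    conv_lhs => rw [mul_assoc, hv.mul_eq_sum' hf hb g, Finset.mul_sum]
    simp only [mul_assoc]
  rw [commute_iff_eq, h1, h2, Finset.sum_comm]
  refine Finset.sum_congr rfl fun g _ => Finset.sum_congr rfl fun k _ => ?_
  rw [mul_assoc (v g) _ x, (hv.corner_commute hf hx hb g k).eq, ← mul_assoc (v g) x]

theorem mul_columnMap {x : A} (hx : Commute x (f i)) : f i * columnMap v x = f i * x := by
  classical
  have h1 : f i * columnMap v x = v i * x * star (v i) := by
    rw [columnMap, Finset.mul_sum, Finset.sum_eq_single_of_mem i (Finset.mem_univ i)]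
    · rw [← mul_assoc, ← mul_assoc, hv.left]
    · intro g _ hg
      rw [← hv.left g]
      simp only [← mul_assoc]
      rw [hf.ortho i g hg.symm]
      simp
  obtain ⟨c, hc⟩ := hf.corner i (v i) (hv.mem i)
  rw [hv.left, hv.right] at hc
  have h2 : v i * x = x * v i := by rw [hc, smul_mul_assoc, mul_smul_comm, hx.eq]
  have h3 := hv.complete i 1 (one_mem B)
  rw [mul_one, mul_one, (hf.proj i).mul_self, mul_assoc, hv.star_left hf] at h3
  rw [h1, h2, mul_assoc, h3, hx.eq]

theorem columnMap_mul {x : A} (hx : Commute x (f i)) (y : A) :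
    columnMap v x * columnMap v y = columnMap v (x * y) := by
  rw [columnMap, columnMap, columnMap, Finset.sum_mul]
  refine Finset.sum_congr rfl fun g _ => ?_
  rw [Finset.mul_sum, Finset.sum_eq_single_of_mem g (Finset.mem_univ g)]
  · rcases hv.isometry g with h | h
    · calc v g * x * star (v g) * (v g * y * star (v g))
          = v g * (x * (star (v g) * v g)) * y * star (v g) := by simp only [mul_assoc]
        _ = v g * (x * y) * star (v g) := by
            rw [h, hx.eq, ← mul_assoc, hv.right]; simp only [mul_assoc]
    · simp [h]
  · intro k _ hk
    calc v g * x * star (v g) * (v k * y * star (v k))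
        = v g * x * (star (v g) * f g) * (f k * v k * y * star (v k)) := by
          rw [hv.star_left hf, hv.left]
      _ = v g * x * star (v g) * (f g * f k) * (v k * y * star (v k)) := by simp only [mul_assoc]
      _ = 0 := by rw [hf.ortho g k hk.symm]; simp

theorem isStarProjection_columnMap {p : A} (hp : IsStarProjection p) (hc : Commute p (f i)) :
    IsStarProjection (columnMap v p) :=
  ⟨by rw [IsIdempotentElem, hv.columnMap_mul hf hc, hp.mul_self],
    by rw [isSelfAdjoint_iff, star_columnMap, hp.star_eq]⟩

theorem traceNorm_columnMap_le (hτ : IsFaithfulTrace τ) (x : A) :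
    traceNorm τ (columnMap v x) ≤ Fintype.card ι * traceNorm τ x := by
  refine (hτ.traceNorm_sum_le _ _).trans ?_
  rw [← nsmul_eq_mul]
  refine Finset.sum_le_card_nsmul _ _ _ fun g _ => ?_
  refine (hτ.traceNorm_mul_le_of_norm_le_one' ?_ _).trans
    (hτ.traceNorm_mul_le_of_norm_le_one (hv.norm_le_one hf g) x)
  rw [norm_star]; exact hv.norm_le_one hf g

end IsColumn

end MatrixUnits

section Refinement

variable {A ι κ : Type*} [CStarAlgebra A] [Fintype ι] [Fintype κ] {τ : A →ₗ[ℂ] ℂ}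
  {B B' : StarSubalgebra ℂ A} {f : ι → A} {f' : κ → A}

/-- The partition `f'` refines `f` by means of diagonal elements commuting with `B`. -/
structure IsRefinement (B : StarSubalgebra ℂ A) (f : ι → A) (f' : κ → A) : Prop where
  factor : ∀ k, ∃ i q, f' k = f i * q ∧ (∀ b ∈ B, Commute q b) ∧ IsDiagonal f' q
  diag : ∀ i, IsDiagonal f' (f i)

theorem IsRefinement.isDiagonal (h : IsRefinement B f f') {x : A} (hx : IsDiagonal f x) :
    IsDiagonal f' x := by
  obtain ⟨c, rfl⟩ := hx
  exact IsDiagonal.sum fun i _ => (h.diag i).smul _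

theorem IsRefinement.refl (hf : IsPartition f) : IsRefinement B f f :=
  ⟨fun k => ⟨k, 1, by simp, fun b _ => Commute.one_left b, hf.isDiagonal_one⟩, IsDiagonal.apply f⟩

theorem IsRefinement.trans {μ : Type*} [Fintype μ] {f'' : μ → A} (hf'' : IsOrthoProj f'')
    (hB : B ≤ B') (h : IsRefinement B f f') (h' : IsRefinement B' f' f'') :
    IsRefinement B f f'' := by
  refine ⟨fun m => ?_, fun i => h'.isDiagonal (h.diag i)⟩
  obtain ⟨k, q', hq', hcomm', hdiag'⟩ := h'.factor m
  obtain ⟨i, q, hq, hcomm, hdiag⟩ := h.factor k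
  exact ⟨i, q * q', by rw [hq', hq, mul_assoc],
    fun b hb => (hcomm b hb).mul_left (hcomm' b (hB hb)), (h'.isDiagonal hdiag).mul hf'' hdiag'⟩

theorem IsRefinement.isDiagonal_columnMap (h : IsRefinement B f f') (hf : IsMinPartition B f)
    (hf' : IsMinPartition B' f') (hB : B ≤ B') {i : ι} {v : ι → A} (hv : IsColumn B f i v) {c : A}
    (hc : IsDiagonal f' c) : IsDiagonal f' (columnMap v c) := by
  refine hf'.isDiagonal_of_commute
    (columnMap_mem (fun g => hB (hv.mem g)) (hc.mem hf'.mem)) fun k => ?_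
  obtain ⟨j, q, hq, hcomm, hdiag⟩ := h.factor k
  rw [hq]
  refine Commute.mul_right ?_ ?_
  · exact (hv.columnMap_commute_mem hf (hc.commute hf'.toIsOrthoProj (h.diag i)) (hf.mem j)).symm
  · exact (columnMap_commute hv.mem hcomm (hdiag.commute hf'.toIsOrthoProj hc)).symm

theorem IsMinPartition.exists_isRefinement (hτ : IsFaithfulTrace τ) {ι : Type} [Fintype ι]
    {f : ι → A} (hf : IsMinPartition B f) (hB : B ≤ B') [FiniteDimensional ℂ B'] :
    ∃ (κ : Type) (_ : Fintype κ) (f' : κ → A), IsMinPartition B' f' ∧ IsRefinement B f f' := by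
  let R : StarSubalgebra ℂ A := B' ⊓ StarSubalgebra.centralizer ℂ (B : Set A)
  have hRmem : ∀ x, x ∈ B' → (∀ b ∈ B, Commute b x) → x ∈ R := fun x hx hc =>
    ⟨hx, StarSubalgebra.mem_centralizer_iff ℂ |>.mpr fun b hb =>
      ⟨hc b hb, hc (star b) (star_mem hb)⟩⟩
  have hRcomm : ∀ x ∈ R, ∀ b ∈ B, Commute x b := fun x hx b hb =>
    ((StarSubalgebra.mem_centralizer_iff ℂ |>.mp hx.2) b hb).1.symm
  have hRB : ∀ x ∈ R, x ∈ B' := fun x hx => hx.1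
  have : FiniteDimensional ℂ R := by
    have h1 : FiniteDimensional ℂ B'.toSubalgebra.toSubmodule := ‹FiniteDimensional ℂ B'›
    exact Submodule.finiteDimensional_of_le
      (S₁ := R.toSubalgebra.toSubmodule) (S₂ := B'.toSubalgebra.toSubmodule) (fun x hx => hRB x hx)
  obtain ⟨l, _, q, hq⟩ := exists_isMinPartition R
  have hqf : ∀ m i, Commute (q m) (f i) := fun m i => hRcomm _ (hq.mem m) _ (hf.mem i)
  have hsum1 : ∀ i, f i = ∑ m, f i * q m := fun i => by
    rw [← Finset.mul_sum, hq.sum_eq, mul_one]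
  have hsum2 : ∀ m, q m = ∑ i, f i * q m := fun m => by
    rw [← Finset.sum_mul, hf.sum_eq, one_mul]
  let f' : ι × l → A := fun k => f k.1 * q k.2
  have hfd : ∀ i, IsDiagonal f' (f i) := fun i => by
    rw [hsum1 i]; exact IsDiagonal.sum fun m _ => IsDiagonal.apply f' (i, m)
  have hqd : ∀ m, IsDiagonal f' (q m) := fun m => by
    rw [hsum2 m]; exact IsDiagonal.sum fun i _ => IsDiagonal.apply f' (i, m)
  refine ⟨ι × l, inferInstance, f', ⟨⟨⟨?_, ?_⟩, ?_⟩, ?_, ?_⟩, ⟨?_, hfd⟩⟩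
  · intro k
    exact IsStarProjection.mul (hf.proj _) (hq.proj _) (hqf _ _).symm
  · rintro ⟨i, m⟩ ⟨j, n⟩ hne
    have : f' (i, m) * f' (j, n) = (f i * f j) * (q m * q n) := by
      simp only [f']
      rw [mul_assoc, ← mul_assoc (q m), (hqf m j).eq]; simp only [mul_assoc]
    rw [this]
    by_cases hij : i = j
    · rw [hq.ortho m n (by rintro rfl; exact hne (by rw [hij])), mul_zero]
    · rw [hf.ortho i j hij, zero_mul]
  · rw [Fintype.sum_prod_type]
    simp only [f', ← Finset.mul_sum, hq.sum_eq, mul_one, hf.sum_eq]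
  · exact fun k => mul_mem (hB (hf.mem _)) (hRB _ (hq.mem _))
  · rintro ⟨i, m⟩ b hb
    obtain ⟨v, hv⟩ := hf.exists_isColumn hτ i
    have hxc : Commute (f i * b * f i) (f i) := by
      rw [commute_iff_eq, mul_assoc, (hf.proj i).mul_self, ← mul_assoc, ← mul_assoc,
        (hf.proj i).mul_self]
    have hR := hRmem (columnMap v (f i * b * f i))
      (columnMap_mem (fun g => hB (hv.mem g))
        (mul_mem (mul_mem (hB (hf.mem i)) hb) (hB (hf.mem i))))
      (fun b hb => hv.columnMap_commute_mem hf hxc hb)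
    obtain ⟨c, hc⟩ := hq.corner m _ hR
    refine ⟨c, ?_⟩
    have h1 := hv.mul_columnMap hf hxc
    rw [← mul_assoc, ← mul_assoc, (hf.proj i).mul_self] at h1
    calc f i * q m * b * (f i * q m)
        = q m * f i * b * (f i * q m) := by rw [(hqf m i).eq]
      _ = q m * (f i * b * f i) * q m := by simp only [mul_assoc]
      _ = q m * (f i * columnMap v (f i * b * f i)) * q m := by rw [h1]
      _ = f i * (q m * columnMap v (f i * b * f i) * q m) := by
          rw [← mul_assoc, (hqf m i).eq]; simp only [mul_assoc]
      _ = c • (f i * q m) := by rw [hc, mul_smul_comm]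
  · rintro ⟨i, m⟩
    exact ⟨i, q m, rfl, hRcomm _ (hq.mem m), hqd m⟩

/-- A minimal partition of `B`, bundled with its index type. -/
structure MinPartition (B : StarSubalgebra ℂ A) where
  /-- the index type -/
  idx : Type
  /-- finiteness of the index type -/
  [fintype : Fintype idx]
  /-- the projections -/
  proj : idx → A
  isMinPartition : IsMinPartition B proj

attribute [instance] MinPartition.fintype

/-- An increasing sequence of finite-dimensional subalgebras has compatible minimal partitions. -/
theorem exists_compatible_minPartition (hτ : IsFaithfulTrace τ) {B : ℕ → StarSubalgebra ℂ A}
    (hB : Monotone B) (hfin : ∀ n, FiniteDimensional ℂ (B n)) :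
    ∃ P : ∀ n, MinPartition (B n), ∀ n m, n ≤ m → IsRefinement (B n) (P n).proj (P m).proj := by
  have step : ∀ n (P : MinPartition (B n)), ∃ P' : MinPartition (B (n + 1)),
      IsRefinement (B n) P.proj P'.proj := by
    intro n P
    have := hfin (n + 1)
    obtain ⟨κ, _, f', hf', hr⟩ :=
      P.isMinPartition.exists_isRefinement hτ (hB (Nat.le_succ n))
    exact ⟨⟨κ, f', hf'⟩, hr⟩
  choose g hg using step
  have := hfin 0
  obtain ⟨ι, _, f, hf⟩ := exists_isMinPartition (B 0)
  obtain ⟨P, hP⟩ : ∃ P : ∀ n, MinPartition (B n),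
      ∀ n, IsRefinement (B n) (P n).proj (P (n + 1)).proj :=
    ⟨fun n => Nat.rec ⟨ι, f, hf⟩ g n, fun n => hg n _⟩
  refine ⟨P, fun n m hnm => ?_⟩
  induction m, hnm using Nat.le_induction with
  | base => exact IsRefinement.refl (P n).isMinPartition.toIsPartition
  | succ m hnm ih =>
    exact ih.trans (P (m + 1)).isMinPartition.toIsOrthoProj (hB hnm) (hP m)

end Refinement

section Polar

variable {A : Type*} [CStarAlgebra A] {τ : A →ₗ[ℂ] ℂ} {B : StarSubalgebra ℂ A}

theorem mul_eq_zero_of_star_mul_self_mul {y e : A} (h : star y * y * e = 0) : y * e = 0 := by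
  rw [← CStarRing.star_mul_self_eq_zero_iff, star_mul, mul_assoc, ← mul_assoc (star y), h, mul_zero]

theorem mul_star_mul_self_of_isStarProjection {v : A} (h : IsStarProjection (star v * v)) :
    v * (star v * v) = v := by
  have : v * (1 - star v * v) = 0 :=
    mul_eq_zero_of_star_mul_self_mul (by rw [mul_sub, mul_one, h.mul_self, sub_self])
  rw [mul_sub, mul_one, sub_eq_zero] at this
  exact this.symm

/-- The polar decomposition of an element of a finite-dimensional subalgebra. -/
theorem exists_polar [FiniteDimensional ℂ B] (hτ : IsFaithfulTrace τ) {y s : A} (hy : y ∈ B)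
    (hs : IsStarProjection s) (hys : y * s = y) (hsB : s ∈ B)
    (hinj : ∀ b ∈ B, s * b = b → y * b = 0 → b = 0) :
    ∃ h ∈ B, star (y * h) * (y * h) = s ∧
      (‖y‖ ≤ 1 → traceNorm τ y ^ 2 ≤ (τ (star (y * h) * y)).re) := by
  have hyy : star y * y ∈ B := mul_mem (star_mem hy) hy
  obtain ⟨ι, _, e, l, he, heB, hsum, hcomm⟩ :=
    exists_spectral_decomposition hyy (IsSelfAdjoint.star_mul_self y)
  have hsy : s * star y = star y := by
    conv_rhs => rw [← hys, star_mul, hs.star_eq]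
  have hmul : ∀ i, star y * y * e i = (l i : ℂ) • e i := fun i => by
    rw [hsum, he.sum_smul_mul]
  have hes : ∀ i, Commute (e i) s := hcomm s (by
    rw [commute_iff_eq, mul_assoc, hys, ← mul_assoc, hsy])
  have htr : ∀ i, traceNorm τ (y * e i) ^ 2 = l i * traceNorm τ (e i) ^ 2 := fun i => by
    rw [hτ.traceNorm_sq, star_mul, mul_assoc, ← mul_assoc (star y), hmul, mul_smul_comm,
      (he.proj i).star_eq, (he.proj i).mul_self, map_smul, hτ.apply_projection (he.proj i),
      smul_eq_mul, ← Complex.ofReal_mul, Complex.ofReal_re]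
  have hpos : ∀ i, e i ≠ 0 → 0 < traceNorm τ (e i) ^ 2 := fun i hi =>
    pow_pos (lt_of_le_of_ne (traceNorm_nonneg _)
      fun h => hi (hτ.eq_zero_of_traceNorm_eq_zero h.symm)) 2
  have hl0 : ∀ i, e i ≠ 0 → 0 ≤ l i := fun i hi =>
    nonneg_of_mul_nonneg_left ((htr i).symm ▸ sq_nonneg _) (hpos i hi)
  have hzero : ∀ i, l i = 0 → s * e i = 0 := fun i hi => by
    refine hinj _ (mul_mem hsB (heB i)) (by rw [← mul_assoc, hs.mul_self]) ?_
    rw [← mul_assoc, hys]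
    exact mul_eq_zero_of_star_mul_self_mul (by rw [hmul, hi]; simp)
  have hnz : ∀ i, l i ≠ 0 → s * e i = e i := fun i hi => by
    have h1 : s * (star y * y * e i) = star y * y * e i := by
      rw [mul_assoc (star y), ← mul_assoc, hsy]
    rw [hmul, mul_smul_comm] at h1
    exact smul_right_injective A (Complex.ofReal_ne_zero.mpr hi) h1
  let c : ι → ℂ := fun i => (((√(l i))⁻¹ : ℝ) : ℂ)
  have hh : star (∑ i, c i • e i) = ∑ i, c i • e i := by
    rw [he.star_sum_smul]; simp [c]
  have hsqrt : ∀ i, e i ≠ 0 → c i * l i = ((√(l i) : ℝ) : ℂ) := fun i hi => by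
    simp only [c]
    rw [← Complex.ofReal_mul]
    congr 1
    rcases eq_or_lt_of_le (hl0 i hi) with h | h
    · simp [← h]
    · rw [inv_mul_eq_div, Real.div_sqrt]
  refine ⟨∑ i, c i • e i, sum_mem fun i _ => SMulMemClass.smul_mem _ (heB i), ?_, ?_⟩
  · rw [star_mul, hh, mul_assoc, ← mul_assoc (star y)]
    conv_lhs => rw [hsum]
    rw [he.sum_smul_mul_sum_smul, he.sum_smul_mul_sum_smul]
    rw [← mul_one s, ← he.sum_eq, Finset.mul_sum]
    refine Finset.sum_congr rfl fun i _ => ?_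
    by_cases hi : e i = 0
    · simp [hi]
    by_cases hli : l i = 0
    · rw [hzero i hli, hli]; simp
    · rw [hnz i hli, mul_comm, mul_comm (l i : ℂ), hsqrt i hi]
      simp only [c]
      rw [← Complex.ofReal_mul, mul_inv_cancel₀, Complex.ofReal_one, one_smul]
      exact (Real.sqrt_pos.mpr (lt_of_le_of_ne (hl0 i hi) (Ne.symm hli))).ne'
  · intro hy1
    rw [hτ.traceNorm_sq, star_mul, hh, mul_assoc]
    conv_lhs => rw [hsum]
    conv_rhs => rw [hsum]
    rw [he.sum_smul_mul_sum_smul]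
    simp only [map_sum, map_smul, Complex.re_sum, smul_eq_mul]
    refine Finset.sum_le_sum fun i _ => ?_
    by_cases hi : e i = 0
    · simp [hi]
    rw [hsqrt i hi, hτ.apply_projection (he.proj i), ← Complex.ofReal_mul, ← Complex.ofReal_mul,
      Complex.ofReal_re, Complex.ofReal_re]
    refine mul_le_mul_of_nonneg_right ?_ (sq_nonneg _)
    have hl1 : l i ≤ 1 := by
      refine le_of_mul_le_mul_right ?_ (hpos i hi)
      rw [← htr, one_mul]
      exact pow_le_pow_left₀ (traceNorm_nonneg _) (hτ.traceNorm_mul_le_of_norm_le_one hy1 _) 2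
    exact Real.le_sqrt_of_sq_le (by nlinarith [hl0 i hi])

end Polar

section Diagonalization

variable {A ι : Type*} [CStarAlgebra A] [Fintype ι] {τ : A →ₗ[ℂ] ℂ} {B : StarSubalgebra ℂ A}
  {f : ι → A}

theorem IsOrthoProj.sum_mul [DecidableEq ι] (hf : IsOrthoProj f) (S : Finset ι) (i : ι) :
    (∑ j ∈ S, f j) * f i = if i ∈ S then f i else 0 := by
  simp [Finset.sum_mul, hf.mul_eq]

theorem IsOrthoProj.mul_sum [DecidableEq ι] (hf : IsOrthoProj f) (S : Finset ι) (i : ι) :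
    f i * (∑ j ∈ S, f j) = if i ∈ S then f i else 0 := by
  simp [Finset.mul_sum, hf.mul_eq]

theorem IsDiagonal.finset_sum (S : Finset ι) : IsDiagonal f (∑ i ∈ S, f i) :=
  IsDiagonal.sum fun i _ => IsDiagonal.apply f i

theorem IsPartition.eq_sum_of_isDiagonal [DecidableEq ι] (hf : IsPartition f) {r : A}
    (hr : IsStarProjection r) (hd : IsDiagonal f r) :
    ∃ S : Finset ι, r = ∑ i ∈ S, f i := by
  classical
  refine ⟨Finset.univ.filter fun i => r * f i = f i, ?_⟩
  conv_lhs => rw [← mul_one r, ← hf.sum_eq, Finset.mul_sum]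
  rw [Finset.sum_filter]
  refine Finset.sum_congr rfl fun i _ => ?_
  split_ifs with h
  · exact h
  · exact (hd.mul_eq_self_or_zero hf.toIsOrthoProj hr i).resolve_left h

theorem traceNorm_eq_of_star_mul_self {v s : A}
    (hs : IsStarProjection s) (hv : star v * v = s) : traceNorm τ v = traceNorm τ s := by
  rw [traceNorm, traceNorm, hv, hs.star_eq, hs.mul_self]

theorem IsFaithfulTrace.traceNorm_sub_sq (hτ : IsFaithfulTrace τ) (x y : A) :
    traceNorm τ (x - y) ^ 2 =
      traceNorm τ x ^ 2 + traceNorm τ y ^ 2 - 2 * (τ (star x * y)).re := by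
  have h := hτ.star_apply (star x * y)
  rw [star_mul, star_star] at h
  have h' : (τ (star y * x)).re = (τ (star x * y)).re := by rw [h]; simp
  simp only [hτ.traceNorm_sq, star_sub, sub_mul, mul_sub, map_sub, Complex.sub_re, h']
  ring

/-- A diagonal projection `r` close to `q` almost dominates a diagonal projection `s` which is
equivalent to a subprojection of `q`. -/
theorem IsMinPartition.exists_partial_isometry [FiniteDimensional ℂ B] (hτ : IsFaithfulTrace τ)
    (hf : IsMinPartition B f) {q r : A} (hq : IsStarProjection q) (hqB : q ∈ B)
    (hr : IsStarProjection r) (hrd : IsDiagonal f r) :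
    ∃ v ∈ B, ∃ s, IsStarProjection s ∧ IsDiagonal f s ∧ r * s = s ∧ star v * v = s ∧ q * v = v ∧
      traceNorm τ (v - r) ≤ 3 * traceNorm τ (q - r) := by
  classical
  obtain ⟨R, hR⟩ := hf.toIsPartition.eq_sum_of_isDiagonal hr hrd
  let P : Finset ι → Prop := fun S => S ⊆ R ∧
    ∀ b ∈ B, (∑ i ∈ S, f i) * b = b → q * b = 0 → b = 0
  have hP0 : P ∅ := ⟨Finset.empty_subset _, fun b _ h _ => by simpa using h.symm⟩
  obtain ⟨S, -, hS⟩ := Finite.exists_le_maximal hP0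
  obtain ⟨hSR, hinj⟩ := hS.prop
  set s := ∑ i ∈ S, f i with hsdef
  have hs : IsStarProjection s := hf.toIsOrthoProj.isStarProjection_sum S
  have hsd : IsDiagonal f s := IsDiagonal.finset_sum S
  have hsB : s ∈ B := hsd.mem hf.mem
  have hrf : ∀ i ∈ R, r * f i = f i := fun i hi => by rw [hR, hf.toIsOrthoProj.sum_mul, if_pos hi]
  have hrs : r * s = s := by
    rw [hsdef, Finset.mul_sum]
    exact Finset.sum_congr rfl fun i hi => hrf i (hSR hi)
  -- the partial isometry on `s`
  obtain ⟨h, hhB, hh, hest⟩ := exists_polar hτ (y := q * s) (s := s) (mul_mem hqB hsB) hs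
    (by rw [mul_assoc, hs.mul_self]) hsB
    (fun b hb hsb hyb => hinj b hb hsb (by rwa [mul_assoc, hsb] at hyb))
  have hnorm : ‖q * s‖ ≤ 1 := (norm_mul_le _ _).trans
    (mul_le_one₀ (IsStarProjection.norm_le q hq) (norm_nonneg _) (IsStarProjection.norm_le s hs))
  specialize hest hnorm
  set v := q * s * h with hv
  have hvB : v ∈ B := mul_mem (mul_mem hqB hsB) hhB
  have hqv : q * v = v := by rw [hv, ← mul_assoc, ← mul_assoc, hq.mul_self]
  have hvq : star v * q = star v := by
    conv_rhs => rw [← hqv, star_mul, hq.star_eq]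
  have hle : traceNorm τ ((1 - q) * s) ≤ traceNorm τ (q - r) := by
    have h1 : (1 - q) * s = (r - q) * s := by rw [sub_mul, sub_mul, hrs, one_mul]
    rw [h1, traceNorm_sub_comm q r]
    exact hτ.traceNorm_mul_le_of_norm_le_one' (IsStarProjection.norm_le s hs) _
  have hpyth : traceNorm τ ((1 - q) * s) ^ 2 = traceNorm τ s ^ 2 - traceNorm τ (q * s) ^ 2 := by
    have h1 : star (q * s) * s = star (q * s) * (q * s) := by
      rw [star_mul, hq.star_eq, mul_assoc, mul_assoc, ← mul_assoc q, hq.mul_self]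
    have h2 : (1 - q) * s = -(q * s - s) := by rw [sub_mul, one_mul, neg_sub]
    rw [h2, traceNorm_neg, hτ.traceNorm_sub_sq, h1, ← hτ.traceNorm_sq]
    ring
  have hvs : traceNorm τ (v - s) ≤ 2 * traceNorm τ (q - r) := by
    have h1 : traceNorm τ (v - s) ^ 2 ≤ 2 * traceNorm τ ((1 - q) * s) ^ 2 := by
      rw [hτ.traceNorm_sub_sq, hpyth, traceNorm_eq_of_star_mul_self hs hh]
      rw [← mul_assoc, hvq] at hest
      linarith
    have := traceNorm_nonneg (τ := τ) ((1 - q) * s)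
    refine (abs_le_of_sq_le_sq' (b := 2 * traceNorm τ ((1 - q) * s)) ?_ (by positivity)).2.trans
      (by linarith)
    nlinarith
  -- the remainder `r - s` is equivalent to a projection orthogonal to `q`
  have hx : ∀ i ∈ R \ S, ∃ x ∈ B, f i * x = f i ∧ q * x = 0 ∧ (s + f i) * x = x ∧ x * f i = x := by
    intro i hi
    rw [Finset.mem_sdiff] at hi
    by_cases hfi : f i = 0
    · exact ⟨0, zero_mem B, by simp [hfi], by simp, by simp, by simp⟩
    have hnP : ¬ P (insert i S) := fun hP => hi.2
      (hS.le_of_ge hP (Finset.subset_insert i S) (Finset.mem_insert_self i S))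
    have : ∃ b ∈ B, (s + f i) * b = b ∧ q * b = 0 ∧ b ≠ 0 := by
      by_contra! hcon
      refine hnP ⟨Finset.insert_subset hi.1 hSR, fun b hb h1 h2 => ?_⟩
      rw [Finset.sum_insert hi.2, add_comm] at h1
      exact hcon b hb h1 h2
    obtain ⟨b, hb, hsb, hqb, hb0⟩ := this
    have hfb : star b * f i ≠ 0 := by
      intro h0
      have h1 : f i * b = 0 := by
        have := congrArg star h0
        simpa [(hf.proj i).star_eq] using this
      rw [add_mul, h1, add_zero] at hsb
      exact hb0 (hinj b hb hsb hqb)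
    obtain ⟨c, -, hc⟩ := hf.exists_normalization hτ (y := star b * f i)
      (mul_mem (star_mem hb) (hf.mem i)) (by rw [mul_assoc, (hf.proj i).mul_self]) hfb
    have hc' : star (c • (star b * f i)) = star c • (f i * b) := by
      simp [(hf.proj i).star_eq]
    refine ⟨star c • b * (c • (star b * f i)), mul_mem (SMulMemClass.smul_mem _ hb)
      (SMulMemClass.smul_mem _ (mul_mem (star_mem hb) (hf.mem i))), ?_, ?_, ?_, ?_⟩
    · rw [← mul_assoc, mul_smul_comm (star c), ← hc', hc]
    · rw [← mul_assoc, mul_smul_comm (star c), hqb, smul_zero, zero_mul]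
    · rw [← mul_assoc, mul_smul_comm (star c), hsb]
    · rw [mul_assoc, smul_mul_assoc c, mul_assoc (star b), (hf.proj i).mul_self]
  choose! x hxB hfx hqx hsx hxf using hx
  set t := ∑ i ∈ R \ S, f i with ht
  have hrt : r - s = t := by
    rw [hR, hsdef, ht, ← Finset.sum_sdiff hSR, add_sub_cancel_right]
  have htp : IsStarProjection t := hf.toIsOrthoProj.isStarProjection_sum _
  have htB : t ∈ B := (IsDiagonal.finset_sum _).mem hf.mem
  set X := ∑ i ∈ R \ S, x i with hX
  have hXB : X ∈ B := sum_mem fun i hi => hxB i hi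
  have htX : t * X = t := by
    rw [hX, Finset.mul_sum]
    conv_rhs => rw [ht]
    refine Finset.sum_congr rfl fun i hi => ?_
    rw [← hsx i hi, ← mul_assoc, mul_add, ht, hf.toIsOrthoProj.sum_mul, if_pos hi]
    have h0 : t * s = 0 := by
      rw [hsdef, Finset.mul_sum]
      refine Finset.sum_eq_zero fun j hj => ?_
      rw [ht, hf.toIsOrthoProj.sum_mul, if_neg (by simp [hj])]
    rw [← ht, h0, zero_add, hfx i hi]
  have hXt : X * t = X := by
    rw [hX, Finset.sum_mul]
    refine Finset.sum_congr rfl fun i hi => ?_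
    rw [← hxf i hi, mul_assoc, ht, hf.toIsOrthoProj.mul_sum, if_pos hi]
  have hqX : q * X = 0 := by
    rw [hX, Finset.mul_sum]
    exact Finset.sum_eq_zero fun i hi => hqx i hi
  have hrX : r * X = X := by
    rw [hX, Finset.mul_sum]
    refine Finset.sum_congr rfl fun i hi => ?_
    rw [← hsx i hi, ← mul_assoc, mul_add, hrs, hrf i (Finset.mem_sdiff.mp hi).1]
  obtain ⟨k, -, hk, -⟩ := exists_polar hτ (y := X) (s := t) hXB htp hXt htB
    (fun b _ htb hXb => by rw [← htb, ← htX, mul_assoc, hXb, mul_zero])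
  have hrt_le : traceNorm τ (r - s) ≤ traceNorm τ (q - r) := by
    have h1 : X * k = -((q - r) * (X * k)) := by
      rw [← mul_assoc, sub_mul, hqX, hrX, zero_sub, neg_mul, neg_neg]
    rw [hrt, ← traceNorm_eq_of_star_mul_self htp hk, h1, traceNorm_neg]
    exact hτ.traceNorm_mul_le_of_norm_le_one'
      (norm_le_one_of_isStarProjection_star_mul_self (hk ▸ htp)) _
  refine ⟨v, hvB, s, hs, hsd, hrs, hh, hqv, ?_⟩
  calc traceNorm τ (v - r) ≤ traceNorm τ (v - s) + traceNorm τ (s - r) :=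
        hτ.traceNorm_sub_le_sub_add_sub _ _ _
    _ ≤ 2 * traceNorm τ (q - r) + traceNorm τ (q - r) :=
        add_le_add hvs (by rwa [traceNorm_sub_comm])
    _ = 3 * traceNorm τ (q - r) := by ring

variable {J : Type*} [Fintype J] {q r : J → A}

/-- A partial isometry of `B` onto a projection commuting with the partition `q`, whose domain is
diagonal, and which conjugates `q` to diagonal elements. -/
structure IsPartialDiagonalizer (B : StarSubalgebra ℂ A) (f : ι → A) (q : J → A) (v : A) :
    Prop where
  mem : v ∈ B
  comm : ∀ j, Commute (q j) (v * star v)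
  diag : ∀ j, IsDiagonal f (star v * q j * v)

theorem IsMinPartition.exists_isPartialDiagonalizer [FiniteDimensional ℂ B]
    (hτ : IsFaithfulTrace τ) (hf : IsMinPartition B f) (hq : IsPartition q) (hqB : ∀ j, q j ∈ B)
    (hr : IsPartition r) (hrd : ∀ j, IsDiagonal f (r j)) :
    ∃ v, ∃ S : Finset ι, IsPartialDiagonalizer B f q v ∧ star v * v = ∑ i ∈ S, f i ∧
      traceNorm τ (v - 1) ≤ 3 * ∑ j, traceNorm τ (q j - r j) := by
  classical
  choose v hvB s hs hsd hrs hvs hqv hle using fun j =>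
    hf.exists_partial_isometry hτ (hq.proj j) (hqB j) (hr.proj j) (hrd j)
  have hvq : ∀ j, star (v j) * q j = star (v j) := fun j => by
    conv_rhs => rw [← hqv, star_mul, (hq.proj j).star_eq]
  have hqv' : ∀ j k, q j * v k = if j = k then v k else 0 := fun j k => by
    rw [← hqv k, ← mul_assoc, hq.mul_eq]
    split_ifs with h
    · rw [h]
    · simp
  have hvv : ∀ j k, star (v j) * v k = if j = k then s k else 0 := fun j k => by
    rw [← hvq j, mul_assoc, hqv']
    split_ifs with h
    · rw [h, hvs]
    · simp
  have hss : ∀ j k, j ≠ k → s j * s k = 0 := fun j k hjk => by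
    have : s j * r j = s j := by
      conv_rhs => rw [← (hs j).star_eq, ← hrs j, star_mul, (hs j).star_eq, (hr.proj j).star_eq]
    rw [← hrs k, ← this, mul_assoc, ← mul_assoc (r j), hr.ortho j k hjk]; simp
  have hvs' : ∀ j, v j * s j = v j := fun j => by
    rw [← hvs j]
    exact mul_star_mul_self_of_isStarProjection (by rw [hvs j]; exact hs j)
  have hvv' : ∀ j k, v j * star (v k) = if j = k then v k * star (v k) else 0 := fun j k => by
    split_ifs with h
    · rw [h]
    · rw [← hvs' j, ← hvs' k, star_mul, (hs k).star_eq, mul_assoc, ← mul_assoc (s j), hss j k h]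
      simp
  have hVV : star (∑ j, v j) * ∑ j, v j = ∑ j, s j := by
    simp [star_sum, Finset.sum_mul, Finset.mul_sum, hvv]
  have hproj : IsStarProjection (∑ j, s j) := by
    have : IsOrthoProj s := ⟨hs, hss⟩
    exact this.isStarProjection_sum _
  obtain ⟨S, hS⟩ := hf.toIsPartition.eq_sum_of_isDiagonal hproj (IsDiagonal.sum fun j _ => hsd j)
  refine ⟨∑ j, v j, S, ⟨sum_mem fun j _ => hvB j, fun j => ?_, fun j => ?_⟩, hVV.trans hS, ?_⟩
  · have h1 : q j * ((∑ j, v j) * star (∑ j, v j)) = v j * star (v j) := by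
      rw [← mul_assoc, Finset.mul_sum]
      simp only [hqv', Finset.sum_ite_eq, Finset.mem_univ, if_true]
      rw [star_sum, Finset.mul_sum,
        Finset.sum_eq_single j (fun k _ hk => by rw [hvv', if_neg hk.symm]) (by simp)]
    have h2 := congrArg star h1
    rw [commute_iff_eq, h1]
    simpa [(hq.proj j).star_eq] using h2.symm
  · have : star (∑ j, v j) * q j * (∑ j, v j) = s j := by
      simp [star_sum, Finset.sum_mul, Finset.mul_sum, mul_assoc, hqv', hvv]
    rw [this]
    exact hsd j
  · rw [← hr.sum_eq, ← Finset.sum_sub_distrib, Finset.mul_sum]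
    exact (hτ.traceNorm_sum_le _ _).trans (Finset.sum_le_sum fun j _ => hle j)

/-- A partial diagonalizer whose domain misses a minimal projection can be extended. -/
theorem IsPartialDiagonalizer.exists_extension_step (hτ : IsFaithfulTrace τ)
    (hf : IsMinPartition B f) (hq : IsPartition q) (hqB : ∀ j, q j ∈ B) {v : A}
    (hv : IsPartialDiagonalizer B f q v) (hvv : IsStarProjection (star v * v)) {i : ι}
    (hi : star v * v * f i = 0) (hfi : f i ≠ 0) :
    ∃ w ∈ B, ∃ j, star w * w = f i ∧ w * f i = w ∧ q j * w = w ∧ star v * w = 0 := by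
  have hvvv := mul_star_mul_self_of_isStarProjection hvv
  have hx : ∃ x ∈ B, (1 - v * star v) * x * f i ≠ 0 := by
    by_contra! hcon
    obtain ⟨u, hu⟩ := hf.exists_isColumn hτ i
    have hz := hu.isStarProjection_columnMap hf (IsStarProjection.one A) (Commute.one_left _)
    have hzB := fun b hb => hu.columnMap_commute_mem hf (Commute.one_left (f i)) (b := b) hb
    have hfz := hu.mul_columnMap hf (Commute.one_left (f i))
    set z := columnMap u 1
    have hez : (1 - v * star v) * z = 0 := by
      simp only [z, columnMap, Finset.mul_sum]
      refine Finset.sum_eq_zero fun g _ => ?_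
      rw [← hu.right g, ← mul_assoc, ← mul_assoc, ← mul_assoc, hcon _ (hu.mem g)]
      simp
    rw [sub_mul, one_mul, sub_eq_zero] at hez
    have hvz := (hzB v hv.mem).eq
    have hvz' := (hzB (star v * v) (mul_mem (star_mem hv.mem) hv.mem)).eq
    have hp : IsStarProjection (1 - star v * v) := hvv.one_sub
    have h0 : z * (1 - star v * v) = 0 := by
      refine hτ.faithful _ ?_
      rw [star_mul, hp.star_eq, hz.star_eq, mul_assoc, ← mul_assoc z, hz.mul_self, hτ.comm,
        mul_assoc, hp.mul_self, mul_sub, mul_one, map_sub, ← hvz', mul_assoc, hτ.comm, mul_assoc,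
        ← (hzB _ (star_mem hv.mem)).eq, ← mul_assoc, ← hez, sub_self]
    have h1 : f i * (z * (1 - star v * v)) = f i := by
      have h2 : f i * (star v * v) = 0 := by
        have := congrArg star hi
        simpa [(hf.proj i).star_eq, mul_assoc] using this
      rw [← mul_assoc, hfz, mul_one, mul_sub, mul_one, h2, sub_zero]
    rw [h0, mul_zero] at h1
    exact hfi h1.symm
  obtain ⟨x, hxB, hx0⟩ := hx
  have hj : ∃ j, q j * ((1 - v * star v) * x * f i) ≠ 0 := by
    by_contra! hcon
    apply hx0
    rw [← one_mul ((1 - v * star v) * x * f i)]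
    nth_rw 1 [← hq.sum_eq]
    rw [Finset.sum_mul]
    exact Finset.sum_eq_zero fun j _ => hcon j
  obtain ⟨j, hj⟩ := hj
  have hmem : (1 - v * star v) ∈ B := sub_mem (one_mem B) (mul_mem hv.mem (star_mem hv.mem))
  have hright : q j * ((1 - v * star v) * x * f i) * f i = q j * ((1 - v * star v) * x * f i) := by
    rw [mul_assoc, mul_assoc _ (f i), (hf.proj i).mul_self]
  obtain ⟨c, -, hc⟩ := hf.exists_normalization hτ
    (mul_mem (hqB j) (mul_mem (mul_mem hmem hxB) (hf.mem i))) hright hj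
  refine ⟨_, SMulMemClass.smul_mem c (mul_mem (hqB j) (mul_mem (mul_mem hmem hxB) (hf.mem i))),
    j, hc, ?_, ?_, ?_⟩
  · rw [smul_mul_assoc, hright]
  · rw [mul_smul_comm, ← mul_assoc, (hq.proj j).mul_self]
  · have h1 : Commute (q j) (1 - v * star v) := (Commute.one_right _).sub_right (hv.comm j)
    have h2 : star v * (1 - v * star v) = 0 := by
      have := congrArg star hvvv
      rw [star_mul, hvv.star_eq] at this
      rw [mul_sub, mul_one, ← mul_assoc, this, sub_self]
    rw [mul_smul_comm, ← mul_assoc (q j), ← mul_assoc (q j), h1.eq]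
    simp [← mul_assoc, h2]

theorem IsPartialDiagonalizer.exists_extension (hτ : IsFaithfulTrace τ)
    (hf : IsMinPartition B f) (hq : IsPartition q) (hqB : ∀ j, q j ∈ B) (n : ℕ) :
    ∀ (v : A) (S : Finset ι), Fintype.card ι - S.card ≤ n → IsPartialDiagonalizer B f q v →
      star v * v = ∑ i ∈ S, f i →
      ∃ u ∈ B, star u * u = 1 ∧ (∀ j, IsDiagonal f (star u * q j * u)) ∧
        u * ∑ i ∈ S, f i = v := by
  classical
  have hfull : ∀ (v : A) (S : Finset ι), S = Finset.univ → IsPartialDiagonalizer B f q v →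
      star v * v = ∑ i ∈ S, f i → ∃ u ∈ B, star u * u = 1 ∧
        (∀ j, IsDiagonal f (star u * q j * u)) ∧ u * ∑ i ∈ S, f i = v := by
    rintro v S rfl hv hvS
    rw [hf.sum_eq] at hvS ⊢
    exact ⟨v, hv.mem, hvS, hv.diag, mul_one v⟩
  induction n with
  | zero =>
    intro v S hn
    refine hfull v S (Finset.card_eq_iff_eq_univ S |>.mp ?_)
    have := S.card_le_univ
    omega
  | succ n ih =>
    intro v S hn hv hvS
    by_cases hSu : S = Finset.univ
    · exact hfull v S hSu hv hvS
    obtain ⟨i, hi⟩ : ∃ i, i ∉ S := by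
      by_contra! h
      exact hSu (Finset.eq_univ_iff_forall.mpr h)
    have hcard : Fintype.card ι - (insert i S).card ≤ n := by
      rw [Finset.card_insert_of_notMem hi]; omega
    by_cases hfi : f i = 0
    · have h1 : ∑ k ∈ insert i S, f k = ∑ k ∈ S, f k := by
        rw [Finset.sum_insert hi, hfi, zero_add]
      obtain ⟨u, huB, huu, hud, huv⟩ := ih v (insert i S) hcard hv (by rw [h1, hvS])
      exact ⟨u, huB, huu, hud, by rw [← h1, huv]⟩
    have hsp : IsStarProjection (star v * v) := by
      rw [hvS]; exact hf.toIsOrthoProj.isStarProjection_sum S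
    obtain ⟨w, hwB, j, hww, hwf, hqw, hvw⟩ := hv.exists_extension_step hτ hf hq hqB hsp
      (by rw [hvS, hf.toIsOrthoProj.sum_mul, if_neg hi]) hfi
    have hwv : star w * v = 0 := by simpa using congrArg star hvw
    have hvS' : v * ∑ k ∈ S, f k = v := by
      rw [← hvS]; exact mul_star_mul_self_of_isStarProjection hsp
    have hwS : w * ∑ k ∈ S, f k = 0 := by
      rw [← hwf, mul_assoc, hf.toIsOrthoProj.mul_sum, if_neg hi, mul_zero]
    have hwv' : w * star v = 0 := by
      rw [← hvS', star_mul, (hf.toIsOrthoProj.isStarProjection_sum S).star_eq, ← mul_assoc, hwS,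
        zero_mul]
    have hvw' : v * star w = 0 := by simpa using congrArg star hwv'
    have hqlw : ∀ l, q l * w = if l = j then w else 0 := fun l => by
      rw [← hqw, ← mul_assoc, hq.mul_eq]
      split_ifs with h
      · rw [h]
      · simp
    have hwql : ∀ l, star w * q l = if l = j then star w else 0 := fun l => by
      have := congrArg star (hqlw l)
      rw [star_mul, (hq.proj l).star_eq] at this
      rw [this]; split_ifs <;> simp
    have hdiag : IsPartialDiagonalizer B f q (v + w) := by
      refine ⟨add_mem hv.mem hwB, fun l => ?_, fun l => ?_⟩
      · have h1 : (v + w) * star (v + w) = v * star v + w * star w := by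
          rw [star_add, mul_add, add_mul, add_mul, hwv', hvw', add_zero, zero_add]
        rw [h1]
        refine (hv.comm l).add_right ?_
        rw [commute_iff_eq, ← mul_assoc, hqlw, mul_assoc, hwql]
        split_ifs <;> simp
      · have h1 : star (v + w) * q l * (v + w) = star v * q l * v + star w * q l * w := by
          rw [star_add, add_mul, mul_add, add_mul, add_mul, hwql, mul_assoc _ _ w, hqlw]
          split_ifs <;> simp [hvw, hwv]
        rw [h1, hwql]
        refine (hv.diag l).add ?_
        split_ifs
        · rw [hww]; exact IsDiagonal.apply f i
        · rw [zero_mul]; exact IsDiagonal.zero f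
    have hsum : star (v + w) * (v + w) = ∑ k ∈ insert i S, f k := by
      rw [star_add, mul_add, add_mul, add_mul, hvw, hwv, hvS, hww, Finset.sum_insert hi, add_zero,
        zero_add, add_comm]
    obtain ⟨u, huB, huu, hud, huv⟩ := ih (v + w) (insert i S) hcard hdiag hsum
    refine ⟨u, huB, huu, hud, ?_⟩
    have h1 : (∑ k ∈ insert i S, f k) * ∑ k ∈ S, f k = ∑ k ∈ S, f k := by
      rw [Finset.sum_insert hi, add_mul, hf.toIsOrthoProj.mul_sum, if_neg hi, zero_add,
        (hf.toIsOrthoProj.isStarProjection_sum S).mul_self]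
    rw [← h1, ← mul_assoc, huv, add_mul, hvS', hwS, add_zero]

/-- A partition `q` in `B` close to a diagonal partition `r` can be conjugated to a diagonal
partition by a unitary of `B` close to `1`. -/
theorem IsMinPartition.exists_unitary_diagonalizing [FiniteDimensional ℂ B]
    (hτ : IsFaithfulTrace τ) (hf : IsMinPartition B f) (hq : IsPartition q) (hqB : ∀ j, q j ∈ B)
    (hr : IsPartition r) (hrd : ∀ j, IsDiagonal f (r j)) :
    ∃ u ∈ B, star u * u = 1 ∧ (∀ j, IsDiagonal f (star u * q j * u)) ∧
      traceNorm τ (u - 1) ≤ 9 * ∑ j, traceNorm τ (q j - r j) := by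
  obtain ⟨v, S, hv, hvS, hle⟩ := hf.exists_isPartialDiagonalizer hτ hq hqB hr hrd
  obtain ⟨u, huB, huu, hud, huv⟩ := IsPartialDiagonalizer.exists_extension hτ hf hq hqB _ v S
    le_rfl hv hvS
  refine ⟨u, huB, huu, hud, ?_⟩
  rw [← hvS] at huv
  have hsp : IsStarProjection (star v * v) := by
    rw [hvS]; exact hf.toIsOrthoProj.isStarProjection_sum S
  have h1 : traceNorm τ (u - v) ≤ 2 * traceNorm τ (v - 1) := by
    have h2 : u - v = -(u * (star (v - 1) + star v * (v - 1))) := by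
      have : star (v - 1) + star v * (v - 1) = star v * v - 1 := by
        rw [star_sub, star_one, mul_sub, mul_one]; abel
      rw [this, mul_sub, huv, mul_one, neg_sub]
    rw [h2, traceNorm_neg, hτ.traceNorm_isometry_mul huu]
    refine (hτ.traceNorm_add_le _ _).trans ?_
    rw [hτ.traceNorm_star, two_mul]
    refine add_le_add le_rfl (hτ.traceNorm_mul_le_of_norm_le_one ?_ _)
    rw [norm_star]
    exact norm_le_one_of_isStarProjection_star_mul_self hsp
  have := hτ.traceNorm_sub_le_sub_add_sub u v 1
  linarith

end Diagonalization

section Adjoin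

variable {A : Type*} [CStarAlgebra A]

/-- Adjoining to `B` a projection commuting with `B`. -/
def StarSubalgebra.adjoinProjection (B : StarSubalgebra ℂ A) {e : A} (he : IsStarProjection e)
    (hc : ∀ b ∈ B, Commute b e) : StarSubalgebra ℂ A where
  carrier := {x | ∃ a ∈ B, ∃ b ∈ B, x = a + b * e}
  mul_mem' := by
    rintro _ _ ⟨a, ha, b, hb, rfl⟩ ⟨c, hc', d, hd, rfl⟩
    refine ⟨a * c, mul_mem ha hc', a * d + b * c + b * d,
      add_mem (add_mem (mul_mem ha hd) (mul_mem hb hc')) (mul_mem hb hd), ?_⟩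
    have h1 : b * e * c = b * c * e := by rw [mul_assoc, ← (hc c hc').eq, mul_assoc]
    have h2 : b * e * (d * e) = b * d * e := by
      rw [mul_assoc, ← mul_assoc e, ← (hc d hd).eq, mul_assoc d, he.mul_self, mul_assoc]
    rw [add_mul, mul_add, mul_add, h1, h2, add_mul, add_mul, mul_assoc a d]
    abel
  add_mem' := by
    rintro _ _ ⟨a, ha, b, hb, rfl⟩ ⟨c, hc', d, hd, rfl⟩
    exact ⟨a + c, add_mem ha hc', b + d, add_mem hb hd, by rw [add_mul]; abel⟩
  algebraMap_mem' r := ⟨algebraMap ℂ A r, B.algebraMap_mem r, 0, zero_mem B, by simp⟩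
  star_mem' := by
    rintro _ ⟨a, ha, b, hb, rfl⟩
    refine ⟨star a, star_mem ha, star b, star_mem hb, ?_⟩
    rw [star_add, star_mul, he.star_eq, (hc _ (star_mem hb)).eq]

theorem exists_finiteDimensional_adjoin {B : StarSubalgebra ℂ A} [hB : FiniteDimensional ℂ B]
    {κ : Type*} {e : κ → A} (he : ∀ t, IsStarProjection (e t))
    (hcomm : ∀ t t', Commute (e t) (e t')) (hc : ∀ t, ∀ b ∈ B, Commute b (e t)) (s : Finset κ) :
    ∃ K : StarSubalgebra ℂ A, FiniteDimensional ℂ K ∧ B ≤ K ∧ (∀ t ∈ s, e t ∈ K) ∧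
      ∀ t, ∀ b ∈ K, Commute b (e t) := by
  classical
  induction s using Finset.induction_on with
  | empty => exact ⟨B, hB, le_rfl, by simp, hc⟩
  | insert t s _ ih =>
    obtain ⟨K, hK, hBK, hes, hKc⟩ := ih
    have hle : K ≤ K.adjoinProjection (he t) (hKc t) := fun x hx =>
      ⟨x, hx, 0, zero_mem K, by simp⟩
    have het : e t ∈ K.adjoinProjection (he t) (hKc t) :=
      ⟨0, zero_mem K, 1, one_mem K, by simp⟩
    refine ⟨K.adjoinProjection (he t) (hKc t), ?_, hBK.trans hle, ?_, ?_⟩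
    · have h1 : FiniteDimensional ℂ K.toSubalgebra.toSubmodule := hK
      refine Submodule.finiteDimensional_of_le
        (S₁ := (K.adjoinProjection (he t) (hKc t)).toSubalgebra.toSubmodule)
        (S₂ := K.toSubalgebra.toSubmodule ⊔
          K.toSubalgebra.toSubmodule.map (LinearMap.mulRight ℂ (e t))) ?_
      rintro _ ⟨a, ha, b, hb, rfl⟩
      exact Submodule.add_mem_sup ha ⟨b, hb, rfl⟩
    · intro t' ht'
      rcases Finset.mem_insert.mp ht' with rfl | h
      · exact het
      · exact hle (hes t' h)
    · rintro t' _ ⟨a, ha, b, hb, rfl⟩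
      exact (hKc t' a ha).add_left ((hKc t' b hb).mul_left (hcomm t t'))

end Adjoin

section Limit

variable {A J : Type*} [CStarAlgebra A] [Fintype J] {τ : A →ₗ[ℂ] ℂ}
  {B : ℕ → StarSubalgebra ℂ A} {p : J → A}

theorem IsStarProjection.conj_unitary {u q : A} (hq : IsStarProjection q) (hu : u * star u = 1) :
    IsStarProjection (star u * q * u) := by
  refine ⟨?_, ?_⟩
  · calc star u * q * u * (star u * q * u)
        = star u * q * (u * star u) * q * u := by simp only [mul_assoc]
      _ = star u * q * u := by rw [hu, mul_one, mul_assoc (star u), hq.mul_self]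
  · rw [isSelfAdjoint_iff]
    simp [hq.star_eq, mul_assoc]

theorem IsPartition.conj_unitary {u : A} {q : J → A} (hq : IsPartition q) (hu : star u * u = 1)
    (hu' : u * star u = 1) : IsPartition fun j => star u * q j * u := by
  refine ⟨⟨fun j => (hq.proj j).conj_unitary hu', fun j k hjk => ?_⟩, ?_⟩
  · calc star u * q j * u * (star u * q k * u)
        = star u * q j * (u * star u) * q k * u := by simp only [mul_assoc]
      _ = 0 := by rw [hu', mul_one, mul_assoc (star u), hq.ortho j k hjk]; simp
  · rw [← Finset.sum_mul, ← Finset.mul_sum, hq.sum_eq, mul_one, hu]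

theorem IsFaithfulTrace.traceNorm_conj_le (hτ : IsFaithfulTrace τ) {u : A} (hu : star u * u = 1)
    (x : A) : traceNorm τ (star u * x * u) ≤ traceNorm τ x := by
  have h := norm_le_one_of_star_mul_self_eq_one hu
  exact (hτ.traceNorm_mul_le_of_norm_le_one' h _).trans
    (hτ.traceNorm_mul_le_of_norm_le_one (by rwa [norm_star]) x)

theorem IsFaithfulTrace.commute_of_tendsto (hτ : IsFaithfulTrace τ) {x y : ℕ → A} {a b : A}
    (hx : Tendsto (fun n => traceNorm τ (x n - a)) atTop (𝓝 0))
    (hy : Tendsto (fun n => traceNorm τ (y n - b)) atTop (𝓝 0))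
    (hx1 : ∀ n, ‖x n‖ ≤ 1) (hb : ‖b‖ ≤ 1) (hxy : ∀ᶠ n in atTop, Commute (x n) (y n)) :
    Commute a b := by
  have hlim : Tendsto (fun n => 2 * traceNorm τ (x n - a) + 2 * traceNorm τ (y n - b)) atTop
      (𝓝 0) := by simpa using (hx.const_mul 2).add (hy.const_mul 2)
  have hle : traceNorm τ (a * b - b * a) ≤ 0 := by
    refine ge_of_tendsto hlim (hxy.mono fun n hn => ?_)
    have h1 : a * b - b * a = x n * (b - y n) - (x n - a) * b +
        ((y n - b) * x n + b * (x n - a)) := by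
      have := hn.eq
      simp only [mul_sub, sub_mul]
      rw [this]; abel
    rw [h1]
    refine (hτ.traceNorm_add_le _ _).trans ?_
    have h2 := hτ.traceNorm_sub_le (x n * (b - y n)) ((x n - a) * b)
    have h3 := hτ.traceNorm_add_le ((y n - b) * x n) (b * (x n - a))
    have h4 := hτ.traceNorm_mul_le_of_norm_le_one (hx1 n) (b - y n)
    have h5 := hτ.traceNorm_mul_le_of_norm_le_one' hb (x n - a)
    have h6 := hτ.traceNorm_mul_le_of_norm_le_one' (hx1 n) (y n - b)
    have h7 := hτ.traceNorm_mul_le_of_norm_le_one hb (x n - a)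
    rw [traceNorm_sub_comm b] at h4
    linarith
  exact sub_eq_zero.mp
    (hτ.eq_zero_of_traceNorm_eq_zero (le_antisymm hle (traceNorm_nonneg _)))

/-- A partition of some `B m` close to `p`, diagonalized by a unitary of `B m`. -/
structure IsDiagonalApprox (τ : A →ₗ[ℂ] ℂ) (P : ∀ n, MinPartition (B n)) (p : J → A) (k : ℕ)
    (ε : ℝ) (m : ℕ) (u : A) (q : J → A) : Prop where
  le : k ≤ m
  mem : u ∈ B m
  unitary : star u * u = 1
  isPartition : IsPartition q
  diag : ∀ j, IsDiagonal (P m).proj (star u * q j * u)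
  close : ∀ j, traceNorm τ (q j - p j) ≤ ε

variable {P : ∀ n, MinPartition (B n)}

theorem IsDiagonalApprox.exists_next (hτ : IsFaithfulTrace τ) (hB : Monotone B)
    (hfin : ∀ n, FiniteDimensional ℂ (B n))
    (hP : ∀ n m, n ≤ m → IsRefinement (B n) (P n).proj (P m).proj)
    (happrox : ∀ ε > 0, ∃ n, ∃ q : J → A, IsPartition q ∧ (∀ j, q j ∈ B n) ∧
      ∀ j, traceNorm τ (q j - p j) ≤ ε) {k m : ℕ} {ε ε' : ℝ} (hε' : 0 < ε') {u : A} {q : J → A}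
    (h : IsDiagonalApprox τ P p k ε m u q) :
    ∃ m' u' q', IsDiagonalApprox τ P p (k + 1) ε' m' u' q' ∧
      traceNorm τ (u' - u) ≤ 9 * Fintype.card J * (ε + ε') := by
  obtain ⟨n, q', hq', hq'B, hq'p⟩ := happrox ε' hε'
  set m' := max n (m + 1) with hm'
  have hm : m ≤ m' := (Nat.le_succ m).trans (le_max_right _ _)
  have huu := hτ.mul_star_eq_one h.unitary
  have huB : u ∈ B m' := hB hm h.mem
  have hqB_max : ∀ j, q' j ∈ B m' := fun j => hB (le_max_left _ _) (hq'B j)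
  have := hfin m'
  obtain ⟨w, hwB, hww, hwd, hwle⟩ := (P m').isMinPartition.exists_unitary_diagonalizing hτ
    (hq'.conj_unitary h.unitary huu)
    (fun j => mul_mem (mul_mem (star_mem huB) (hqB_max j)) huB)
    (h.isPartition.conj_unitary h.unitary huu) (fun j => (hP m m' hm).isDiagonal (h.diag j))
  refine ⟨m', u * w, q', ⟨?_, mul_mem huB hwB, ?_, hq', fun j => ?_, hq'p⟩, ?_⟩
  · exact (Nat.succ_le_succ h.le).trans (le_max_right _ _)
  · rw [star_mul, mul_assoc, ← mul_assoc (star u), h.unitary, one_mul, hww]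
  · have := hwd j
    rw [star_mul]
    simpa only [mul_assoc] using this
  · have h1 : u * w - u = u * (w - 1) := by rw [mul_sub, mul_one]
    rw [h1, hτ.traceNorm_isometry_mul h.unitary, mul_assoc]
    refine hwle.trans (mul_le_mul_of_nonneg_left ?_ (by norm_num))
    rw [← nsmul_eq_mul]
    refine Finset.sum_le_card_nsmul _ _ _ fun j _ => ?_
    have h2 : star u * q' j * u - star u * q j * u = star u * (q' j - q j) * u := by
      rw [mul_sub, sub_mul]
    rw [h2]
    refine (hτ.traceNorm_conj_le h.unitary _).trans
      ((hτ.traceNorm_sub_le_sub_add_sub _ (p j) _).trans ?_)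
    rw [add_comm]
    exact add_le_add ((traceNorm_sub_comm _ _).trans_le (h.close j)) (hq'p j)

theorem exists_isDiagonalApprox_zero [Nonempty J] (τ : A →ₗ[ℂ] ℂ)
    (P : ∀ n, MinPartition (B n)) (p : J → A) :
    ∃ ε > 0, ∃ q, IsDiagonalApprox τ P p 0 ε 0 1 q := by
  classical
  obtain ⟨j₀⟩ := ‹Nonempty J›
  let q : J → A := Pi.single j₀ 1
  have hq : ∀ j, q j = if j = j₀ then 1 else 0 := fun j => by simp [q, Pi.single_apply]
  refine ⟨∑ j, traceNorm τ (q j - p j) + 1,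
    add_pos_of_nonneg_of_pos (Finset.sum_nonneg fun j _ => traceNorm_nonneg _) one_pos, q,
    ⟨le_rfl, one_mem _, by simp, ⟨⟨fun j => ?_, fun j k hjk => ?_⟩, ?_⟩, fun j => ?_, fun j => ?_⟩⟩
  · rw [hq]; split_ifs
    exacts [IsStarProjection.one A, IsStarProjection.zero A]
  · rw [hq, hq]; split_ifs with h1 h2 <;> simp
    exact (hjk (h1.trans h2.symm)).elim
  · simp [hq]
  · rw [hq]; split_ifs
    · simpa using (P 0).isMinPartition.toIsPartition.isDiagonal_one
    · simpa using IsDiagonal.zero _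
  · have := Finset.single_le_sum (f := fun j => traceNorm τ (q j - p j))
      (fun j _ => traceNorm_nonneg _) (Finset.mem_univ j)
    linarith

theorem exists_isDiagonalApprox_seq [Nonempty J] (hτ : IsFaithfulTrace τ) (hB : Monotone B)
    (hfin : ∀ n, FiniteDimensional ℂ (B n))
    (hP : ∀ n m, n ≤ m → IsRefinement (B n) (P n).proj (P m).proj)
    (happrox : ∀ ε > 0, ∃ n, ∃ q : J → A, IsPartition q ∧ (∀ j, q j ∈ B n) ∧
      ∀ j, traceNorm τ (q j - p j) ≤ ε) :
    ∃ (ε : ℝ) (m : ℕ → ℕ) (u : ℕ → A) (q : ℕ → J → A),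
      (∀ k, IsDiagonalApprox τ P p k (ε / 2 ^ k) (m k) (u k) (q k)) ∧
      ∃ C, ∀ k, traceNorm τ (u (k + 1) - u k) ≤ C / 2 ^ k := by
  obtain ⟨ε, hε, q₀, h₀⟩ := exists_isDiagonalApprox_zero τ P p
  let X : ℕ → Type _ := fun k =>
    {x : ℕ × A × (J → A) // IsDiagonalApprox τ P p k (ε / 2 ^ k) x.1 x.2.1 x.2.2}
  have step : ∀ k (x : X k), ∃ y : X (k + 1), traceNorm τ (y.1.2.1 - x.1.2.1) ≤
      9 * Fintype.card J * (ε / 2 ^ k + ε / 2 ^ (k + 1)) := by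
    intro k x
    obtain ⟨m', u', q', h, hle⟩ := x.2.exists_next hτ hB hfin hP happrox
      (ε' := ε / 2 ^ (k + 1)) (by positivity)
    exact ⟨⟨(m', u', q'), h⟩, hle⟩
  choose g hg using step
  obtain ⟨x, hx⟩ : ∃ x : ∀ k, X k, ∀ k, x (k + 1) = g k (x k) :=
    ⟨fun k => Nat.rec ⟨(0, 1, q₀), by simpa using h₀⟩ g k, fun k => rfl⟩
  refine ⟨ε, fun k => (x k).1.1, fun k => (x k).1.2.1, fun k => (x k).1.2.2, fun k => (x k).2,
    9 * Fintype.card J * (2 * ε), fun k => ?_⟩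
  simp only [hx]
  refine (hg k (x k)).trans ?_
  rw [mul_div_assoc]
  refine mul_le_mul_of_nonneg_left ?_ (by positivity)
  rw [two_mul, add_div]
  gcongr
  · norm_num
  · omega

/-- The limiting unitary conjugates `p` to a partition which generates a finite-dimensional
algebra together with each `B n`. -/
theorem exists_unitary_finiteDimensional (hτ : IsFaithfulTrace τ) (hB : Monotone B)
    (hfin : ∀ n, FiniteDimensional ℂ (B n))
    (hcomplete : ∀ x : ℕ → A, (∀ n, ‖x n‖ ≤ 1) →
      (∃ C, ∀ n, traceNorm τ (x (n + 1) - x n) ≤ C / 2 ^ n) →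
      ∃ y, ‖y‖ ≤ 1 ∧ Tendsto (fun n => traceNorm τ (x n - y)) atTop (𝓝 0))
    (hp : IsPartition p)
    (happrox : ∀ ε > 0, ∃ n, ∃ q : J → A, IsPartition q ∧ (∀ j, q j ∈ B n) ∧
      ∀ j, traceNorm τ (q j - p j) ≤ ε) :
    ∃ u : A, star u * u = 1 ∧ u * star u = 1 ∧ ∀ n, ∃ K : StarSubalgebra ℂ A,
      FiniteDimensional ℂ K ∧ B n ≤ K ∧ ∀ j, star u * p j * u ∈ K := by
  rcases isEmpty_or_nonempty J with hJ | hJ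
  · exact ⟨1, by simp, by simp, fun n => ⟨B n, hfin n, le_rfl, fun j => hJ.elim j⟩⟩
  obtain ⟨P, hP⟩ := exists_compatible_minPartition hτ hB hfin
  obtain ⟨ε, m, u, q, h, hC⟩ := exists_isDiagonalApprox_seq hτ hB hfin hP happrox
  have hu1 : ∀ k, ‖u k‖ ≤ 1 := fun k => norm_le_one_of_star_mul_self_eq_one (h k).unitary
  obtain ⟨w, hw1, hw⟩ := hcomplete u hu1 hC
  have hww : star w * w = 1 := by
    rw [← sub_eq_zero]
    refine hτ.eq_zero_of_traceNorm_eq_zero (le_antisymm ?_ (traceNorm_nonneg _))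
    have hlim : Tendsto (fun k => 2 * traceNorm τ (u k - w)) atTop (𝓝 0) := by
      simpa using hw.const_mul 2
    refine ge_of_tendsto' hlim fun k => ?_
    have h1 : star w * w - 1 = -(star (u k) * (u k - w) + star (u k - w) * w) := by
      rw [star_sub, mul_sub, sub_mul, (h k).unitary]; abel
    rw [h1, traceNorm_neg, two_mul]
    refine (hτ.traceNorm_add_le _ _).trans (add_le_add ?_ ?_)
    · exact hτ.traceNorm_mul_le_of_norm_le_one (by rw [norm_star]; exact hu1 k) _
    · refine (hτ.traceNorm_mul_le_of_norm_le_one' hw1 _).trans_eq (hτ.traceNorm_star _)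
  have hww' := hτ.mul_star_eq_one hww
  have hr := hp.conj_unitary hww hww'
  set r : J → A := fun j => star w * p j * w
  let s : ℕ → J → A := fun k j => star (u k) * q k j * u k
  have hs : ∀ k j, IsStarProjection (s k j) := fun k j =>
    ((h k).isPartition.proj j).conj_unitary (hτ.mul_star_eq_one (h k).unitary)
  have hsr : ∀ j, Tendsto (fun k => traceNorm τ (s k j - r j)) atTop (𝓝 0) := by
    intro j
    have hε : Tendsto (fun k : ℕ => ε / 2 ^ k) atTop (𝓝 0) :=
      tendsto_const_nhds.div_atTop (tendsto_pow_atTop_atTop_of_one_lt (by norm_num))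
    have hlim : Tendsto (fun k => 2 * traceNorm τ (u k - w) + ε / 2 ^ k) atTop (𝓝 0) := by
      simpa using (hw.const_mul 2).add hε
    refine squeeze_zero (fun k => traceNorm_nonneg _) (fun k => ?_) hlim
    have h1 : s k j - r j = star (u k) * (q k j * (u k - w)) + star (u k) * (q k j - p j) * w
        + star (u k - w) * (p j * w) := by
      simp only [s, r, star_sub, mul_sub, sub_mul, mul_assoc]; abel
    have hu' : ‖star (u k)‖ ≤ 1 := by rw [norm_star]; exact hu1 k
    have hpw : ‖p j * w‖ ≤ 1 := (norm_mul_le _ _).trans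
      (mul_le_one₀ (IsStarProjection.norm_le _ (hp.proj j)) (norm_nonneg _) hw1)
    rw [h1]
    have h2 := hτ.traceNorm_add_le (star (u k) * (q k j * (u k - w)) +
      star (u k) * (q k j - p j) * w) (star (u k - w) * (p j * w))
    have h3 := hτ.traceNorm_add_le (star (u k) * (q k j * (u k - w)))
      (star (u k) * (q k j - p j) * w)
    have h4 := (hτ.traceNorm_mul_le_of_norm_le_one hu' (q k j * (u k - w))).trans
      (hτ.traceNorm_mul_le_of_norm_le_one
        (IsStarProjection.norm_le _ ((h k).isPartition.proj j)) _)
    have h5 := (hτ.traceNorm_mul_le_of_norm_le_one' hw1 (star (u k) * (q k j - p j))).trans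
      ((hτ.traceNorm_mul_le_of_norm_le_one hu' _).trans ((h k).close j))
    have h6 := (hτ.traceNorm_mul_le_of_norm_le_one' hpw (star (u k - w))).trans_eq
      (hτ.traceNorm_star _)
    linarith
  refine ⟨w, hww, hww', fun n => ?_⟩
  have hPn := (P n).isMinPartition
  choose v hv using fun i => hPn.exists_isColumn hτ i
  have href : ∀ k, n ≤ k → IsRefinement (B n) (P n).proj (P (m k)).proj := fun k hk =>
    hP n (m k) (hk.trans (h k).le)
  have hBle : ∀ k, n ≤ k → B n ≤ B (m k) := fun k hk => hB (hk.trans (h k).le)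
  have hrf : ∀ i j, Commute (r j) ((P n).proj i) := by
    intro i j
    refine hτ.commute_of_tendsto (hsr j) (y := fun _ => (P n).proj i) (by simp)
      (fun k => IsStarProjection.norm_le _ (hs k j))
      (IsStarProjection.norm_le _ (hPn.proj i)) ?_
    filter_upwards [eventually_ge_atTop n] with k hk
    exact ((h k).diag j).commute (P (m k)).isMinPartition.toIsOrthoProj ((href k hk).diag i)
  have hproj : ∀ i j, IsStarProjection (columnMap (v i) (r j)) := fun i j =>
    (hv i).isStarProjection_columnMap hPn (hr.proj j) (hrf i j)
  have hcolumn : ∀ i j, Tendsto (fun k => traceNorm τ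
      (columnMap (v i) (s (k + n) j) - columnMap (v i) (r j))) atTop (𝓝 0) := by
    intro i j
    have hlim := ((tendsto_add_atTop_iff_nat n).mpr (hsr j)).const_mul
      (Fintype.card (P n).idx : ℝ)
    rw [mul_zero] at hlim
    refine squeeze_zero (fun k => traceNorm_nonneg _) (fun k => ?_) hlim
    rw [← columnMap_sub]
    exact (hv i).traceNorm_columnMap_le hPn hτ _
  have hsdiag : ∀ k j, IsDiagonal (P (m (k + n))).proj (s (k + n) j) := fun k j =>
    (h (k + n)).diag j
  have hcdiag : ∀ i j k, IsDiagonal (P (m (k + n))).proj (columnMap (v i) (s (k + n) j)) :=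
    fun i j k => (href _ (Nat.le_add_left n k)).isDiagonal_columnMap hPn
      (P (m (k + n))).isMinPartition (hBle _ (Nat.le_add_left n k)) (hv i) (hsdiag k j)
  have hcomm : ∀ t t' : (P n).idx × J,
      Commute (columnMap (v t.1) (r t.2)) (columnMap (v t'.1) (r t'.2)) := by
    intro t t'
    refine hτ.commute_of_tendsto (hcolumn t.1 t.2) (hcolumn t'.1 t'.2) (fun k => ?_)
      (IsStarProjection.norm_le _ (hproj _ _)) (Eventually.of_forall fun k => ?_)
    · refine IsStarProjection.norm_le _ ((hv t.1).isStarProjection_columnMap hPn (hs _ _) ?_)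
      exact (hsdiag k t.2).commute (P (m (k + n))).isMinPartition.toIsOrthoProj
        ((href _ (Nat.le_add_left n k)).diag t.1)
    · exact (hcdiag _ _ k).commute (P (m (k + n))).isMinPartition.toIsOrthoProj (hcdiag _ _ k)
  have := hfin n
  obtain ⟨K, hK, hBK, hmem, -⟩ := exists_finiteDimensional_adjoin
    (e := fun t : (P n).idx × J => columnMap (v t.1) (r t.2)) (fun t => hproj _ _) hcomm
    (fun t b hb => (hv t.1).columnMap_commute_mem hPn (hrf _ _) hb) Finset.univ
  refine ⟨K, hK, hBK, fun j => ?_⟩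
  have hsum : r j = ∑ i, (P n).proj i * columnMap (v i) (r j) := by
    conv_lhs => rw [← one_mul (r j), ← hPn.sum_eq, Finset.sum_mul]
    exact Finset.sum_congr rfl fun i _ => ((hv i).mul_columnMap hPn (hrf i j)).symm
  change r j ∈ K
  rw [hsum]
  exact sum_mem fun i _ => mul_mem (hBK (hPn.mem i)) (hmem (i, j) (Finset.mem_univ _))

end Limit

section WeakOperator

variable {H : Type*} [NormedAddCommGroup H] [InnerProductSpace ℂ H]

/-- A limit of uniformly Lipschitz functions exists at every point of the closure of the set of
points where it exists. -/
theorem isClosed_setOf_cauchySeq {E F : Type*} [SeminormedAddCommGroup E]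
    [SeminormedAddCommGroup F] {f : ℕ → E → F} {C : ℝ}
    (hf : ∀ n v w, ‖f n v - f n w‖ ≤ C * ‖v - w‖) :
    IsClosed {v | CauchySeq fun n => f n v} := by
  refine isClosed_of_closure_subset fun v hv => ?_
  rw [Set.mem_ofPred_eq, Metric.cauchySeq_iff']
  intro ε hε
  have hC : 0 < |C| + 1 := by positivity
  obtain ⟨w, hw, hvw⟩ := Metric.mem_closure_iff.mp hv (ε / (4 * (|C| + 1))) (by positivity)
  obtain ⟨N, hN⟩ := Metric.cauchySeq_iff'.mp hw (ε / 2) (half_pos hε)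
  refine ⟨N, fun n hn => ?_⟩
  have hle : ∀ n, dist (f n v) (f n w) ≤ ε / 4 := fun n => by
    rw [dist_eq_norm]
    rw [dist_eq_norm, lt_div_iff₀ (by positivity)] at hvw
    have h1 : C * ‖v - w‖ ≤ (|C| + 1) * ‖v - w‖ :=
      mul_le_mul_of_nonneg_right (by linarith [le_abs_self C]) (norm_nonneg _)
    have := hf n v w
    linarith
  have h1 := hle n
  have h2 := hle N
  have h3 := hN n hn
  have h4 := dist_triangle4 (f n v) (f n w) (f N w) (f N v)
  rw [dist_comm (f N w)] at h4
  linarith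

/-- Sequential convergence in the weak operator topology. -/
def WeaklyTendsto (x : ℕ → H →L[ℂ] H) (y : H →L[ℂ] H) : Prop :=
  ∀ ξ η : H, Tendsto (fun n => ⟪ξ, x n η⟫_ℂ) atTop (𝓝 ⟪ξ, y η⟫_ℂ)

theorem norm_inner_apply_le {x : H →L[ℂ] H} (hx : ‖x‖ ≤ 1) (ξ η : H) :
    ‖⟪ξ, x η⟫_ℂ‖ ≤ ‖ξ‖ * ‖η‖ :=
  (norm_inner_le_norm _ _).trans
    (mul_le_mul_of_nonneg_left (x.le_of_opNorm_le_of_le hx le_rfl |>.trans_eq (one_mul _))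
      (norm_nonneg _))

theorem exists_subseq_cauchySeq_inner [TopologicalSpace.SeparableSpace H]
    {x : ℕ → H →L[ℂ] H} (hx : ∀ n, ‖x n‖ ≤ 1) :
    ∃ φ : ℕ → ℕ, StrictMono φ ∧ ∀ ξ η, CauchySeq fun n => ⟪ξ, x (φ n) η⟫_ℂ := by
  let e := TopologicalSpace.denseSeq H
  have he : closure (Set.range e) = Set.univ := (TopologicalSpace.denseRange_denseSeq H).closure_eq
  have hcpt : IsCompact (Set.univ.pi fun t : ℕ × ℕ =>
      Metric.closedBall (0 : ℂ) (‖e t.1‖ * ‖e t.2‖)) :=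
    isCompact_univ_pi fun t => isCompact_closedBall _ _
  obtain ⟨F, -, φ, hφ, hF⟩ := hcpt.tendsto_subseq
    (x := fun n t => ⟪e t.1, x n (e t.2)⟫_ℂ) fun n t _ => by
      simpa using norm_inner_apply_le (hx n) (e t.1) (e t.2)
  have h1 : ∀ i j, CauchySeq fun n => ⟪e i, x (φ n) (e j)⟫_ℂ := fun i j =>
    (tendsto_pi_nhds.mp hF (i, j)).cauchySeq
  have h2 : ∀ i η, CauchySeq fun n => ⟪e i, x (φ n) η⟫_ℂ := fun i η => by
    have hcl := isClosed_setOf_cauchySeq (f := fun n η => ⟪e i, x (φ n) η⟫_ℂ) (C := ‖e i‖)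
      fun n v w => by
        rw [← inner_sub_right, ← map_sub]
        exact norm_inner_apply_le (hx _) _ _
    exact closure_minimal (Set.range_subset_iff.mpr fun j => h1 i j) hcl (he ▸ Set.mem_univ η)
  refine ⟨φ, hφ, fun ξ η => ?_⟩
  have hcl := isClosed_setOf_cauchySeq (f := fun n ξ => ⟪ξ, x (φ n) η⟫_ℂ) (C := ‖η‖)
    fun n v w => by
      rw [← inner_sub_left, mul_comm]
      exact norm_inner_apply_le (hx _) _ _
  exact closure_minimal (Set.range_subset_iff.mpr fun i => h2 i η) hcl (he ▸ Set.mem_univ ξ)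

variable [CompleteSpace H]

/-- The unit ball of the bounded operators is weakly sequentially compact. -/
theorem exists_subseq_weaklyTendsto [TopologicalSpace.SeparableSpace H]
    {x : ℕ → H →L[ℂ] H} (hx : ∀ n, ‖x n‖ ≤ 1) :
    ∃ y : H →L[ℂ] H, ‖y‖ ≤ 1 ∧ ∃ φ : ℕ → ℕ, StrictMono φ ∧
      WeaklyTendsto (fun n => x (φ n)) y := by
  obtain ⟨φ, hφ, hc⟩ := exists_subseq_cauchySeq_inner hx
  choose L hL using fun ξ η => cauchySeq_tendsto_of_complete (hc ξ η)
  let B : H →ₗ⋆[ℂ] H →ₗ[ℂ] ℂ := LinearMap.mk₂'ₛₗ (starRingEnd ℂ) (RingHom.id ℂ) L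
    (fun ξ ξ' η => tendsto_nhds_unique (hL _ _)
      (((hL ξ η).add (hL ξ' η)).congr fun n => (inner_add_left _ _ _).symm))
    (fun c ξ η => tendsto_nhds_unique (hL _ _)
      (((hL ξ η).const_mul _).congr fun n => (inner_smul_left _ _ _).symm))
    (fun ξ η η' => tendsto_nhds_unique (hL _ _)
      (((hL ξ η).add (hL ξ η')).congr fun n => by rw [map_add, inner_add_right]))
    (fun c ξ η => tendsto_nhds_unique (hL _ _)
      (((hL ξ η).const_mul c).congr fun n => by rw [map_smul, inner_smul_right]))
  have hB : ∀ ξ η, ‖B ξ η‖ ≤ 1 * ‖ξ‖ * ‖η‖ := fun ξ η => by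
    rw [one_mul]
    exact le_of_tendsto' (hL ξ η).norm fun n => norm_inner_apply_le (hx _) _ _
  let z := InnerProductSpace.continuousLinearMapOfBilin (B.mkContinuous₂ 1 hB)
  have hz : ∀ ξ η, ⟪ξ, star z η⟫_ℂ = L ξ η := fun ξ η => by
    rw [ContinuousLinearMap.star_eq_adjoint, ContinuousLinearMap.adjoint_inner_right]
    exact InnerProductSpace.continuousLinearMapOfBilin_apply _ _ _
  refine ⟨star z, ?_, φ, hφ, fun ξ η => by rw [hz]; exact hL ξ η⟩
  refine ContinuousLinearMap.opNorm_le_bound _ zero_le_one fun η => ?_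
  have h1 : ‖star z η‖ * ‖star z η‖ ≤ ‖star z η‖ * ‖η‖ := by
    have h2 := hB (star z η) η
    have h3 : B (star z η) η = ⟪star z η, star z η⟫_ℂ := (hz _ _).symm
    rw [h3, one_mul, inner_self_eq_norm_sq_to_K] at h2
    simpa [sq] using h2
  rcases (norm_nonneg (star z η)).eq_or_lt with h | h
  · rw [← h]; positivity
  · rw [one_mul]; exact le_of_mul_le_mul_left h1 h

theorem WeaklyTendsto.mem {M : VonNeumannAlgebra H} {x : ℕ → H →L[ℂ] H} {y : H →L[ℂ] H}
    (h : WeaklyTendsto x y) (hx : ∀ n, x n ∈ M) : y ∈ M := by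
  rw [← M.commutant_commutant, VonNeumannAlgebra.mem_commutant_iff]
  intro g hg
  rw [VonNeumannAlgebra.mem_commutant_iff] at hg
  refine ContinuousLinearMap.ext fun η => ext_inner_left ℂ fun ξ => ?_
  have h1 := h (star g ξ) η
  have h2 := h ξ (g η)
  refine tendsto_nhds_unique (f := fun n => ⟪ξ, g (x n η)⟫_ℂ) ?_ (h2.congr fun n => ?_)
  · simpa only [ContinuousLinearMap.star_eq_adjoint, ContinuousLinearMap.adjoint_inner_left,
      mul_apply_eq_comp] using h1
  · exact congrArg (fun T : H →L[ℂ] H => ⟪ξ, T η⟫_ℂ) (hg (x n) (hx n))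

theorem WeaklyTendsto.smul {x : ℕ → H →L[ℂ] H} {y : H →L[ℂ] H} (h : WeaklyTendsto x y) (c : ℂ) :
    WeaklyTendsto (fun n => c • x n) (c • y) := fun ξ η => by
  simpa only [smul_apply, inner_smul_right] using (h ξ η).const_mul c

theorem WeaklyTendsto.const_mul {x : ℕ → H →L[ℂ] H} {y : H →L[ℂ] H} (h : WeaklyTendsto x y)
    (a : H →L[ℂ] H) : WeaklyTendsto (fun n => a * x n) (a * y) := fun ξ η => by
  simpa only [mul_apply_eq_comp, ContinuousLinearMap.star_eq_adjoint,
    ContinuousLinearMap.adjoint_inner_left] using h (star a ξ) η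

theorem WeaklyTendsto.const_sub {x : ℕ → H →L[ℂ] H} {y : H →L[ℂ] H} (h : WeaklyTendsto x y)
    (a : H →L[ℂ] H) : WeaklyTendsto (fun n => a - x n) (a - y) := fun ξ η => by
  simpa only [sub_apply, inner_sub_right] using (h ξ η).const_sub _

/-- Von Neumann algebras are norm closed. -/
theorem VonNeumannAlgebra.isClosed_toStarSubalgebra (M : VonNeumannAlgebra H) :
    IsClosed (M.toStarSubalgebra : Set (H →L[ℂ] H)) := by
  refine IsSeqClosed.isClosed fun x y hx hxy => ?_
  refine WeaklyTendsto.mem (M := M) (x := x) (fun ξ η => ?_) hx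
  exact tendsto_const_nhds.inner (((ContinuousLinearMap.apply ℂ H η).continuous.tendsto y).comp hxy)

end WeakOperator

section NormalTrace

variable {H : Type*} [NormedAddCommGroup H] [InnerProductSpace ℂ H] [CompleteSpace H]
variable {M : VonNeumannAlgebra H} {τ : M.toStarSubalgebra →ₗ[ℂ] ℂ}

noncomputable instance (M : VonNeumannAlgebra H) : CStarAlgebra M.toStarSubalgebra :=
  StarSubalgebra.cstarAlgebra _ (h_closed := M.isClosed_toStarSubalgebra)

/-- Weak sequential continuity on the unit ball. -/
def IsBallNormal (τ : M.toStarSubalgebra →ₗ[ℂ] ℂ) : Prop :=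
  ∀ (x : ℕ → M.toStarSubalgebra) (y : M.toStarSubalgebra), (∀ n, ‖x n‖ ≤ 1) →
    WeaklyTendsto (fun n => (x n : H →L[ℂ] H)) y → Tendsto (fun n => τ (x n)) atTop (𝓝 (τ y))

theorem IsBallNormal.tendsto (hn : IsBallNormal τ) {x : ℕ → M.toStarSubalgebra}
    {y : M.toStarSubalgebra} {C : ℝ} (hx : ∀ n, ‖x n‖ ≤ C)
    (h : WeaklyTendsto (fun n => (x n : H →L[ℂ] H)) y) :
    Tendsto (fun n => τ (x n)) atTop (𝓝 (τ y)) := by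
  have hC : 0 < |C| + 1 := by positivity
  have hc : ((|C| + 1 : ℝ) : ℂ) ≠ 0 := by exact_mod_cast hC.ne'
  set c : ℂ := ((|C| + 1 : ℝ) : ℂ)
  have h1 : Tendsto (fun n => τ (c⁻¹ • x n)) atTop (𝓝 (τ (c⁻¹ • y))) := by
    refine hn (fun n => c⁻¹ • x n) (c⁻¹ • y) (fun n => ?_) (h.smul c⁻¹)
    rw [norm_smul, norm_inv, inv_mul_le_iff₀ (norm_pos_iff.mpr hc), mul_one, Complex.norm_real,
      Real.norm_of_nonneg hC.le]
    linarith [hx n, le_abs_self C]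
  simpa [hc] using h1.const_mul c

/-- The trace norm is weakly lower semicontinuous on bounded sets. -/
theorem IsFaithfulTrace.traceNorm_le_of_weaklyTendsto (hτ : IsFaithfulTrace τ)
    (hn : IsBallNormal τ) {x : ℕ → M.toStarSubalgebra} {y : M.toStarSubalgebra} {C c : ℝ}
    (hx : ∀ n, ‖x n‖ ≤ C) (h : WeaklyTendsto (fun n => (x n : H →L[ℂ] H)) y)
    (hc : ∀ᶠ n in atTop, traceNorm τ (x n) ≤ c) : traceNorm τ y ≤ c := by
  have hc0 : 0 ≤ c := by
    obtain ⟨n, hn⟩ := hc.exists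
    exact (traceNorm_nonneg _).trans hn
  have hlim : Tendsto (fun n => (τ (star y * x n)).re) atTop (𝓝 (traceNorm τ y ^ 2)) := by
    rw [hτ.traceNorm_sq]
    refine (Complex.continuous_re.tendsto _).comp
      (hn.tendsto (C := ‖star y‖ * C) (fun n => ?_) (h.const_mul _))
    exact (norm_mul_le _ _).trans (mul_le_mul_of_nonneg_left (hx n) (norm_nonneg _))
  have hle : traceNorm τ y ^ 2 ≤ (c ^ 2 + traceNorm τ y ^ 2) / 2 := by
    refine le_of_tendsto hlim (hc.mono fun n hn => ?_)
    have h1 := hτ.nonneg (x n - y)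
    have h2 : τ (star (x n) * y) = star (τ (star y * x n)) := by
      rw [← hτ.star_apply, star_mul, star_star]
    have h3 : traceNorm τ (x n) ^ 2 ≤ c ^ 2 := pow_le_pow_left₀ (traceNorm_nonneg _) hn 2
    rw [star_sub, sub_mul, mul_sub, mul_sub, map_sub, map_sub, map_sub, h2] at h1
    rw [hτ.traceNorm_sq] at h3 ⊢
    simp only [Complex.sub_re, RCLike.star_def, Complex.conj_re] at h1
    linarith
  exact le_of_sq_le_sq (by linarith) hc0

/-- The unit ball of a von Neumann algebra is complete for the trace norm. -/
theorem IsFaithfulTrace.exists_tendsto_traceNorm [TopologicalSpace.SeparableSpace H]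
    (hτ : IsFaithfulTrace τ) (hn : IsBallNormal τ) (x : ℕ → M.toStarSubalgebra)
    (hx : ∀ n, ‖x n‖ ≤ 1) (hC : ∃ C, ∀ n, traceNorm τ (x (n + 1) - x n) ≤ C / 2 ^ n) :
    ∃ y, ‖y‖ ≤ 1 ∧ Tendsto (fun n => traceNorm τ (x n - y)) atTop (𝓝 0) := by
  obtain ⟨C, hC⟩ := hC
  obtain ⟨y, hy, φ, hφ, h⟩ := exists_subseq_weaklyTendsto (x := fun n => (x n : H →L[ℂ] H)) hx
  have hyM : y ∈ M.toStarSubalgebra := h.mem (M := M) fun n => (x (φ n)).2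
  have hC0 : 0 ≤ C := by simpa using (traceNorm_nonneg _).trans (hC 0)
  have htail : ∀ n k, traceNorm τ (x n - x (n + k)) ≤ 2 * C / 2 ^ n - 2 * C / 2 ^ (n + k) := by
    intro n k
    induction k with
    | zero => simp
    | succ k ih =>
      have h1 := hτ.traceNorm_sub_le_sub_add_sub (x n) (x (n + k)) (x (n + (k + 1)))
      have h2 := hC (n + k)
      rw [traceNorm_sub_comm] at h2
      have h3 : 2 * C / 2 ^ (n + (k + 1)) = C / 2 ^ (n + k) := by
        rw [← add_assoc, pow_succ]; field_simp
      have h4 : 2 * C / 2 ^ (n + k) = C / 2 ^ (n + k) + C / 2 ^ (n + k) := by ring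
      rw [h3]
      rw [h4] at ih
      rw [← add_assoc] at h1 ⊢
      linarith
  refine ⟨⟨y, hyM⟩, hy, ?_⟩
  have hlim : Tendsto (fun n : ℕ => 2 * C / 2 ^ n) atTop (𝓝 0) :=
    tendsto_const_nhds.div_atTop (tendsto_pow_atTop_atTop_of_one_lt (by norm_num))
  refine squeeze_zero (fun n => traceNorm_nonneg _) (fun n => ?_) hlim
  refine hτ.traceNorm_le_of_weaklyTendsto hn (x := fun m => x n - x (φ m)) (C := 2)
    (fun m => ?_) (h.const_sub (x n : H →L[ℂ] H)) ?_
  · exact (norm_sub_le _ _).trans (by linarith [hx n, hx (φ m)])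
  · filter_upwards [eventually_ge_atTop n] with m hm
    obtain ⟨k, hk⟩ := Nat.exists_eq_add_of_le (hm.trans (hφ.id_le m))
    rw [hk]
    exact (htail n k).trans (sub_le_self _ (by positivity))

end NormalTrace

section SelfAdjoint

variable {H : Type*} [NormedAddCommGroup H] [InnerProductSpace ℂ H] [CompleteSpace H]
variable {M : VonNeumannAlgebra H} {B : ℕ → StarSubalgebra ℂ M.toStarSubalgebra}

/-- The union of the algebras `B n` is dense in `M` for the strong operator topology. -/
def IsStronglyDense (B : ℕ → StarSubalgebra ℂ M.toStarSubalgebra) : Prop :=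
  ∀ (x : M.toStarSubalgebra) (s : Finset H) (ε : ℝ), 0 < ε →
    ∃ n, ∃ a ∈ B n, ∀ ξ ∈ s, ‖((a : H →L[ℂ] H) - x) ξ‖ < ε

/-- The values on a finite family of vectors of the self-adjoint elements of an increasing union
of algebras. -/
def selfAdjointValues {ι : Type*} (hB : Monotone B) (ξ : ι → H) :
    Submodule ℝ (PiLp 2 fun _ : ι => H) where
  carrier := {v | ∃ n, ∃ b ∈ B n, IsSelfAdjoint b ∧ ∀ i, v i = (b : H →L[ℂ] H) (ξ i)}
  zero_mem' := ⟨0, 0, zero_mem _, IsSelfAdjoint.zero _, fun i => by simp⟩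
  add_mem' := by
    rintro v w ⟨n, b, hb, hbs, hv⟩ ⟨m, c, hc, hcs, hw⟩
    exact ⟨max n m, b + c, add_mem (hB (le_max_left _ _) hb) (hB (le_max_right _ _) hc),
      hbs.add hcs, fun i => by simp [hv, hw]⟩
  smul_mem' := by
    rintro r v ⟨n, b, hb, hbs, hv⟩
    refine ⟨n, (r : ℂ) • b, SMulMemClass.smul_mem _ hb, ?_, fun i => by simp [hv]⟩
    rw [isSelfAdjoint_iff, star_smul, hbs.star_eq, RCLike.star_def, Complex.conj_ofReal]

/-- Self-adjoint operators are strong limits of self-adjoint elements. -/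
theorem IsStronglyDense.exists_isSelfAdjoint (hd : IsStronglyDense B) (hB : Monotone B)
    {d : M.toStarSubalgebra} (hds : IsSelfAdjoint d) (s : Finset H) {ε : ℝ} (hε : 0 < ε) :
    ∃ n, ∃ b ∈ B n, IsSelfAdjoint b ∧ ∀ ξ ∈ s, ‖((b : H →L[ℂ] H) - d) ξ‖ < ε := by
  let _ : InnerProductSpace ℝ H := InnerProductSpace.complexToReal
  let v : PiLp 2 fun _ : s => H := WithLp.toLp 2 fun ξ => (d : H →L[ℂ] H) ξ
  let W : Submodule ℝ (PiLp 2 fun _ : s => H) := selfAdjointValues hB fun ξ : s => (ξ : H)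
  suffices hv : v ∈ W.topologicalClosure by
    obtain ⟨w, ⟨n, b, hb, hbs, hw⟩, hvw⟩ := Metric.mem_closure_iff.mp hv ε hε
    refine ⟨n, b, hb, hbs, fun ξ hξ => ?_⟩
    rw [dist_comm, dist_eq_norm] at hvw
    refine lt_of_le_of_lt ?_ hvw
    have := PiLp.norm_apply_le (w - v) ⟨ξ, hξ⟩
    rwa [PiLp.sub_apply, hw] at this
  rw [← Submodule.orthogonal_orthogonal_eq_closure, Submodule.mem_orthogonal]
  intro η hη
  rw [Submodule.mem_orthogonal'] at hη
  let K : ℝ := ∑ i : s, (‖η i‖ + ‖(i : H)‖)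
  have hle : ∀ δ > 0, ‖⟪η, v⟫_ℝ‖ ≤ δ * K := by
    intro δ hδ
    classical
    obtain ⟨n, a, ha, hclose⟩ := hd d (s ∪ Finset.univ.image fun i : s => η i) δ hδ
    let b : M.toStarSubalgebra := (2⁻¹ : ℂ) • (a + star a)
    let w : PiLp 2 fun _ : s => H := WithLp.toLp 2 fun ξ => (b : H →L[ℂ] H) ξ
    have hw : w ∈ W := by
      refine ⟨n, b, SMulMemClass.smul_mem _ (add_mem ha (star_mem ha)), ?_, fun i => rfl⟩
      simp [b, isSelfAdjoint_iff, add_comm]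
    have h1 : ⟪η, v⟫_ℝ = -⟪η, w - v⟫_ℝ := by rw [inner_sub_right, hη w hw]; simp
    rw [h1, norm_neg, PiLp.inner_apply, Finset.mul_sum]
    refine (norm_sum_le _ _).trans (Finset.sum_le_sum fun i _ => ?_)
    have h2 : (w - v) i = (2⁻¹ : ℂ) • (((a : H →L[ℂ] H) - d) i + star ((a : H →L[ℂ] H) - d) i) := by
      have : star (d : H →L[ℂ] H) = d := congrArg Subtype.val hds.star_eq
      rw [star_sub, this]
      simp only [w, v, b, PiLp.sub_apply, sub_apply, AddMemClass.coe_add, StarMemClass.coe_star,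
        SetLike.val_smul, smul_apply, add_apply]
      module
    have h3 : ‖⟪η i, star ((a : H →L[ℂ] H) - d) i⟫_ℂ‖ ≤
        ‖((a : H →L[ℂ] H) - d) (η i)‖ * ‖(i : H)‖ := by
      rw [ContinuousLinearMap.star_eq_adjoint, ContinuousLinearMap.adjoint_inner_right]
      exact norm_inner_le_norm _ _
    have h4 := norm_inner_le_norm (𝕜 := ℂ) (η i) (((a : H →L[ℂ] H) - d) i)
    have h5 := (hclose i (Finset.mem_union_left _ i.2)).le
    have h6 := (hclose (η i) (Finset.mem_union_right _
      (Finset.mem_image_of_mem _ (Finset.mem_univ i)))).le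
    have h7 : ‖⟪η i, (w - v) i⟫_ℝ‖ ≤ ‖⟪η i, (w - v) i⟫_ℂ‖ := Complex.abs_re_le_norm _
    have h8 : ‖⟪η i, (w - v) i⟫_ℂ‖ ≤ ‖⟪η i, ((a : H →L[ℂ] H) - d) i⟫_ℂ‖ +
        ‖⟪η i, star ((a : H →L[ℂ] H) - d) i⟫_ℂ‖ := by
      rw [h2, inner_smul_right, inner_add_right, norm_mul]
      have := norm_add_le ⟪η i, ((a : H →L[ℂ] H) - d) i⟫_ℂ ⟪η i, star ((a : H →L[ℂ] H) - d) i⟫_ℂ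
      have h0 : ‖(2⁻¹ : ℂ)‖ ≤ 1 := by norm_num
      exact (mul_le_of_le_one_left (norm_nonneg _) h0).trans this
    have h9 := mul_le_mul_of_nonneg_left h5 (norm_nonneg (η i))
    have h10 := mul_le_mul_of_nonneg_right h6 (norm_nonneg (i : H))
    linarith
  have hlim : Tendsto (fun δ : ℝ => δ * K) (𝓝[>] 0) (𝓝 0) := by
    have : Tendsto (fun δ : ℝ => δ * K) (𝓝 0) (𝓝 (0 * K)) := tendsto_id.mul_const K
    rw [zero_mul] at this
    exact this.mono_left nhdsWithin_le_nhds
  exact norm_le_zero_iff.mp (ge_of_tendsto hlim (eventually_mem_nhdsWithin.mono hle))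

end SelfAdjoint

section Resolvent

variable {A ι : Type*} [Fintype ι] [CStarAlgebra A]

/-- The resolvent at `-i` of `∑ i, l i • e i`. -/
noncomputable def resolventSum (e : ι → A) (l : ι → ℝ) : A :=
  ∑ i, ((l i : ℂ) + Complex.I)⁻¹ • e i

theorem ofReal_add_I_ne_zero (r : ℝ) : (r : ℂ) + Complex.I ≠ 0 := fun h => by
  simpa using congrArg Complex.im h

theorem IsPartition.sum_add_I {e : ι → A} (he : IsPartition e) (l : ι → ℝ) :
    ∑ i, (l i : ℂ) • e i + Complex.I • 1 = ∑ i, ((l i : ℂ) + Complex.I) • e i := by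
  simp only [add_smul, Finset.sum_add_distrib, ← Finset.smul_sum, he.sum_eq]

theorem IsPartition.mul_resolventSum {e : ι → A} (he : IsPartition e) (l : ι → ℝ) :
    (∑ i, (l i : ℂ) • e i + Complex.I • 1) * resolventSum e l = 1 := by
  rw [he.sum_add_I, resolventSum, he.sum_smul_mul_sum_smul]
  simp [ofReal_add_I_ne_zero, he.sum_eq]

theorem IsPartition.resolventSum_mul {e : ι → A} (he : IsPartition e) (l : ι → ℝ) :
    resolventSum e l * (∑ i, (l i : ℂ) • e i + Complex.I • 1) = 1 := by
  rw [he.sum_add_I, resolventSum, he.sum_smul_mul_sum_smul]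
  simp [ofReal_add_I_ne_zero, he.sum_eq]

theorem IsPartition.isSelfAdjoint_sum {e : ι → A} (he : IsPartition e) (l : ι → ℝ) :
    IsSelfAdjoint (∑ i, (l i : ℂ) • e i) := by
  rw [isSelfAdjoint_iff, he.star_sum_smul]
  simp

theorem IsPartition.traceNorm_sum_smul_mul_le {τ : A →ₗ[ℂ] ℂ} (hτ : IsFaithfulTrace τ) {e : ι → A}
    (he : IsPartition e) {c : ι → ℂ} {C : ℝ} (hC : 0 ≤ C) (hc : ∀ i, ‖c i‖ ≤ C) (x : A) :
    traceNorm τ ((∑ i, c i • e i) * x) ≤ C * traceNorm τ x := by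
  have key : ∀ c : ι → ℂ, traceNorm τ ((∑ i, c i • e i) * x) ^ 2 =
      ∑ i, ‖c i‖ ^ 2 * traceNorm τ (e i * x) ^ 2 := by
    intro c
    have h1 : star ((∑ i, c i • e i) * x) * ((∑ i, c i • e i) * x) =
        ∑ i, ((‖c i‖ ^ 2 : ℝ) : ℂ) • (star (e i * x) * (e i * x)) := by
      rw [star_mul, mul_assoc, ← mul_assoc _ _ x, he.star_sum_smul, he.sum_smul_mul_sum_smul,
        Finset.sum_mul, Finset.mul_sum]
      refine Finset.sum_congr rfl fun i _ => ?_
      rw [star_mul, mul_assoc (star x), ← mul_assoc (star (e i)), (he.proj i).star_eq,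
        (he.proj i).mul_self, smul_mul_assoc, mul_smul_comm, RCLike.star_def, Complex.conj_mul']
      push_cast
      rfl
    rw [hτ.traceNorm_sq, h1, map_sum, Complex.re_sum]
    refine Finset.sum_congr rfl fun i _ => ?_
    rw [map_smul, smul_eq_mul, Complex.re_ofReal_mul, hτ.traceNorm_sq]
  refine le_of_sq_le_sq ?_ (mul_nonneg hC (traceNorm_nonneg _))
  have h1 := key 1
  simp only [Pi.one_apply, one_smul, he.sum_eq, one_mul, norm_one, one_pow] at h1
  rw [mul_pow, key, h1, Finset.mul_sum]
  gcongr with i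
  exact hc i

/-- Grouping the members of a partition according to their labels. -/
theorem IsPartition.sum_fiber {J : Type*} [Fintype J] [DecidableEq J] {e : ι → A}
    (he : IsPartition e) (g : ι → J) : IsPartition fun j => ∑ i with g i = j, e i := by
  classical
  refine ⟨⟨fun j => he.isStarProjection_sum _, fun j k hjk => ?_⟩, ?_⟩
  · rw [Finset.sum_mul_sum]
    refine Finset.sum_eq_zero fun i hi => Finset.sum_eq_zero fun i' hi' => he.ortho _ _ ?_
    rintro rfl
    exact hjk ((Finset.mem_filter.mp hi).2.symm.trans (Finset.mem_filter.mp hi').2)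
  · rw [← he.sum_eq, Finset.sum_fiberwise]

/-- Partitions with close off-diagonal products are close. -/
theorem IsPartition.traceNorm_sub_le {J : Type*} [Fintype J] {τ : A →ₗ[ℂ] ℂ}
    (hτ : IsFaithfulTrace τ) {q p : J → A} (hq : IsPartition q) (hp : IsPartition p) {δ : ℝ}
    (hδ : 0 ≤ δ) (h : ∀ j k, j ≠ k → traceNorm τ (q j * p k) ≤ δ) (j : J) :
    traceNorm τ (q j - p j) ≤ 2 * Fintype.card J * δ := by
  have h1 : q j - p j = ∑ k, (q j * p k - q k * p j) := by
    rw [Finset.sum_sub_distrib, ← Finset.mul_sum, ← Finset.sum_mul, hq.sum_eq, hp.sum_eq, mul_one,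
      one_mul]
  rw [h1]
  refine (hτ.traceNorm_sum_le _ _).trans ?_
  have h2 : 2 * Fintype.card J * δ = ∑ _k : J, 2 * δ := by simp; ring
  rw [h2]
  refine Finset.sum_le_sum fun k _ => ?_
  rcases eq_or_ne j k with rfl | hjk
  · simpa [traceNorm_zero] using hδ
  · refine (hτ.traceNorm_sub_le _ _).trans ?_
    linarith [h j k hjk, h k j hjk.symm]

/-- If the resolvents of two self-adjoint elements with finite spectrum are close, then so are
their suitably grouped spectral partitions. -/
theorem IsPartition.exists_fiber_close {J : Type*} [Fintype J] [Nonempty J] [DecidableEq J]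
    {τ : A →ₗ[ℂ] ℂ} (hτ : IsFaithfulTrace τ) {p : J → A} (hp : IsPartition p) {m : J → ℝ}
    {c : ℝ} (hc : 0 < c) (hm : ∀ j k, j ≠ k →
      2 * c ≤ ‖((m j : ℂ) + Complex.I)⁻¹ - ((m k : ℂ) + Complex.I)⁻¹‖)
    {e : ι → A} (he : IsPartition e) (l : ι → ℝ) :
    ∃ g : ι → J, ∀ j, traceNorm τ (∑ i with g i = j, e i - p j) ≤
      2 * Fintype.card J * (c⁻¹ * traceNorm τ (resolventSum e l - resolventSum p m)) := by
  let r : ι → ℂ := fun i => ((l i : ℂ) + Complex.I)⁻¹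
  let s : J → ℂ := fun j => ((m j : ℂ) + Complex.I)⁻¹
  choose g hg using fun i => Finite.exists_min fun j => ‖r i - s j‖
  have hfar : ∀ i j, g i ≠ j → c ≤ ‖r i - s j‖ := by
    intro i j hij
    have h1 : 2 * c ≤ ‖s (g i) - s j‖ := hm _ _ hij
    have h2 := norm_sub_le_norm_sub_add_norm_sub (s (g i)) (r i) (s j)
    rw [norm_sub_rev (s (g i)) (r i)] at h2
    linarith [hg i j]
  refine ⟨g, (he.sum_fiber g).traceNorm_sub_le hτ hp
    (mul_nonneg (inv_nonneg.mpr hc.le) (traceNorm_nonneg _)) fun j k hjk => ?_⟩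
  set X := resolventSum e l - resolventSum p m
  have hX : ∀ i, e i * (X * p k) = (r i - s k) • (e i * p k) := by
    intro i
    have h1 : e i * resolventSum e l = r i • e i := he.mul_sum_smul r i
    have h2 : resolventSum p m * p k = s k • p k := hp.sum_smul_mul s k
    rw [sub_mul, mul_sub, ← mul_assoc, h1, h2, sub_smul, smul_mul_assoc, mul_smul_comm]
  have hfac : (∑ i with g i = j, e i) * p k =
      (∑ i, (if g i = j then (r i - s k)⁻¹ else 0) • e i) * (X * p k) := by
    rw [Finset.sum_mul, Finset.sum_mul, Finset.sum_filter]
    refine Finset.sum_congr rfl fun i _ => ?_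
    split_ifs with hi
    · have h0 : r i - s k ≠ 0 := norm_pos_iff.mp (hc.trans_le (hfar i k (hi.trans_ne hjk)))
      rw [smul_mul_assoc, hX, smul_smul, inv_mul_cancel₀ h0, one_smul]
    · simp
  rw [hfac]
  refine (he.traceNorm_sum_smul_mul_le hτ (inv_nonneg.mpr hc.le) (fun i => ?_) _).trans
    (mul_le_mul_of_nonneg_left
      (hτ.traceNorm_mul_le_of_norm_le_one' (IsStarProjection.norm_le _ (hp.proj k)) _)
      (inv_nonneg.mpr hc.le))
  split_ifs with hi
  · rw [norm_inv]
    exact inv_anti₀ hc (hfar i k (hi.trans_ne hjk))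
  · simpa using hc.le

theorem exists_separated_labels (J : Type*) [Fintype J] : ∃ (m : J → ℝ) (c : ℝ), 0 < c ∧
    ∀ j k, j ≠ k → 2 * c ≤ ‖((m j : ℂ) + Complex.I)⁻¹ - ((m k : ℂ) + Complex.I)⁻¹‖ := by
  let m : J → ℝ := fun j => (Fintype.equivFin J j : ℕ)
  have hm : Function.Injective fun j => ((m j : ℂ) + Complex.I)⁻¹ := by
    intro j k h
    have h1 : (m j : ℂ) = m k := by simpa using h
    have h2 : m j = m k := by exact_mod_cast h1
    have h3 : (Fintype.equivFin J j : ℕ) = Fintype.equivFin J k :=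
      Nat.cast_injective (R := ℝ) h2
    exact (Fintype.equivFin J).injective (Fin.ext h3)
  let T := {t : J × J // t.1 ≠ t.2}
  rcases isEmpty_or_nonempty T with hT | hT
  · exact ⟨m, 1, one_pos, fun j k hjk => (hT.elim ⟨(j, k), hjk⟩)⟩
  obtain ⟨t, ht⟩ := Finite.exists_min fun t : T =>
    ‖((m t.1.1 : ℂ) + Complex.I)⁻¹ - ((m t.1.2 : ℂ) + Complex.I)⁻¹‖
  refine ⟨m, ‖((m t.1.1 : ℂ) + Complex.I)⁻¹ - ((m t.1.2 : ℂ) + Complex.I)⁻¹‖ / 2, ?_,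
    fun j k hjk => ?_⟩
  · exact half_pos (norm_pos_iff.mpr (sub_ne_zero.mpr fun h => t.2 (hm h)))
  · rw [mul_div_cancel₀ _ two_ne_zero]
    exact ht ⟨(j, k), hjk⟩

end Resolvent

section StrongApproximation

variable {H : Type*} [NormedAddCommGroup H] [InnerProductSpace ℂ H] [CompleteSpace H]
variable {M : VonNeumannAlgebra H} {B : ℕ → StarSubalgebra ℂ M.toStarSubalgebra}
variable {τ : M.toStarSubalgebra →ₗ[ℂ] ℂ}

theorem norm_le_norm_add_I_smul {b : H →L[ℂ] H} (hb : IsSelfAdjoint b) (ξ : H) :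
    ‖ξ‖ ≤ ‖(b + Complex.I • 1) ξ‖ := by
  have h1 : (⟪b ξ, Complex.I • ξ⟫_ℂ).re = 0 := by
    have h2 : (starRingEnd ℂ) ⟪b ξ, ξ⟫_ℂ = ⟪b ξ, ξ⟫_ℂ := by
      rw [inner_conj_symm]
      conv_lhs => rw [← hb.star_eq]
      rw [ContinuousLinearMap.star_eq_adjoint, ContinuousLinearMap.adjoint_inner_right]
    rw [inner_smul_right, Complex.I_mul_re, Complex.conj_eq_iff_im.mp h2, neg_zero]
  have h3 := norm_add_sq (𝕜 := ℂ) (b ξ) (Complex.I • ξ)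
  rw [RCLike.re_eq_complex_re, h1, norm_smul, Complex.norm_I, one_mul] at h3
  refine le_of_sq_le_sq ?_ (norm_nonneg _)
  have h4 : (b + Complex.I • 1) ξ = b ξ + Complex.I • ξ := by simp
  rw [h4, h3]
  nlinarith [sq_nonneg ‖b ξ‖]

theorem norm_resolventSum_le {ι : Type*} [Fintype ι] {e : ι → M.toStarSubalgebra}
    (he : IsPartition e) (l : ι → ℝ) : ‖resolventSum e l‖ ≤ 1 := by
  refine ContinuousLinearMap.opNorm_le_bound _ zero_le_one fun ξ => ?_
  have hsa : IsSelfAdjoint ((∑ i, (l i : ℂ) • e i : M.toStarSubalgebra) : H →L[ℂ] H) :=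
    congrArg Subtype.val (he.isSelfAdjoint_sum l)
  have h1 : (((∑ i, (l i : ℂ) • e i : M.toStarSubalgebra) : H →L[ℂ] H) + Complex.I • 1) *
      ((resolventSum e l : M.toStarSubalgebra) : H →L[ℂ] H) = 1 :=
    congrArg Subtype.val (he.mul_resolventSum l)
  refine (norm_le_norm_add_I_smul hsa _).trans_eq ?_
  rw [one_mul]
  exact congrArg (fun T : H →L[ℂ] H => ‖T ξ‖) h1

/-- On bounded sets, strong convergence implies convergence in the trace norm. -/
theorem IsBallNormal.tendsto_traceNorm_of_strong (hn : IsBallNormal τ)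
    {x : ℕ → M.toStarSubalgebra} {C : ℝ} (hx : ∀ n, ‖x n‖ ≤ C)
    (h : ∀ ξ, Tendsto (fun n => (x n : H →L[ℂ] H) ξ) atTop (𝓝 0)) :
    Tendsto (fun n => traceNorm τ (x n)) atTop (𝓝 0) := by
  have hC : 0 ≤ C := (norm_nonneg _).trans (hx 0)
  have h1 : Tendsto (fun n => τ (star (x n) * x n)) atTop (𝓝 (τ 0)) := by
    refine hn.tendsto (C := C * C) (fun n => ?_) fun ξ η => ?_
    · refine (norm_mul_le _ _).trans ?_
      rw [norm_star]
      exact mul_le_mul (hx n) (hx n) (norm_nonneg _) hC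
    · have h2 : Tendsto (fun n => ⟪(x n : H →L[ℂ] H) ξ, (x n : H →L[ℂ] H) η⟫_ℂ) atTop
          (𝓝 ⟪(0 : H), (0 : H)⟫_ℂ) := (h ξ).inner (h η)
      simp only [inner_zero_right] at h2
      simpa [ContinuousLinearMap.star_eq_adjoint, ContinuousLinearMap.adjoint_inner_right] using h2
  have h3 := ((Real.continuous_sqrt.comp Complex.continuous_re).tendsto _).comp h1
  simpa [traceNorm, Function.comp_def] using h3

theorem tendsto_zero_of_dense {x : ℕ → H →L[ℂ] H} {C : ℝ} (hx : ∀ n, ‖x n‖ ≤ C) {e : ℕ → H}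
    (he : DenseRange e) (h : ∀ i, Tendsto (fun n => x n (e i)) atTop (𝓝 0)) (ξ : H) :
    Tendsto (fun n => x n ξ) atTop (𝓝 0) := by
  rw [Metric.tendsto_atTop]
  intro ε hε
  have hC : 0 ≤ C := (norm_nonneg _).trans (hx 0)
  obtain ⟨i, hi⟩ := Metric.denseRange_iff.mp he ξ (ε / (2 * (C + 1))) (by positivity)
  obtain ⟨N, hN⟩ := Metric.tendsto_atTop.mp (h i) (ε / 2) (half_pos hε)
  refine ⟨N, fun n hn => ?_⟩
  have h1 := hN n hn
  rw [dist_zero_right] at h1 ⊢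
  rw [dist_eq_norm, lt_div_iff₀ (by positivity)] at hi
  have h2 : x n ξ = x n (ξ - e i) + x n (e i) := by rw [map_sub, sub_add_cancel]
  have h3 := (x n).le_of_opNorm_le (hx n) (ξ - e i)
  have h4 := norm_add_le (x n (ξ - e i)) (x n (e i))
  rw [← h2] at h4
  nlinarith [norm_nonneg (ξ - e i)]

/-- One step of the approximation of the partition `p`, controlled by a contraction `r` close to
the resolvent of `∑ j, m j • p j` on a finite set of vectors. -/
theorem IsStronglyDense.exists_isPartition_le {J : Type*} [Fintype J] [Nonempty J]
    (hτ : IsFaithfulTrace τ) (hd : IsStronglyDense B) (hB : Monotone B)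
    (hfin : ∀ n, FiniteDimensional ℂ (B n)) {p : J → M.toStarSubalgebra} (hp : IsPartition p)
    {m : J → ℝ} {c : ℝ} (hc : 0 < c) (hm : ∀ j k, j ≠ k →
      2 * c ≤ ‖((m j : ℂ) + Complex.I)⁻¹ - ((m k : ℂ) + Complex.I)⁻¹‖)
    (s : Finset H) {ε : ℝ} (hε : 0 < ε) :
    ∃ r : M.toStarSubalgebra, ‖r‖ ≤ 1 ∧
      (∀ ξ ∈ s, ‖((r - resolventSum p m : M.toStarSubalgebra) : H →L[ℂ] H) ξ‖ < ε) ∧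
      ∃ n, ∃ q : J → M.toStarSubalgebra, IsPartition q ∧ (∀ j, q j ∈ B n) ∧
        ∀ j, traceNorm τ (q j - p j) ≤
          2 * Fintype.card J * (c⁻¹ * traceNorm τ (r - resolventSum p m)) := by
  classical
  obtain ⟨n, b, hb, hbs, hclose⟩ := hd.exists_isSelfAdjoint hB (hp.isSelfAdjoint_sum m)
    (s.image ((resolventSum p m : M.toStarSubalgebra) : H →L[ℂ] H)) hε
  have := hfin n
  obtain ⟨ι, _, e, l, he, heB, hbe, -⟩ := exists_spectral_decomposition hb hbs
  obtain ⟨g, hg⟩ := hp.exists_fiber_close hτ hc hm he l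
  refine ⟨resolventSum e l, norm_resolventSum_le he l, fun ξ hξ => ?_, n, _, he.sum_fiber g,
    fun j => sum_mem fun i _ => heB i, hg⟩
  have h1 : resolventSum e l - resolventSum p m =
      resolventSum e l * (-(b - ∑ j, (m j : ℂ) • p j) * resolventSum p m) := by
    have h2 : -(b - ∑ j, (m j : ℂ) • p j) =
        (∑ j, (m j : ℂ) • p j + Complex.I • 1) - (b + Complex.I • 1) := by abel
    have h3 := he.resolventSum_mul l
    rw [← hbe] at h3
    rw [h2, sub_mul, mul_sub, hp.mul_resolventSum, ← mul_assoc, h3, mul_one, one_mul]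
  rw [h1]
  refine lt_of_le_of_lt ?_ (hclose _ (Finset.mem_image_of_mem _ hξ))
  have h4 := ContinuousLinearMap.le_of_opNorm_le
    ((resolventSum e l : M.toStarSubalgebra) : H →L[ℂ] H)
    (norm_resolventSum_le he l) (((-(b - ∑ j, (m j : ℂ) • p j) * resolventSum p m :
      M.toStarSubalgebra) : H →L[ℂ] H) ξ)
  rw [one_mul] at h4
  refine h4.trans_eq ?_
  rw [neg_mul]
  exact norm_neg _

theorem IsStronglyDense.exists_isPartition_close [TopologicalSpace.SeparableSpace H]
    {J : Type*} [Fintype J] (hτ : IsFaithfulTrace τ) (hn : IsBallNormal τ)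
    (hd : IsStronglyDense B) (hB : Monotone B) (hfin : ∀ n, FiniteDimensional ℂ (B n))
    {p : J → M.toStarSubalgebra} (hp : IsPartition p) (ε : ℝ) (hε : 0 < ε) :
    ∃ n, ∃ q : J → M.toStarSubalgebra, IsPartition q ∧ (∀ j, q j ∈ B n) ∧
      ∀ j, traceNorm τ (q j - p j) ≤ ε := by
  rcases isEmpty_or_nonempty J with hJ | hJ
  · exact ⟨0, p, hp, fun j => hJ.elim j, fun j => hJ.elim j⟩
  classical
  obtain ⟨m, c, hc, hm⟩ := exists_separated_labels J
  let e := TopologicalSpace.denseSeq H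
  choose r hr hclose n q hq hqB hqp using fun k : ℕ =>
    hd.exists_isPartition_le hτ hB hfin hp hc hm ((Finset.range (k + 1)).image e)
      (ε := 1 / ((k : ℝ) + 1)) Nat.one_div_pos_of_nat
  have hbound : ∀ k, ‖r k - resolventSum p m‖ ≤ 2 := fun k =>
    (norm_sub_le _ _).trans (by linarith [hr k, norm_resolventSum_le hp m])
  have hstrong : ∀ ξ, Tendsto (fun k => ((r k - resolventSum p m : M.toStarSubalgebra) :
      H →L[ℂ] H) ξ) atTop (𝓝 0) := by
    refine tendsto_zero_of_dense hbound (TopologicalSpace.denseRange_denseSeq H) fun i => ?_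
    refine squeeze_zero_norm' ?_ tendsto_one_div_add_atTop_nhds_zero_nat
    filter_upwards [eventually_ge_atTop i] with k hk
    exact (hclose k _ (Finset.mem_image_of_mem _ (Finset.mem_range_succ_iff.mpr hk))).le
  have hlim := ((hn.tendsto_traceNorm_of_strong hbound hstrong).const_mul c⁻¹).const_mul
    (2 * Fintype.card J : ℝ)
  rw [mul_zero, mul_zero] at hlim
  obtain ⟨k, hk⟩ := (hlim.eventually_le_const hε).exists
  exact ⟨n k, q k, hq k, hqB k, fun j => (hqp k j).trans hk⟩

end StrongApproximation

section Hyperfinite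

theorem StarSubalgebra.finiteDimensional_of_le {A : Type*} [Ring A] [StarRing A] [Algebra ℂ A]
    [StarModule ℂ A] {S T : StarSubalgebra ℂ A} [FiniteDimensional ℂ T] (h : S ≤ T) :
    FiniteDimensional ℂ S :=
  FiniteDimensional.of_injective (StarSubalgebra.inclusion h).toAlgHom.toLinearMap
    (StarSubalgebra.inclusion_injective h)

theorem StarSubalgebra.finiteDimensional_map {A A' : Type*} [Ring A] [StarRing A] [Algebra ℂ A]
    [StarModule ℂ A] [Ring A'] [StarRing A'] [Algebra ℂ A'] [StarModule ℂ A'] (f : A →⋆ₐ[ℂ] A')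
    (S : StarSubalgebra ℂ A) [FiniteDimensional ℂ S] : FiniteDimensional ℂ (S.map f) :=
  inferInstanceAs (FiniteDimensional ℂ (S.toSubalgebra.toSubmodule.map f.toAlgHom.toLinearMap))

theorem StarSubalgebra.finiteDimensional_comap {A A' : Type*} [Ring A] [StarRing A] [Algebra ℂ A]
    [StarModule ℂ A] [Ring A'] [StarRing A'] [Algebra ℂ A'] [StarModule ℂ A'] (f : A →⋆ₐ[ℂ] A')
    (hf : Function.Injective f) (S : StarSubalgebra ℂ A') [FiniteDimensional ℂ S] :
    FiniteDimensional ℂ (S.comap f) :=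
  FiniteDimensional.of_injective
    ((f.toAlgHom.toLinearMap ∘ₗ (S.comap f).subtype.toAlgHom.toLinearMap).codRestrict
      S.toSubalgebra.toSubmodule fun x => x.2)
    fun _ _ h => Subtype.ext (hf (congrArg Subtype.val h))

variable {H : Type*} [NormedAddCommGroup H] [InnerProductSpace ℂ H] [CompleteSpace H]
variable {M : VonNeumannAlgebra H} {B : ℕ → StarSubalgebra ℂ M.toStarSubalgebra}
variable {τ : M.toStarSubalgebra →ₗ[ℂ] ℂ}

/-- Conjugating a strongly dense sequence of algebras by a unitary preserves density. -/
theorem IsStronglyDense.map_conj (hd : IsStronglyDense B) {w : M.toStarSubalgebra}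
    (hw : star w * w = 1) (hw' : w * star w = 1) {A : ℕ → StarSubalgebra ℂ M.toStarSubalgebra}
    (hA : ∀ n, ∃ m, ∀ b ∈ B n, w * b * star w ∈ A m) : IsStronglyDense A := by
  intro x s ε hε
  classical
  have hw1 : ‖w‖ ≤ 1 := norm_le_one_of_star_mul_self_eq_one hw
  obtain ⟨n, b, hb, hclose⟩ := hd (star w * x * w) (s.image (star w : H →L[ℂ] H)) ε hε
  obtain ⟨m, hm⟩ := hA n
  refine ⟨m, _, hm b hb, fun ξ hξ => ?_⟩
  refine lt_of_le_of_lt ?_ (hclose _ (Finset.mem_image_of_mem _ hξ))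
  have h1 : w * b * star w - x = w * ((b - star w * x * w) * star w) := by
    have h2 : w * ((star w * x * w) * star w) = (w * star w) * x * (w * star w) := by
      simp only [mul_assoc]
    rw [sub_mul, mul_sub, h2, hw', one_mul, mul_one, mul_assoc]
  have h3 : ((w * b * star w : M.toStarSubalgebra) : H →L[ℂ] H) - x =
      w * ((b - (star w * x * w : M.toStarSubalgebra)) * star (w : H →L[ℂ] H)) :=
    congrArg Subtype.val h1
  rw [h3]
  exact (ContinuousLinearMap.le_of_opNorm_le (w : H →L[ℂ] H) hw1 _).trans_eq (one_mul _)

/-- In a hyperfinite finite von Neumann algebra the approximating algebras may be chosen to contain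
a given finite-dimensional abelian algebra. -/
theorem IsStronglyDense.exists_containing [TopologicalSpace.SeparableSpace H]
    (hτ : IsFaithfulTrace τ) (hn : IsBallNormal τ) (hd : IsStronglyDense B) (hB : Monotone B)
    (hfin : ∀ n, FiniteDimensional ℂ (B n)) (D : StarSubalgebra ℂ M.toStarSubalgebra)
    [FiniteDimensional ℂ D] (hD : ∀ x ∈ D, ∀ y ∈ D, x * y = y * x) :
    ∃ A : ℕ → StarSubalgebra ℂ M.toStarSubalgebra, A 0 = D ∧ Monotone A ∧
      (∀ n, FiniteDimensional ℂ (A n)) ∧ IsStronglyDense A := by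
  obtain ⟨J, _, p, hp⟩ := exists_isMinPartition D
  obtain ⟨u, hu, hu', hK⟩ := exists_unitary_finiteDimensional hτ hB hfin
    (hτ.exists_tendsto_traceNorm hn) hp.toIsPartition
    (hd.exists_isPartition_close hτ hn hB hfin hp.toIsPartition)
  let v : unitary M.toStarSubalgebra := ⟨u, Unitary.mem_iff.mpr ⟨hu, hu'⟩⟩
  let φ : M.toStarSubalgebra →⋆ₐ[ℂ] M.toStarSubalgebra :=
    (Unitary.conjStarAlgAut ℂ M.toStarSubalgebra v : M.toStarSubalgebra →⋆ₐ[ℂ] M.toStarSubalgebra)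
  let A : ℕ → StarSubalgebra ℂ M.toStarSubalgebra
    | 0 => D
    | n + 1 => (B n).map φ ⊔ D
  have hfinA : ∀ n, FiniteDimensional ℂ (A n) := by
    rintro (_ | n)
    · exact ‹FiniteDimensional ℂ D›
    · obtain ⟨K, _, hBK, hpK⟩ := hK n
      have := StarSubalgebra.finiteDimensional_map φ K
      refine StarSubalgebra.finiteDimensional_of_le (T := K.map φ)
        (sup_le (StarSubalgebra.map_mono hBK) fun x hx => ?_)
      refine (hp.isDiagonal_of_commute hx fun j => hD x hx _ (hp.mem j)).mem fun j => ?_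
      refine ⟨_, hpK j, ?_⟩
      change u * (star u * p j * u) * star u = p j
      rw [← mul_assoc, ← mul_assoc, hu', one_mul, mul_assoc, hu', mul_one]
  refine ⟨A, rfl, monotone_nat_of_le_succ ?_, hfinA,
    hd.map_conj hu hu' fun n => ⟨n + 1, fun b hb => ?_⟩⟩
  · rintro (_ | n)
    · exact le_sup_right
    · exact sup_le_sup_right (StarSubalgebra.map_mono (hB n.le_succ)) D
  · exact (le_sup_left : (B n).map φ ≤ A (n + 1)) ⟨b, hb, rfl⟩

end Hyperfinite

/-- Lemma 3.1 of the paper. Let `M` be a von Neumann algebra on a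
separable complex Hilbert space, equipped with a faithful normal tracial state `τ`
(normality is expressed via WOT-sequential continuity on the unit ball, which suffices
since `H` is separable), and suppose `M` is hyperfinite: there is an increasing sequence
of finite-dimensional unital *-subalgebras of `M` whose union is dense in `M` in the
strong operator topology.  Let `D` be a finite-dimensional abelian unital *-subalgebra
of `M`.  Then there is an increasing chain `A 0 = D ⊆ A 1 ⊆ A 2 ⊆ ⋯` of
finite-dimensional unital *-subalgebras of `M`, each containing `D`, whose union is
dense in `M` in the strong operator topology. -/
theorem stmt0 {H : Type*} [NormedAddCommGroup H] [InnerProductSpace ℂ H]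
    [CompleteSpace H] [TopologicalSpace.SeparableSpace H]
    (M : VonNeumannAlgebra H)
    -- a faithful normal tracial state on `M`:
    (τ : (H →L[ℂ] H) →ₗ[ℂ] ℂ)
    (hτ_unital : τ 1 = 1)
    (hτ_tracial : ∀ x ∈ M, ∀ y ∈ M, τ (x * y) = τ (y * x))
    (hτ_pos : ∀ x ∈ M, 0 ≤ (τ (star x * x)).re ∧ (τ (star x * x)).im = 0)
    (hτ_faithful : ∀ x ∈ M, τ (star x * x) = 0 → x = 0)
    (hτ_normal : ∀ (x : ℕ → H →L[ℂ] H) (y : H →L[ℂ] H),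
      (∀ n, x n ∈ M) → (∀ n, ‖x n‖ ≤ 1) → y ∈ M →
      (∀ ξ η : H, Tendsto (fun n => ⟪ξ, x n η⟫_ℂ) atTop (𝓝 ⟪ξ, y η⟫_ℂ)) →
      Tendsto (fun n => τ (x n)) atTop (𝓝 (τ y)))
    -- `M` is hyperfinite:
    (hyperfinite : ∃ B : ℕ → StarSubalgebra ℂ (H →L[ℂ] H),
      Monotone B ∧ (∀ n, (B n : Set (H →L[ℂ] H)) ⊆ M) ∧
      (∀ n, FiniteDimensional ℂ (B n)) ∧
      (∀ x ∈ M, ∀ s : Finset H, ∀ ε : ℝ, 0 < ε →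
        ∃ n, ∃ a ∈ B n, ∀ ξ ∈ s, ‖(a - x) ξ‖ < ε))
    -- `D` is a finite-dimensional abelian unital *-subalgebra of `M`:
    (D : StarSubalgebra ℂ (H →L[ℂ] H))
    (hDM : (D : Set (H →L[ℂ] H)) ⊆ M)
    (hDfin : FiniteDimensional ℂ D)
    (hDab : ∀ x ∈ D, ∀ y ∈ D, x * y = y * x) :
    ∃ A : ℕ → StarSubalgebra ℂ (H →L[ℂ] H),
      A 0 = D ∧ Monotone A ∧
      (∀ n, (A n : Set (H →L[ℂ] H)) ⊆ M) ∧
      (∀ n, FiniteDimensional ℂ (A n)) ∧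
      (∀ n, D ≤ A n) ∧
      (∀ x ∈ M, ∀ s : Finset H, ∀ ε : ℝ, 0 < ε →
        ∃ n, ∃ a ∈ A n, ∀ ξ ∈ s, ‖(a - x) ξ‖ < ε) := by
  obtain ⟨B, hBmono, hBM, hBfin, hBdense⟩ := hyperfinite
  let S := M.toStarSubalgebra
  let τM : S →ₗ[ℂ] ℂ := τ ∘ₗ S.subtype.toAlgHom.toLinearMap
  have hτ : IsFaithfulTrace τM :=
    { comm := fun x y => hτ_tracial x x.2 y y.2
      nonneg := fun x => (hτ_pos x x.2).1
      im_eq := fun x => (hτ_pos x x.2).2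
      faithful := fun x hx => Subtype.ext (hτ_faithful x x.2 hx) }
  have hn : IsBallNormal τM := fun x y hx hxy =>
    hτ_normal (fun n => x n) y (fun n => (x n).2) hx y.2 hxy
  have hd : IsStronglyDense fun n => (B n).comap S.subtype := by
    intro x s ε hε
    obtain ⟨n, a, ha, h⟩ := hBdense x x.2 s ε hε
    exact ⟨n, ⟨a, hBM n ha⟩, ha, h⟩
  have := StarSubalgebra.finiteDimensional_comap S.subtype Subtype.val_injective D
  obtain ⟨A, hA0, hAmono, hAfin, hAdense⟩ := hd.exists_containing hτ hn
    (fun n m hnm x hx => hBmono hnm hx)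
    (fun n => have := hBfin n
      StarSubalgebra.finiteDimensional_comap S.subtype Subtype.val_injective (B n))
    (D.comap S.subtype) fun x hx y hy => Subtype.ext (hDab x hx y hy)
  have hD : (A 0).map S.subtype = D := by
    rw [hA0]
    refine le_antisymm ?_ ?_
    · rintro _ ⟨y, hy, rfl⟩
      exact hy
    · intro x hx
      exact ⟨⟨x, hDM hx⟩, hx, rfl⟩
  have hmono : Monotone fun n => (A n).map S.subtype := fun n m hnm =>
    StarSubalgebra.map_mono (hAmono hnm)
  refine ⟨fun n => (A n).map S.subtype, hD, hmono, ?_, fun n => ?_,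
    fun n => hD.symm.trans_le (hmono n.zero_le), ?_⟩
  · rintro n _ ⟨y, -, rfl⟩
    exact y.2
  · have := hAfin n
    exact StarSubalgebra.finiteDimensional_map S.subtype (A n)
  · intro x hx s ε hε
    obtain ⟨n, a, ha, h⟩ := hAdense ⟨x, hx⟩ s ε hε
    exact ⟨n, a, ⟨a, ha, rfl⟩, h⟩
end

section
/- Let N and M be multimatrix algebras, each equipped with a faithful tracial state, and let φ : N → M be a unital, trace-preserving *-homomorphism. Then φ can be written as a composition of simple steps; precisely, there exist multimatrix algebras with faithful tracial states N = C_0, C_1, …, C_r, trace-preserving unital *-homomorphisms σ_k : C_{k−1} → C_k each of which is a simple step, and a trace-preserving *-isomorphism θ : C_r → M, such that φ = θ ∘ σ_r ∘ ⋯ ∘ σ_1. -/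
/-- A multimatrix algebra with a faithful tracial state: a finite direct sum
`⊕_{i} M_{dim i}(ℂ)` of complex matrix algebras, where a minimal projection of the `i`-th
summand has trace `w i > 0` and `∑ i, w i * dim i = 1`. -/
structure MMA where
  ι : Type
  [fin : Fintype ι]
  [dec : DecidableEq ι]
  dim : ι → ℕ
  dim_pos : ∀ i, 0 < dim i
  w : ι → ℝ
  w_pos : ∀ i, 0 < w i
  w_sum : ∑ i, w i * dim i = 1

attribute [instance] MMA.fin MMA.dec

/-- The underlying *-algebra `⊕_i M_{dim i}(ℂ)` of a multimatrix algebra. -/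
abbrev MMA.Alg (A : MMA) : Type := ∀ i, Matrix (Fin (A.dim i)) (Fin (A.dim i)) ℂ

/-- The faithful tracial state `τ(x) = ∑_i (w i) Tr(x_i)`. -/
noncomputable def MMA.tr (A : MMA) (x : A.Alg) : ℂ :=
  ∑ i, (A.w i : ℂ) * Matrix.trace (x i)

/-- A simple step of the first kind: `N = A ⊕ B`, `M = A ⊕ A ⊕ B`, `φ(a,b) = (a,a,b)`,
where the trace weights of the summands of `B` are unchanged and, for each matrix summand
of `A`, its two copies in `M` carry (automatically positive) weights summing to its weight
in `N`.  Here `S` is the set of indices of summands of `N` belonging to `A`. -/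
def IsSimpleStep1 {N M : MMA} (φ : N.Alg →⋆ₐ[ℂ] M.Alg) : Prop :=
  ∃ (S : Finset N.ι)
    (e : ({a // a ∈ S} ⊕ {a // a ∈ S}) ⊕ {a : N.ι // a ∉ S} ≃ M.ι)
    (hd1 : ∀ a : {a // a ∈ S}, M.dim (e (Sum.inl (Sum.inl a))) = N.dim a.1)
    (hd2 : ∀ a : {a // a ∈ S}, M.dim (e (Sum.inl (Sum.inr a))) = N.dim a.1)
    (hd3 : ∀ b : {a : N.ι // a ∉ S}, M.dim (e (Sum.inr b)) = N.dim b.1),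
    (∀ a : {a // a ∈ S},
      M.w (e (Sum.inl (Sum.inl a))) + M.w (e (Sum.inl (Sum.inr a))) = N.w a.1) ∧
    (∀ b : {a : N.ι // a ∉ S}, M.w (e (Sum.inr b)) = N.w b.1) ∧
    (∀ (x : N.Alg) (a : {a // a ∈ S}),
      φ x (e (Sum.inl (Sum.inl a))) = (x a.1).submatrix (Fin.cast (hd1 a)) (Fin.cast (hd1 a))) ∧
    (∀ (x : N.Alg) (a : {a // a ∈ S}),
      φ x (e (Sum.inl (Sum.inr a))) = (x a.1).submatrix (Fin.cast (hd2 a)) (Fin.cast (hd2 a))) ∧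
    (∀ (x : N.Alg) (b : {a : N.ι // a ∉ S}),
      φ x (e (Sum.inr b)) = (x b.1).submatrix (Fin.cast (hd3 b)) (Fin.cast (hd3 b)))

/-- A simple step of the second kind: `N = M_n ⊕ M_m ⊕ B`, `M = M_{n+m} ⊕ B`,
`φ(x,y,b) = (diag(x,y), b)`, where minimal projections of `M_n` and of `M_m` both have
trace `t` in `N`, minimal projections of `M_{n+m}` have the same trace `t` in `M`, and the
weights on `B` are unchanged.  Here `i, j` are the indices of the summands `M_n`, `M_m`
of `N`. -/
def IsSimpleStep2 {N M : MMA} (φ : N.Alg →⋆ₐ[ℂ] M.Alg) : Prop :=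
  ∃ (i j : N.ι) (_ : i ≠ j)
    (e : Unit ⊕ {k : N.ι // k ≠ i ∧ k ≠ j} ≃ M.ι)
    (hd : M.dim (e (Sum.inl ())) = N.dim i + N.dim j)
    (hd2 : ∀ b : {k : N.ι // k ≠ i ∧ k ≠ j}, M.dim (e (Sum.inr b)) = N.dim b.1),
    N.w i = N.w j ∧
    M.w (e (Sum.inl ())) = N.w i ∧
    (∀ b : {k : N.ι // k ≠ i ∧ k ≠ j}, M.w (e (Sum.inr b)) = N.w b.1) ∧
    (∀ x : N.Alg,
      φ x (e (Sum.inl ())) =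
        ((Matrix.reindex finSumFinEquiv finSumFinEquiv)
          (Matrix.fromBlocks (x i) 0 0 (x j))).submatrix (Fin.cast hd) (Fin.cast hd)) ∧
    (∀ (x : N.Alg) (b : {k : N.ι // k ≠ i ∧ k ≠ j}),
      φ x (e (Sum.inr b)) = (x b.1).submatrix (Fin.cast (hd2 b)) (Fin.cast (hd2 b)))

/-- An embedding is a *simple step* if it has one of the two forms above. -/
def IsSimpleStep {N M : MMA} (φ : N.Alg →⋆ₐ[ℂ] M.Alg) : Prop :=
  IsSimpleStep1 φ ∨ IsSimpleStep2 φ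

/-- `SimpleStepFactorization φ` says that `φ` can be written as `θ ∘ σ_r ∘ ⋯ ∘ σ_1`,
where there are traced multimatrix algebras `N = C_0, C_1, …, C_r` (the implicit
intermediate algebras below), each `σ_k : C_{k−1} → C_k` is a trace-preserving unital
*-homomorphism which is a simple step, and `θ : C_r → M` is a trace-preserving
*-isomorphism. -/
inductive SimpleStepFactorization : ∀ {A B : MMA}, (A.Alg →⋆ₐ[ℂ] B.Alg) → Prop
  | iso {A B : MMA} (θ : A.Alg ≃⋆ₐ[ℂ] B.Alg) (hθ : ∀ x, B.tr (θ x) = A.tr x)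
      (φ : A.Alg →⋆ₐ[ℂ] B.Alg) (hφ : ∀ x, φ x = θ x) : SimpleStepFactorization φ
  | comp {A B C : MMA} (σ : A.Alg →⋆ₐ[ℂ] B.Alg) (ψ : B.Alg →⋆ₐ[ℂ] C.Alg)
      (hσ : IsSimpleStep σ) (hσt : ∀ x, B.tr (σ x) = A.tr x)
      (hψ : SimpleStepFactorization ψ) : SimpleStepFactorization (ψ.comp σ)

open Matrix

theorem MMA.tr_eq_sum_blockDiagonal' (A : MMA) (x : A.Alg) :
    A.tr x = ∑ s : Σ i, Fin (A.dim i), (A.w s.1 : ℂ) * blockDiagonal' x s s := by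
  simp [MMA.tr, Fintype.sum_sigma, Matrix.trace, Finset.mul_sum]

section BlockHom

variable {A B : MMA} {K : Type} [DecidableEq K]

theorem blockDiagonal'_blockDiag'_submatrix {f : K → A.ι} {g : K → B.ι}
    {E : (Σ k, Fin (A.dim (f k))) ≃ Σ j, Fin (B.dim j)} (hE : ∀ s, (E s).1 = g s.1)
    (x : A.Alg) :
    blockDiagonal' (blockDiag' ((blockDiagonal' fun k => x (f k)).submatrix E.symm E.symm)) =
      (blockDiagonal' fun k => x (f k)).submatrix E.symm E.symm := by
  ext ⟨j, p⟩ ⟨j', q⟩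
  by_cases h : j = j'
  · subst h
    simp [blockDiag'_apply]
  · rw [blockDiagonal'_apply_ne _ _ _ h, submatrix_apply]
    have hne : (E.symm ⟨j, p⟩).1 ≠ (E.symm ⟨j', q⟩).1 := fun h₁ => h <| by
      have := congrArg g h₁
      rwa [← hE, ← hE, E.apply_symm_apply, E.apply_symm_apply] at this
    exact (blockDiagonal'_apply_ne _ _ _ hne).symm

/-- The *-homomorphism sending `x` to the block-diagonal matrices with blocks `x (f k)`, where
the block `k` is placed inside the summand `g k` of `B` as prescribed by `E`. -/
def blockHom [Fintype K] (f : K → A.ι) (g : K → B.ι)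
    (E : (Σ k, Fin (A.dim (f k))) ≃ Σ j, Fin (B.dim j)) (hE : ∀ s, (E s).1 = g s.1) :
    A.Alg →⋆ₐ[ℂ] B.Alg where
  toFun x := blockDiag' ((blockDiagonal' fun k => x (f k)).submatrix E.symm E.symm)
  map_one' := by
    change blockDiag' ((blockDiagonal' (1 : ∀ k, Matrix (Fin (A.dim (f k))) _ ℂ)).submatrix
      E.symm E.symm) = _
    rw [blockDiagonal'_one, submatrix_one_equiv, blockDiag'_one]
  map_mul' x y := by
    apply blockDiagonal'_injective
    refine Eq.trans ?_ (blockDiagonal'_mul _ _).symm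
    rw [blockDiagonal'_blockDiag'_submatrix hE, blockDiagonal'_blockDiag'_submatrix hE,
      blockDiagonal'_blockDiag'_submatrix hE, submatrix_mul_equiv, ← blockDiagonal'_mul]
    rfl
  map_zero' := by
    change blockDiag' ((blockDiagonal' (0 : ∀ k, Matrix (Fin (A.dim (f k))) _ ℂ)).submatrix
      E.symm E.symm) = _
    rw [blockDiagonal'_zero]
    rfl
  map_add' x y := by
    change blockDiag' ((blockDiagonal' ((fun k => x (f k)) + fun k => y (f k))).submatrix
      E.symm E.symm) = _
    rw [blockDiagonal'_add]
    rfl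
  commutes' c := by
    rw [Algebra.algebraMap_eq_smul_one, Algebra.algebraMap_eq_smul_one]
    change blockDiag' ((blockDiagonal' (c • (1 : ∀ k, Matrix (Fin (A.dim (f k))) _ ℂ))).submatrix
      E.symm E.symm) = _
    rw [blockDiagonal'_smul, blockDiagonal'_one]
    change blockDiag' (c • ((1 : Matrix _ _ ℂ).submatrix E.symm E.symm)) = _
    rw [submatrix_one_equiv, blockDiag'_smul, blockDiag'_one]
  map_star' x := by
    change blockDiag' ((blockDiagonal' fun k => (x (f k))ᴴ).submatrix E.symm E.symm) = _
    rw [← blockDiagonal'_conjTranspose, ← conjTranspose_submatrix]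
    rfl

variable [Fintype K] {f : K → A.ι} {g : K → B.ι}
  {E : (Σ k, Fin (A.dim (f k))) ≃ Σ j, Fin (B.dim j)} {hE : ∀ s, (E s).1 = g s.1}

theorem blockDiagonal'_blockHom (x : A.Alg) :
    blockDiagonal' (blockHom f g E hE x) =
      (blockDiagonal' fun k => x (f k)).submatrix E.symm E.symm :=
  blockDiagonal'_blockDiag'_submatrix hE x

theorem blockDiagonal'_blockHom_submatrix (x : A.Alg) :
    (blockDiagonal' (blockHom f g E hE x)).submatrix E E = blockDiagonal' fun k => x (f k) := by
  simp [blockDiagonal'_blockHom]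

theorem blockHom_apply (x : A.Alg) (j : B.ι) (p q : Fin (B.dim j)) :
    blockHom f g E hE x j p q =
      blockDiagonal' (fun k => x (f k)) (E.symm ⟨j, p⟩) (E.symm ⟨j, q⟩) := rfl

theorem tr_blockHom (x : A.Alg) :
    B.tr (blockHom f g E hE x) = ∑ k, (B.w (g k) : ℂ) * (x (f k)).trace := by
  rw [MMA.tr_eq_sum_blockDiagonal', ← E.sum_comp]
  simp [blockDiagonal'_blockHom, hE, Fintype.sum_sigma, Matrix.trace, Finset.mul_sum]

end BlockHom

section Merge

variable {A : MMA}

/-- The algebra obtained from `A` by merging the summands `i` and `j` of equal weight into one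
summand of size `A.dim i + A.dim j`. -/
def MMA.merge (A : MMA) (i j : A.ι) (hij : i ≠ j) (hw : A.w i = A.w j) : MMA where
  ι := Unit ⊕ {k : A.ι // k ≠ i ∧ k ≠ j}
  dim := Sum.elim (fun _ => A.dim i + A.dim j) fun k => A.dim k
  dim_pos := by
    rintro (_ | k)
    · exact Nat.add_pos_left (A.dim_pos i) _
    · exact A.dim_pos k
  w := Sum.elim (fun _ => A.w i) fun k => A.w k
  w_pos := by
    rintro (_ | k)
    · exact A.w_pos i
    · exact A.w_pos k
  w_sum := by
    have h := Fintype.sum_subtype_add_sum_subtype (fun k => k ≠ i ∧ k ≠ j)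
      fun k => A.w k * (A.dim k : ℝ)
    have h' : ∑ k : {k // ¬ (k ≠ i ∧ k ≠ j)}, A.w k * (A.dim k : ℝ) =
        ∑ k ∈ {i, j}, A.w k * (A.dim k : ℝ) :=
      (Finset.sum_subtype {i, j} (by simp [or_iff_not_imp_left])
        fun k => A.w k * (A.dim k : ℝ)).symm
    rw [A.w_sum, h', Finset.sum_pair hij] at h
    simp only [Fintype.sum_sum_type, Sum.elim_inl, Sum.elim_inr, Finset.univ_unique,
      Finset.sum_singleton]
    push_cast
    rw [← h, ← hw]
    ring

variable {i j : A.ι} {hij : i ≠ j} {hw : A.w i = A.w j}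

/-- The position in `A` of a diagonal entry of `A.merge i j`. -/
def MMA.mergeIndex : (Σ k, Fin ((A.merge i j hij hw).dim k)) → Σ k, Fin (A.dim k)
  | ⟨Sum.inl _, p⟩ => Sum.elim (Sigma.mk i) (Sigma.mk j) (finSumFinEquiv.symm p)
  | ⟨Sum.inr k, p⟩ => ⟨k, p⟩

theorem MMA.mergeIndex_bijective :
    Function.Bijective (MMA.mergeIndex (A := A) (hij := hij) (hw := hw)) := by
  constructor
  · rintro ⟨_ | ⟨k, hk⟩, p⟩ ⟨_ | ⟨l, hl⟩, q⟩ h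
    · obtain ⟨p, rfl⟩ := finSumFinEquiv.surjective p
      obtain ⟨q, rfl⟩ := finSumFinEquiv.surjective q
      rcases p with p | p <;> rcases q with q | q <;>
        simp_all [MMA.mergeIndex, hij.symm]
    · obtain ⟨p, rfl⟩ := finSumFinEquiv.surjective p
      rcases p with p | p <;> simp [MMA.mergeIndex] at h
      · exact absurd (congrArg Sigma.fst h).symm hl.1
      · exact absurd (congrArg Sigma.fst h).symm hl.2
    · obtain ⟨q, rfl⟩ := finSumFinEquiv.surjective q
      rcases q with q | q <;> simp [MMA.mergeIndex] at h
      · exact absurd (congrArg Sigma.fst h) hk.1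
      · exact absurd (congrArg Sigma.fst h) hk.2
    · obtain rfl : k = l := congrArg Sigma.fst h
      obtain rfl : p = q := eq_of_heq (Sigma.mk.inj h).2
      rfl
  · rintro ⟨k, p⟩
    by_cases hi : k = i
    · subst hi
      exact ⟨⟨Sum.inl (), finSumFinEquiv (Sum.inl p)⟩, by simp [MMA.mergeIndex]⟩
    by_cases hj : k = j
    · subst hj
      exact ⟨⟨Sum.inl (), finSumFinEquiv (Sum.inr p)⟩, by simp [MMA.mergeIndex]⟩
    exact ⟨⟨Sum.inr ⟨k, hi, hj⟩, p⟩, rfl⟩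

/-- The summand of `A.merge i j` containing the summand `k` of `A`. -/
def MMA.mergeMap (k : A.ι) : (A.merge i j hij hw).ι :=
  if h : k ≠ i ∧ k ≠ j then Sum.inr ⟨k, h⟩ else Sum.inl ()

theorem MMA.mergeMap_of_ne (k : {k : A.ι // k ≠ i ∧ k ≠ j}) :
    (MMA.mergeMap k : (A.merge i j hij hw).ι) = Sum.inr k := dif_pos k.2

theorem MMA.mergeMap_left : (MMA.mergeMap i : (A.merge i j hij hw).ι) = Sum.inl () :=
  dif_neg fun h => h.1 rfl

theorem MMA.mergeMap_right : (MMA.mergeMap j : (A.merge i j hij hw).ι) = Sum.inl () :=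
  dif_neg fun h => h.2 rfl

/-- A function on the summands of `A` taking the same value at `i` and `j` factors through
`mergeMap`. -/
theorem MMA.elim_mergeMap {X : Type*} (g : A.ι → X) (hg : g i = g j) (k : A.ι) :
    Sum.elim (fun _ => g i) (fun k : {k : A.ι // k ≠ i ∧ k ≠ j} => g k)
      (MMA.mergeMap k : (A.merge i j hij hw).ι) = g k := by
  by_cases hi : k = i
  · subst hi
    rw [MMA.mergeMap_left]
    rfl
  by_cases hj : k = j
  · subst hj
    rw [MMA.mergeMap_right]
    exact hg
  rw [MMA.mergeMap_of_ne ⟨k, hi, hj⟩]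
  rfl

theorem MMA.mergeMap_mergeIndex (s : Σ k, Fin ((A.merge i j hij hw).dim k)) :
    (MMA.mergeMap (MMA.mergeIndex s).1 : (A.merge i j hij hw).ι) = s.1 := by
  obtain ⟨_ | ⟨k, hk⟩, p⟩ := s
  · obtain ⟨p, rfl⟩ := finSumFinEquiv.surjective p
    rcases p with p | p
    · simpa [MMA.mergeIndex] using MMA.mergeMap_left
    · simpa [MMA.mergeIndex] using MMA.mergeMap_right
  · exact MMA.mergeMap_of_ne ⟨k, hk⟩

theorem MMA.w_mergeMap (k : A.ι) :
    (A.merge i j hij hw).w (MMA.mergeMap k) = A.w k :=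
  MMA.elim_mergeMap A.w hw k

/-- The bijection between the diagonal entries of `A` and those of `A.merge i j`. -/
noncomputable def MMA.mergeEquiv :
    (Σ k, Fin (A.dim k)) ≃ Σ k, Fin ((A.merge i j hij hw).dim k) :=
  (Equiv.ofBijective _ MMA.mergeIndex_bijective).symm

theorem MMA.mergeEquiv_symm_apply (s : Σ k, Fin ((A.merge i j hij hw).dim k)) :
    MMA.mergeEquiv.symm s = MMA.mergeIndex s := rfl

theorem MMA.mergeEquiv_fst (s : Σ k, Fin (A.dim k)) :
    (MMA.mergeEquiv s : Σ k, Fin ((A.merge i j hij hw).dim k)).1 = MMA.mergeMap s.1 := by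
  rw [← MMA.mergeMap_mergeIndex, ← MMA.mergeEquiv_symm_apply, Equiv.symm_apply_apply]

/-- The canonical simple step of the second kind from `A` to `A.merge i j`. -/
noncomputable def MMA.mergeHom (A : MMA) (i j : A.ι) (hij : i ≠ j) (hw : A.w i = A.w j) :
    A.Alg →⋆ₐ[ℂ] (A.merge i j hij hw).Alg :=
  blockHom id MMA.mergeMap MMA.mergeEquiv MMA.mergeEquiv_fst

theorem MMA.isSimpleStep2_mergeHom : IsSimpleStep2 (A.mergeHom i j hij hw) := by
  refine ⟨i, j, hij, Equiv.refl _, rfl, fun _ => rfl, hw, rfl, fun _ => rfl, fun x => ?_,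
    fun x b => ?_⟩
  · ext p q
    obtain ⟨p, rfl⟩ := finSumFinEquiv.surjective p
    obtain ⟨q, rfl⟩ := finSumFinEquiv.surjective q
    change blockDiagonal' x (Sum.elim (Sigma.mk i) (Sigma.mk j) (finSumFinEquiv.symm _))
      (Sum.elim (Sigma.mk i) (Sigma.mk j) (finSumFinEquiv.symm _)) =
      fromBlocks (x i) 0 0 (x j) (finSumFinEquiv.symm (finSumFinEquiv p))
        (finSumFinEquiv.symm (finSumFinEquiv q))
    rw [Equiv.symm_apply_apply, Equiv.symm_apply_apply]
    rcases p with p | p <;> rcases q with q | q <;>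
      simp [blockDiagonal'_apply_ne, hij, hij.symm]
  · ext p q
    exact blockDiagonal'_apply_eq x b.1 p q

theorem MMA.tr_mergeHom (x : A.Alg) :
    (A.merge i j hij hw).tr (A.mergeHom i j hij hw x) = A.tr x := by
  rw [MMA.mergeHom, tr_blockHom]
  simp only [MMA.w_mergeMap]
  rfl

/-- A block map with one block per summand of the source is a composition of merging steps and
an isomorphism. -/
theorem simpleStepFactorization_blockHom_id {A B : MMA} (g : A.ι → B.ι)
    (E : (Σ i, Fin (A.dim i)) ≃ Σ j, Fin (B.dim j)) (hE : ∀ s, (E s).1 = g s.1)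
    (hw : ∀ i, B.w (g i) = A.w i) :
    SimpleStepFactorization (blockHom id g E hE) := by
  induction hn : Fintype.card A.ι using Nat.strong_induction_on generalizing A with
  | _ n ih =>
  by_cases hg : Function.Injective g
  · have hgs : Function.Surjective g := fun j =>
      ⟨(E.symm ⟨j, ⟨0, B.dim_pos j⟩⟩).1, by rw [← hE, E.apply_symm_apply]⟩
    obtain ⟨e, rfl⟩ : ∃ e : A.ι ≃ B.ι, g = e := ⟨Equiv.ofBijective g ⟨hg, hgs⟩, rfl⟩
    have hE' : ∀ s, (E.symm s).1 = e.symm s.1 := fun s => by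
      rw [Equiv.eq_symm_apply, ← hE, E.apply_symm_apply]
    have hbij : Function.Bijective (blockHom id e E hE) := by
      constructor
      · intro x y hxy
        apply blockDiagonal'_injective
        refine (blockDiagonal'_blockHom_submatrix (f := id) (hE := hE) x).symm.trans ?_
        rw [hxy]
        exact blockDiagonal'_blockHom_submatrix (f := id) (hE := hE) y
      · intro y
        refine ⟨blockHom id e.symm E.symm hE' y, ?_⟩
        apply blockDiagonal'_injective
        rw [blockDiagonal'_blockHom]
        exact blockDiagonal'_blockHom_submatrix (hE := hE') y
    refine .iso (StarAlgEquiv.ofBijective _ hbij) (fun x => ?_) _ fun _ => rfl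
    change B.tr (blockHom id e E hE x) = _
    rw [tr_blockHom]
    simp only [hw]
    rfl
  · obtain ⟨i, j, hgij, hij⟩ : ∃ i j, g i = g j ∧ i ≠ j := by
      simpa [Function.Injective] using hg
    have hwij : A.w i = A.w j := by rw [← hw, ← hw, hgij]
    let g' : (A.merge i j hij hwij).ι → B.ι := Sum.elim (fun _ => g i) fun k => g k
    have hg' : ∀ k, g' (MMA.mergeMap k) = g k := MMA.elim_mergeMap g hgij
    have hE' : ∀ s, ((MMA.mergeEquiv (hij := hij) (hw := hwij)).symm.trans E s).1 = g' s.1 := by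
      intro s
      rw [Equiv.trans_apply, hE, MMA.mergeEquiv_symm_apply, ← hg', MMA.mergeMap_mergeIndex]
    have key : blockHom id g E hE = (blockHom id g' _ hE').comp (A.mergeHom i j hij hwij) := by
      ext1 x
      apply blockDiagonal'_injective
      rw [StarAlgHom.comp_apply, blockDiagonal'_blockHom, blockDiagonal'_blockHom]
      change _ = (blockDiagonal' (A.mergeHom i j hij hwij x)).submatrix _ _
      rw [MMA.mergeHom, blockDiagonal'_blockHom, submatrix_submatrix]
      congr 1 <;> ext1 s <;> simp
    rw [key]
    refine .comp _ _ (.inr MMA.isSimpleStep2_mergeHom) MMA.tr_mergeHom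
      (ih _ ?_ g' _ hE' ?_ rfl)
    · rw [← hn]
      refine Fintype.card_lt_of_surjective_not_injective
        (MMA.mergeMap (hij := hij) (hw := hwij)) (fun k => ?_) fun h => hij (h ?_)
      · exact ⟨_, MMA.mergeMap_mergeIndex ⟨k, ⟨0, MMA.dim_pos _ k⟩⟩⟩
      · rw [MMA.mergeMap_left, MMA.mergeMap_right]
    · rintro (_ | k)
      · exact hw i
      · exact hw k

end Merge

section Split

theorem sum_mem_add_sum_notMem {ι X : Type*} [Fintype ι] [DecidableEq ι] [AddCommMonoid X]
    (S : Finset ι) (F : ι → X) :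
    ∑ a : {a // a ∈ S}, F a + ∑ a : {a // a ∉ S}, F a = ∑ a, F a := by
  convert Fintype.sum_subtype_add_sum_subtype (· ∈ S) F

variable {A : MMA}

/-- The algebra obtained from `A` by doubling the summands in `S`, whose copies carry the weights
`u` and `v`. -/
def MMA.split (A : MMA) (S : Finset A.ι) (u v : {a // a ∈ S} → ℝ) (hu : ∀ a, 0 < u a)
    (hv : ∀ a, 0 < v a) (huv : ∀ a, u a + v a = A.w a) : MMA where
  ι := ({a // a ∈ S} ⊕ {a // a ∈ S}) ⊕ {a : A.ι // a ∉ S}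
  dim i := A.dim (Sum.elim (Sum.elim Subtype.val Subtype.val) Subtype.val i)
  dim_pos _ := A.dim_pos _
  w := Sum.elim (Sum.elim u v) fun a => A.w a
  w_pos := by
    rintro ((a | a) | a)
    exacts [hu a, hv a, A.w_pos a]
  w_sum := by
    rw [← A.w_sum, ← sum_mem_add_sum_notMem S]
    simp only [Fintype.sum_sum_type, Sum.elim_inl, Sum.elim_inr, ← huv, add_mul,
      Finset.sum_add_distrib]

variable {S : Finset A.ι} {u v : {a // a ∈ S} → ℝ} {hu : ∀ a, 0 < u a} {hv : ∀ a, 0 < v a}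
  {huv : ∀ a, u a + v a = A.w a}

/-- The summand of `A` of which a summand of `A.split` is a copy. -/
def MMA.splitMap : (A.split S u v hu hv huv).ι → A.ι :=
  Sum.elim (Sum.elim Subtype.val Subtype.val) Subtype.val

/-- The canonical simple step of the first kind from `A` to `A.split`. -/
def MMA.splitHom (A : MMA) (S : Finset A.ι) (u v : {a // a ∈ S} → ℝ) (hu : ∀ a, 0 < u a)
    (hv : ∀ a, 0 < v a) (huv : ∀ a, u a + v a = A.w a) :
    A.Alg →⋆ₐ[ℂ] (A.split S u v hu hv huv).Alg where
  toFun x i := x (MMA.splitMap i)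
  map_one' := rfl
  map_mul' _ _ := rfl
  map_zero' := rfl
  map_add' _ _ := rfl
  commutes' _ := rfl
  map_star' _ := rfl

theorem MMA.isSimpleStep1_splitHom : IsSimpleStep1 (A.splitHom S u v hu hv huv) :=
  ⟨S, Equiv.refl _, fun _ => rfl, fun _ => rfl, fun _ => rfl, huv, fun _ => rfl,
    fun _ _ => rfl, fun _ _ => rfl, fun _ _ => rfl⟩

theorem MMA.tr_splitHom (x : A.Alg) :
    (A.split S u v hu hv huv).tr (A.splitHom S u v hu hv huv x) = A.tr x := by
  refine Eq.trans ?_ (sum_mem_add_sum_notMem S fun i => (A.w i : ℂ) * (x i).trace)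
  refine (Fintype.sum_sum_type _).trans ?_
  refine congrArg₂ (· + ·) ((Fintype.sum_sum_type _).trans ?_) rfl
  rw [← Finset.sum_add_distrib]
  refine Finset.sum_congr rfl fun a _ => ?_
  rw [← huv a, Complex.ofReal_add, add_mul]
  rfl

/-- A block map with compatible weights is a composition of splitting steps, merging steps and an
isomorphism. -/
theorem simpleStepFactorization_blockHom {A B : MMA} {K : Type} [Fintype K] [DecidableEq K]
    (f : K → A.ι) (g : K → B.ι)
    (E : (Σ k, Fin (A.dim (f k))) ≃ Σ j, Fin (B.dim j)) (hE : ∀ s, (E s).1 = g s.1)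
    (hw : ∀ i, ∑ k with f k = i, B.w (g k) = A.w i) :
    SimpleStepFactorization (blockHom f g E hE) := by
  induction hn : Fintype.card K - Fintype.card A.ι using Nat.strong_induction_on
    generalizing A with
  | _ n ih =>
  have hsurj : ∀ {A : MMA} (f : K → A.ι), (∀ i, ∑ k with f k = i, B.w (g k) = A.w i) →
      Function.Surjective f := fun {A} f hw i => by
    have h := A.w_pos i
    rw [← hw] at h
    obtain ⟨k, hk, -⟩ := Finset.exists_ne_zero_of_sum_ne_zero h.ne'
    exact ⟨k, (Finset.mem_filter.1 hk).2⟩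
  by_cases hf : Function.Injective f
  · obtain ⟨e, rfl⟩ : ∃ e : K ≃ A.ι, f = e := ⟨Equiv.ofBijective f ⟨hf, hsurj f hw⟩, rfl⟩
    let E' : (Σ i, Fin (A.dim i)) ≃ Σ j, Fin (B.dim j) :=
      (Equiv.sigmaCongrLeft (β := fun i => Fin (A.dim i)) e).symm.trans E
    have hE'E : ∀ k p, E' ⟨e k, p⟩ = E ⟨k, p⟩ := fun k p => by
      refine congrArg E ?_
      rw [Equiv.symm_apply_eq]
      rfl
    have hE' : ∀ s, (E' s).1 = g (e.symm s.1) := by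
      rintro ⟨i, p⟩
      obtain ⟨k, rfl⟩ := e.surjective i
      rw [hE'E, hE, e.symm_apply_apply]
    have key : blockHom e g E hE = blockHom id (fun i => g (e.symm i)) E' hE' := by
      ext1 x
      apply blockDiagonal'_injective
      rw [blockDiagonal'_blockHom, blockDiagonal'_blockHom]
      ext s t
      obtain ⟨⟨k, p⟩, rfl⟩ := E.surjective s
      obtain ⟨⟨l, q⟩, rfl⟩ := E.surjective t
      simp only [submatrix_apply]
      rw [Equiv.symm_apply_apply, Equiv.symm_apply_apply, ← hE'E, ← hE'E,
        Equiv.symm_apply_apply, Equiv.symm_apply_apply]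
      by_cases hkl : k = l
      · subst hkl
        rw [blockDiagonal'_apply_eq]
        exact (blockDiagonal'_apply_eq x (e k) p q).symm
      · rw [blockDiagonal'_apply_ne _ _ _ hkl]
        exact (blockDiagonal'_apply_ne x _ _ (e.injective.ne hkl)).symm
    rw [key]
    refine simpleStepFactorization_blockHom_id _ E' hE' fun i => ?_
    rw [← hw]
    simp [← Equiv.eq_symm_apply, Finset.sum_filter]
  · obtain ⟨k₁, k₂, h₁₂, hne⟩ : ∃ k₁ k₂, f k₁ = f k₂ ∧ k₁ ≠ k₂ := by
      simpa [Function.Injective] using hf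
    obtain ⟨i, hi⟩ : ∃ i, f k₁ = i := ⟨_, rfl⟩
    have hrest : ∑ k ∈ (Finset.univ.filter (f · = i)).erase k₁, B.w (g k) =
        A.w i - B.w (g k₁) := by
      rw [← hw i, ← Finset.add_sum_erase (Finset.univ.filter (f · = i)) _
        (Finset.mem_filter.2 ⟨Finset.mem_univ k₁, hi⟩), add_sub_cancel_left]
    have hpos : 0 < A.w i - B.w (g k₁) := by
      rw [← hrest]
      exact Finset.sum_pos (fun k _ => B.w_pos _) ⟨k₂, by simp [hne.symm, ← h₁₂, hi]⟩
    have huv : ∀ a : {a // a ∈ ({i} : Finset A.ι)},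
        B.w (g k₁) + (A.w i - B.w (g k₁)) = A.w a := by
      rintro ⟨a, ha⟩
      obtain rfl := Finset.mem_singleton.1 ha
      exact add_sub_cancel _ _
    obtain ⟨f', rfl, hw'⟩ : ∃ f' : K → (A.split {i} (fun _ => B.w (g k₁))
        (fun _ => A.w i - B.w (g k₁)) (fun _ => B.w_pos _) (fun _ => hpos) huv).ι,
        f = (fun k => MMA.splitMap (f' k)) ∧
        ∀ a, ∑ k with f' k = a, B.w (g k) = MMA.w _ a := by
      have hmem := Finset.mem_singleton_self i
      let f' : K → ({a // a ∈ ({i} : Finset A.ι)} ⊕ {a // a ∈ ({i} : Finset A.ι)}) ⊕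
          {a // a ∉ ({i} : Finset A.ι)} := fun k =>
        if k = k₁ then Sum.inl (Sum.inl ⟨i, hmem⟩)
        else if h : f k ∈ ({i} : Finset A.ι) then Sum.inl (Sum.inr ⟨f k, h⟩)
        else Sum.inr ⟨f k, h⟩
      refine ⟨f', funext fun k => ?_, ?_⟩
      · change _ = Sum.elim (Sum.elim Subtype.val Subtype.val) Subtype.val (f' k)
        by_cases hk : k = k₁
        · simp [f', hk, hi]
        · by_cases hk' : f k = i <;> simp [f', hk, hk']
      · rintro ((⟨a, ha⟩ | ⟨a, ha⟩) | ⟨a, ha⟩)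
        · obtain rfl := Finset.mem_singleton.1 ha
          have : (Finset.univ.filter fun k => f' k = Sum.inl (Sum.inl ⟨a, ha⟩)) = {k₁} := by
            ext k
            simp only [f', Finset.mem_filter, Finset.mem_univ, true_and, Finset.mem_singleton]
            split_ifs <;> simp_all
          refine (Finset.sum_congr this fun _ _ => rfl).trans ?_
          rw [Finset.sum_singleton]
          rfl
        · obtain rfl := Finset.mem_singleton.1 ha
          have : (Finset.univ.filter fun k => f' k = Sum.inl (Sum.inr ⟨a, ha⟩)) =
              (Finset.univ.filter (f · = a)).erase k₁ := by
            ext k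
            simp only [f', Finset.mem_filter, Finset.mem_univ, true_and, Finset.mem_erase]
            split_ifs <;> simp_all
          exact (Finset.sum_congr this fun _ _ => rfl).trans hrest
        · have : (Finset.univ.filter fun k => f' k = Sum.inr ⟨a, ha⟩) =
              Finset.univ.filter (f · = a) := by
            ext k
            simp only [f', Finset.mem_filter, Finset.mem_univ, true_and]
            rw [Finset.mem_singleton] at ha
            split_ifs with hk hk'
            · simp only [false_iff]
              rw [hk, hi]
              exact Ne.symm ha
            · simp only [false_iff]
              rw [Finset.mem_singleton.1 hk']
              exact Ne.symm ha
            · simp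
          exact (Finset.sum_congr this fun _ _ => rfl).trans (hw a)
    refine .comp (A.splitHom {i} _ _ _ _ huv) (blockHom f' g E hE)
      (.inl MMA.isSimpleStep1_splitHom) MMA.tr_splitHom (ih _ ?_ f' E hE hw' rfl)
    rw [← hn]
    have hle := Fintype.card_le_of_surjective f' (hsurj f' hw')
    have hlt : Fintype.card A.ι < Fintype.card (A.split {i} (fun _ => B.w (g k₁))
        (fun _ => A.w i - B.w (g k₁)) (fun _ => B.w_pos _) (fun _ => hpos) huv).ι := by
      refine Fintype.card_lt_of_surjective_not_injective MMA.splitMap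
        ((hsurj _ hw).of_comp (g := f')) fun h => ?_
      have := h (a₁ := Sum.inl (Sum.inl ⟨i, Finset.mem_singleton_self i⟩))
        (a₂ := Sum.inl (Sum.inr ⟨i, Finset.mem_singleton_self i⟩)) rfl
      exact Sum.inl_ne_inr (Sum.inl_injective this)
    omega

end Split

/-- A self-adjoint idempotent complex matrix is `W * Wᴴ` for an isometry `W`. -/
theorem exists_isometry_mul_conjTranspose_eq {m : Type} [Fintype m] [DecidableEq m]
    (P : Matrix m m ℂ) (hP : Pᴴ = P) (hPP : P * P = P) :
    ∃ (κ : Type) (_ : Fintype κ) (_ : DecidableEq κ) (W : Matrix m κ ℂ),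
      Wᴴ * W = 1 ∧ W * Wᴴ = P := by
  have hH : P.IsHermitian := hP
  let U : Matrix m m ℂ := hH.eigenvectorUnitary
  let D : Matrix m m ℂ := diagonal (RCLike.ofReal ∘ hH.eigenvalues)
  have hU : Uᴴ * U = 1 := Unitary.coe_star_mul_self hH.eigenvectorUnitary
  have hU' : U * Uᴴ = 1 := Unitary.coe_mul_star_self hH.eigenvectorUnitary
  have hspec : P = U * D * Uᴴ := hH.spectral_theorem
  have hD : D = Uᴴ * P * U := by
    rw [hspec]
    calc D = (Uᴴ * U) * D * (Uᴴ * U) := by rw [hU, one_mul, mul_one]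
      _ = _ := by simp only [Matrix.mul_assoc]
  have hDD : D * D = D := by
    calc D * D = Uᴴ * P * (U * Uᴴ) * P * U := by rw [hD]; simp only [Matrix.mul_assoc]
      _ = Uᴴ * (P * P) * U := by rw [hU', Matrix.mul_one]; simp only [Matrix.mul_assoc]
      _ = D := by rw [hPP, hD]
  have hev : ∀ i, D i i = 0 ∨ D i i = 1 := fun i => by
    have h := congrFun (congrFun hDD i) i
    simp only [D, diagonal_mul_diagonal, diagonal_apply_eq] at h ⊢
    exact IsIdempotentElem.iff_eq_zero_or_one.1 h
  classical
  let J : Matrix m {i // D i i = 1} ℂ := (1 : Matrix m m ℂ).submatrix id Subtype.val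
  have hJ : Jᴴ * J = 1 := by
    ext a b
    simp [J, mul_apply, one_apply, Subtype.ext_iff]
  have hJ' : J * Jᴴ = D := by
    ext a b
    rw [mul_apply]
    simp only [J, conjTranspose_apply, submatrix_apply, id_eq, one_apply]
    by_cases ha : D a a = 1
    · rw [Finset.sum_eq_single ⟨a, ha⟩]
      · by_cases hab : a = b
        · subst hab
          simp [ha]
        · simp [hab, Ne.symm hab, D]
      · intro c _ hc
        rw [if_neg fun h => hc (Subtype.ext h.symm), zero_mul]
      · simp
    · rw [Finset.sum_eq_zero fun c _ => ?_]
      · by_cases hab : a = b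
        · subst hab
          exact ((hev a).resolve_right ha).symm
        · exact (diagonal_apply_ne _ hab).symm
      · have hac : a ≠ c := fun h => ha (h ▸ c.2)
        rw [if_neg hac, zero_mul]
  refine ⟨{i // D i i = 1}, inferInstance, inferInstance, U * J, ?_, ?_⟩
  · calc (U * J)ᴴ * (U * J) = Jᴴ * (Uᴴ * U) * J := by
          rw [conjTranspose_mul]; simp only [Matrix.mul_assoc]
      _ = 1 := by rw [hU, Matrix.mul_one, hJ]
  · calc U * J * (U * J)ᴴ = U * (J * Jᴴ) * Uᴴ := by
          rw [conjTranspose_mul]; simp only [Matrix.mul_assoc]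
      _ = P := by rw [hJ', hspec]

/-- The matrix units of a multimatrix algebra. -/
def MMA.unit (A : MMA) (i : A.ι) (p q : Fin (A.dim i)) : A.Alg :=
  Pi.single i (Matrix.single p q 1)

theorem MMA.star_unit (A : MMA) (i : A.ι) (p q : Fin (A.dim i)) :
    star (A.unit i p q) = A.unit i q p := by
  rw [MMA.unit, ← Pi.single_star, star_eq_conjTranspose, conjTranspose_single, star_one]
  rfl

theorem MMA.unit_mul_unit (A : MMA) (i : A.ι) (p q r : Fin (A.dim i)) :
    A.unit i p q * A.unit i q r = A.unit i p r := by
  rw [MMA.unit, MMA.unit, ← Pi.single_mul, single_mul_single_same, mul_one]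
  rfl

theorem MMA.unit_mul_unit_of_ne (A : MMA) (i : A.ι) {p q r s : Fin (A.dim i)} (h : q ≠ r) :
    A.unit i p q * A.unit i r s = 0 := by
  rw [MMA.unit, MMA.unit, ← Pi.single_mul, single_mul_single_of_ne _ _ _ _ h, Pi.single_zero]

theorem MMA.unit_mul_unit_of_index_ne (A : MMA) {i j : A.ι} (h : i ≠ j)
    (p q : Fin (A.dim i)) (r s : Fin (A.dim j)) : A.unit i p q * A.unit j r s = 0 := by
  ext1 k
  by_cases hk : k = i
  · subst hk
    simp [MMA.unit, h]
  · simp [MMA.unit, hk]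

theorem MMA.sum_unit (A : MMA) : ∑ i, ∑ p, A.unit i p p = 1 := by
  ext1 k
  simp only [Finset.sum_apply]
  rw [Finset.sum_eq_single k (fun j _ hj => by simp [MMA.unit, hj.symm]) (by simp)]
  simp [MMA.unit, Matrix.sum_single_one]

theorem MMA.mul_unit (A : MMA) (x : A.Alg) (i : A.ι) (p q : Fin (A.dim i)) :
    x * A.unit i p q = ∑ r, x i r p • A.unit i r q := by
  ext k a b
  simp only [Finset.sum_apply, Pi.mul_apply, Pi.smul_apply, Matrix.sum_apply]
  by_cases hk : k = i
  · subst hk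
    simp [MMA.unit, Matrix.mul_apply, Matrix.single_apply, ite_and]
  · simp [MMA.unit, hk]

/-- Every unital *-homomorphism from a multimatrix algebra to a matrix algebra is unitarily
equivalent to a block-diagonal one. -/
theorem exists_unitary_intertwining_blockDiagonal' (A : MMA) {m : Type} [Fintype m]
    [DecidableEq m] (φ : A.Alg →⋆ₐ[ℂ] Matrix m m ℂ) :
    ∃ (K : Type) (_ : Fintype K) (_ : DecidableEq K) (f : K → A.ι)
      (V : Matrix m (Σ k, Fin (A.dim (f k))) ℂ),
      Vᴴ * V = 1 ∧ V * Vᴴ = 1 ∧ ∀ x, φ x * V = V * blockDiagonal' fun k => x (f k) := by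
  let z : ∀ i, Fin (A.dim i) := fun i => ⟨0, A.dim_pos i⟩
  have hstar : ∀ i p q, (φ (A.unit i p q))ᴴ = φ (A.unit i q p) := fun i p q => by
    rw [← star_eq_conjTranspose, ← map_star, MMA.star_unit]
  choose κ hκ hκ' W hW hW' using fun i =>
    exists_isometry_mul_conjTranspose_eq (φ (A.unit i (z i) (z i))) (hstar _ _ _)
      (by rw [← map_mul, MMA.unit_mul_unit])
  let T : ∀ i, Fin (A.dim i) → Matrix m (κ i) ℂ := fun i p => φ (A.unit i p (z i)) * W i
  have hT : ∀ i p, (T i p)ᴴ = (W i)ᴴ * φ (A.unit i (z i) p) := fun i p => by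
    rw [conjTranspose_mul, hstar]
  have hTT : ∀ i p, (T i p)ᴴ * T i p = 1 := fun i p => by
    calc (T i p)ᴴ * T i p
        = (W i)ᴴ * (φ (A.unit i (z i) p) * φ (A.unit i p (z i))) * W i := by
          rw [hT]; simp only [T, Matrix.mul_assoc]
      _ = ((W i)ᴴ * W i) * ((W i)ᴴ * W i) := by
          rw [← map_mul, MMA.unit_mul_unit, ← hW']; simp only [Matrix.mul_assoc]
      _ = 1 := by rw [hW, Matrix.mul_one]
  have hTT_ne : ∀ i {p q}, p ≠ q → (T i p)ᴴ * T i q = 0 := fun i p q h => by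
    calc (T i p)ᴴ * T i q
        = (W i)ᴴ * (φ (A.unit i (z i) p) * φ (A.unit i q (z i))) * W i := by
          rw [hT]; simp only [T, Matrix.mul_assoc]
      _ = 0 := by rw [← map_mul, MMA.unit_mul_unit_of_ne _ _ h]; simp
  have hTT_index_ne : ∀ {i j} p q, i ≠ j → (T i p)ᴴ * T j q = 0 := fun {i j} p q h => by
    calc (T i p)ᴴ * T j q
        = (W i)ᴴ * (φ (A.unit i (z i) p) * φ (A.unit j q (z j))) * W j := by
          rw [hT]; simp only [T, Matrix.mul_assoc]
      _ = 0 := by rw [← map_mul, MMA.unit_mul_unit_of_index_ne _ h]; simp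
  have hT_sum : ∑ i, ∑ p, T i p * (T i p)ᴴ = 1 := by
    rw [← map_one φ, ← A.sum_unit, map_sum]
    refine Finset.sum_congr rfl fun i _ => ?_
    rw [map_sum]
    refine Finset.sum_congr rfl fun p _ => ?_
    calc T i p * (T i p)ᴴ
        = φ (A.unit i p (z i)) * (W i * (W i)ᴴ) * φ (A.unit i (z i) p) := by
          rw [hT]; simp only [T, Matrix.mul_assoc]
      _ = _ := by rw [hW', ← map_mul, ← map_mul, MMA.unit_mul_unit, MMA.unit_mul_unit]
  have hφT : ∀ x i p, φ x * T i p = ∑ q, x i q p • T i q := fun x i p => by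
    simp only [T]
    rw [← Matrix.mul_assoc, ← map_mul, MMA.mul_unit, map_sum, Matrix.sum_mul]
    simp only [map_smul, Matrix.smul_mul]
  refine ⟨Σ i, κ i, inferInstance, inferInstance, Sigma.fst,
    Matrix.of fun a s => T s.1.1 s.2 a s.1.2, ?_, ?_, fun x => ?_⟩
  · ext ⟨⟨i, k⟩, p⟩ ⟨⟨j, l⟩, q⟩
    change ((T i p)ᴴ * T j q) k l = _
    by_cases hij : i = j
    · subst hij
      by_cases hpq : p = q
      · subst hpq
        rw [hTT]
        simp [Matrix.one_apply]
      · rw [hTT_ne _ hpq]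
        simp [hpq]
    · rw [hTT_index_ne _ _ hij]
      simp [hij]
  · rw [← hT_sum]
    ext a b
    simp only [Matrix.mul_apply, Fintype.sum_sigma, Matrix.sum_apply, conjTranspose_apply,
      of_apply]
    refine Finset.sum_congr rfl fun i _ => ?_
    rw [Finset.sum_comm]
  · ext a ⟨⟨i, k⟩, p⟩
    change (φ x * T i p) a k = _
    rw [hφT]
    simp only [Matrix.mul_apply, Matrix.sum_apply, Matrix.smul_apply, of_apply, Fintype.sum_sigma]
    rw [Finset.sum_eq_single i, Finset.sum_eq_single k]
    · simp [mul_comm]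
    · intro l _ hl
      refine Finset.sum_eq_zero fun q _ => ?_
      rw [blockDiagonal'_apply_ne, mul_zero]
      simpa using hl
    · simp
    · intro j _ hj
      refine Finset.sum_eq_zero fun l _ => Finset.sum_eq_zero fun q _ => ?_
      rw [blockDiagonal'_apply_ne, mul_zero]
      exact fun h => hj (congrArg Sigma.fst h)
    · simp

theorem SimpleStepFactorization.trans_iso {A B C : MMA} {φ : A.Alg →⋆ₐ[ℂ] B.Alg}
    (h : SimpleStepFactorization φ) (θ : B.Alg ≃⋆ₐ[ℂ] C.Alg) (hθ : ∀ x, C.tr (θ x) = B.tr x)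
    (ψ : A.Alg →⋆ₐ[ℂ] C.Alg) (hψ : ∀ x, ψ x = θ (φ x)) : SimpleStepFactorization ψ := by
  induction h with
  | iso η hη φ hφ =>
    exact .iso (η.trans θ) (fun x => (hθ _).trans (hη x)) ψ fun x => by rw [hψ, hφ]; rfl
  | comp σ χ hσ hσt _ ih =>
    have : ψ = ((θ : _ →⋆ₐ[ℂ] C.Alg).comp χ).comp σ := by
      ext1 x
      exact hψ x
    rw [this]
    exact .comp σ _ hσ hσt (ih θ hθ _ fun _ => rfl)

/-- Every unital *-homomorphism of multimatrix algebras is, up to conjugation by a unitary of the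
target, a block map. -/
theorem exists_unitary_conj_blockHom (N M : MMA) (φ : N.Alg →⋆ₐ[ℂ] M.Alg) :
    ∃ (K : Type) (_ : Fintype K) (_ : DecidableEq K) (f : K → N.ι) (g : K → M.ι)
      (E : (Σ k, Fin (N.dim (f k))) ≃ Σ j, Fin (M.dim j)) (hE : ∀ s, (E s).1 = g s.1)
      (u : unitary M.Alg), ∀ x, φ x = Unitary.conjStarAlgAut ℂ M.Alg u (blockHom f g E hE x) := by
  let π : ∀ j, N.Alg →⋆ₐ[ℂ] Matrix (Fin (M.dim j)) (Fin (M.dim j)) ℂ := fun j =>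
    (Pi.evalStarAlgHom ℂ (fun j => Matrix (Fin (M.dim j)) (Fin (M.dim j)) ℂ) j).comp φ
  choose K hK hK' f V hV hV' hφV using
    fun j => exists_unitary_intertwining_blockDiagonal' N (π j)
  have hcard : ∀ j, Nonempty ((Σ k, Fin (N.dim (f j k))) ≃ Fin (M.dim j)) := fun j => by
    rw [← Fintype.card_eq]
    exact (Matrix.square_of_invertible (V j) (V j)ᴴ (hV' j) (hV j)).symm
  let e : ∀ j, (Σ k, Fin (N.dim (f j k))) ≃ Fin (M.dim j) := fun j => (hcard j).some
  let E : (Σ k : Σ j, K j, Fin (N.dim (f k.1 k.2))) ≃ Σ j, Fin (M.dim j) :=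
    (Equiv.sigmaAssoc fun j k => Fin (N.dim (f j k))).trans (Equiv.sigmaCongrRight e)
  have hE : ∀ s, (E s).1 = s.1.1 := fun _ => rfl
  let U : M.Alg := fun j => (V j).submatrix id (e j).symm
  have hU : U ∈ unitary M.Alg := by
    rw [Unitary.mem_iff]
    constructor <;> ext1 j
    · change ((V j).submatrix id (e j).symm)ᴴ * (V j).submatrix id (e j).symm = 1
      rw [conjTranspose_submatrix, ← submatrix_mul _ _ _ _ _ Function.bijective_id, hV,
        submatrix_one_equiv]
    · change (V j).submatrix id (e j).symm * ((V j).submatrix id (e j).symm)ᴴ = 1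
      rw [conjTranspose_submatrix, submatrix_mul_equiv, hV', submatrix_id_id]
  refine ⟨Σ j, K j, inferInstance, inferInstance, fun k => f k.1 k.2, Sigma.fst, E,
    hE, ⟨U, hU⟩, fun x => ?_⟩
  rw [Unitary.conjStarAlgAut_apply]
  have hcomm : φ x * U = U * blockHom (fun k : Σ j, K j => f k.1 k.2) Sigma.fst E hE x := by
    ext1 j
    have hblock : blockHom (fun k : Σ j, K j => f k.1 k.2) Sigma.fst E hE x j =
        (blockDiagonal' fun k => x (f j k)).submatrix (e j).symm (e j).symm := by
      ext p q
      obtain ⟨⟨k, p⟩, rfl⟩ := (e j).surjective p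
      obtain ⟨⟨l, q⟩, rfl⟩ := (e j).surjective q
      have hsymm : ∀ k p, E.symm ⟨j, e j ⟨k, p⟩⟩ = ⟨⟨j, k⟩, p⟩ := fun k p => by
        rw [Equiv.symm_apply_eq]
        rfl
      rw [blockHom_apply, submatrix_apply, hsymm, hsymm, Equiv.symm_apply_apply,
        Equiv.symm_apply_apply]
      by_cases hkl : k = l
      · subst hkl
        rw [blockDiagonal'_apply_eq, blockDiagonal'_apply_eq]
      · rw [blockDiagonal'_apply_ne _ _ _ hkl, blockDiagonal'_apply_ne]
        exact fun h => hkl (by simpa using h)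
    change φ x j * (V j).submatrix id (e j).symm = (V j).submatrix id (e j).symm * _
    rw [hblock, submatrix_mul_equiv, ← hφV]
    rfl
  calc φ x = φ x * (U * star U) := by rw [Unitary.mul_star_self_of_mem hU, mul_one]
    _ = _ := by rw [← mul_assoc, hcomm]

theorem MMA.tr_conjStarAlgAut (A : MMA) (u : unitary A.Alg) (x : A.Alg) :
    A.tr (Unitary.conjStarAlgAut ℂ A.Alg u x) = A.tr x := by
  rw [Unitary.conjStarAlgAut_apply]
  refine Finset.sum_congr rfl fun i _ => ?_
  rw [Pi.mul_apply, Matrix.trace_mul_comm, ← Pi.mul_apply, ← mul_assoc,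
    Unitary.star_mul_self_of_mem u.2, one_mul]

/-- Lemma 3.5 of the paper. Every unital trace-preserving
*-homomorphism between multimatrix algebras with faithful tracial states can be written
as a composition of simple steps followed by a trace-preserving *-isomorphism. -/
theorem stmt1 (N M : MMA) (φ : N.Alg →⋆ₐ[ℂ] M.Alg)
    (hφ : ∀ x, M.tr (φ x) = N.tr x) :
    SimpleStepFactorization φ := by
  obtain ⟨K, _, _, f, g, E, hE, u, hu⟩ := exists_unitary_conj_blockHom N M φ
  refine (simpleStepFactorization_blockHom f g E hE fun i => ?_).trans_iso
    (Unitary.conjStarAlgAut ℂ M.Alg u) (M.tr_conjStarAlgAut u) φ hu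
  have htrace : ∀ j, (N.unit i ⟨0, N.dim_pos i⟩ ⟨0, N.dim_pos i⟩ j).trace =
      if j = i then 1 else 0 := fun j => by
    by_cases hj : j = i
    · subst hj
      simp [MMA.unit]
    · simp [MMA.unit, hj]
  have h := hφ (N.unit i ⟨0, N.dim_pos i⟩ ⟨0, N.dim_pos i⟩)
  rw [hu, M.tr_conjStarAlgAut, tr_blockHom, MMA.tr] at h
  simp only [htrace, mul_ite, mul_one, mul_zero, Finset.sum_ite_eq', Finset.mem_univ, if_true,
    ← Finset.sum_filter] at h
  exact_mod_cast h
end
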